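/- Let f : X → Y be a surjective morphism of finite-dimensional smooth T-modules with Y cyclic, and let 𝔼[f] be the fiber product of X and 𝔼[Y] over Y. Then 𝔼[f] has degree one, its maximal finite-dimensional submodule κ(𝔼[f]) = 𝔼[f]^S is isomorphic to ker(f), and π_0(𝔼[f]) ≅ X. Conversely, every TS-module M of finite length and degree one is isomorphic to 𝔼[f] for the natural projection f : π_0(M) → π_0(M)/κ(M); in particular Y = π_0(M)/κ(M) satisfies dim Y^{T,χ} ≤ 1 for every smooth character χ of T. -/

import Mathlib

noncomputable section

open scoped Classical

namespace PSW

/-! ### The affine group `λ.b : x ↦ λ·x + b` over a field `K`. -/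

@[ext]
structure Aff (K : Type*) [Field K] where
  t : Kˣ
  s : K

namespace Aff

variable {K : Type*} [Field K]

instance : Mul (Aff K) := ⟨fun g h => ⟨g.t * h.t, g.s + (g.t : K) * h.s⟩⟩
instance : One (Aff K) := ⟨⟨1, 0⟩⟩
instance : Inv (Aff K) := ⟨fun g => ⟨g.t⁻¹, -(((g.t⁻¹ : Kˣ) : K) * g.s)⟩⟩

@[simp] lemma mul_t (g h : Aff K) : (g * h).t = g.t * h.t := rfl
@[simp] lemma mul_s (g h : Aff K) : (g * h).s = g.s + (g.t : K) * h.s := rfl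
@[simp] lemma one_t : (1 : Aff K).t = 1 := rfl
@[simp] lemma one_s : (1 : Aff K).s = 0 := rfl
@[simp] lemma inv_t (g : Aff K) : (g⁻¹).t = g.t⁻¹ := rfl
@[simp] lemma inv_s (g : Aff K) : (g⁻¹).s = -(((g.t⁻¹ : Kˣ) : K) * g.s) := rfl

instance : Group (Aff K) where
  mul_assoc a b c := by
    ext
    · simp [mul_assoc]
    · simp only [mul_s, mul_t, Units.val_mul]; ring
  one_mul a := by ext <;> simp
  mul_one a := by ext <;> simp
  inv_mul_cancel a := by
    ext
    · simp
    · simp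

/-- The element `x_λ` of the group `TS`. -/
def xT (u : Kˣ) : Aff K := ⟨u, 0⟩

/-- The element `s_b` of the group `TS`. -/
def sS (b : K) : Aff K := ⟨1, b⟩

@[simp] lemma xT_t (u : Kˣ) : (xT u : Aff K).t = u := rfl
@[simp] lemma xT_s (u : Kˣ) : (xT u : Aff K).s = 0 := rfl
@[simp] lemma sS_t (b : K) : (sS b : Aff K).t = 1 := rfl
@[simp] lemma sS_s (b : K) : (sS b : Aff K).s = b := rfl

/-- `T ≅ k^×` as a subgroup of `TS`. -/
def xTHom : Kˣ →* Aff K where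
  toFun := xT
  map_one' := rfl
  map_mul' u v := by ext <;> simp [xT]

@[simp] lemma xTHom_apply (u : Kˣ) : (xTHom u : Aff K) = xT u := rfl

lemma mul_sS (g : Aff K) (b : K) : g * sS b = sS ((g.t : K) * b) * g := by
  ext
  · simp
  · simp [add_comm]

lemma sS_mul (b : K) (g : Aff K) : sS b * g = g * sS (((g.t⁻¹ : Kˣ) : K) * b) := by
  ext
  · simp
  · simp [Units.mul_inv_cancel_left, add_comm]

lemma aff_decomp (g : Aff K) : g = xT g.t * sS (((g.t⁻¹ : Kˣ) : K) * g.s) := by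
  ext
  · simp
  · simp [Units.mul_inv_cancel_left]

instance [TopologicalSpace K] : TopologicalSpace (Aff K) :=
  TopologicalSpace.induced (fun g : Aff K => ((g.t, g.s) : Kˣ × K)) inferInstance

end Aff

/-! ### Generalities on representations of a monoid on complex vector spaces. -/

namespace GRep

variable {G : Type*} [Monoid G]

section MonoidModules

variable {V W : Type*} [AddCommMonoid V] [Module ℂ V] [AddCommMonoid W] [Module ℂ W]

/-- A submodule invariant under the representation. -/
def Invariant (ρ : Representation ℂ G V) (U : Submodule ℂ V) : Prop :=
  ∀ (g : G) (v : V), v ∈ U → ρ g v ∈ U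

/-- Equivariance of a linear map with respect to two representations. -/
def Equivariant (ρ : Representation ℂ G V) (σ : Representation ℂ G W) (f : V →ₗ[ℂ] W) : Prop :=
  ∀ (g : G) (v : V), f (ρ g v) = σ g (f v)

/-- Isomorphism of representations. -/
def Iso (ρ : Representation ℂ G V) (σ : Representation ℂ G W) : Prop :=
  ∃ e : V ≃ₗ[ℂ] W, ∀ (g : G) (v : V), e (ρ g v) = σ g (e v)

/-- Irreducibility. -/
def Irred (ρ : Representation ℂ G V) : Prop :=
  Nontrivial V ∧ ∀ U : Submodule ℂ V, Invariant ρ U → U = ⊥ ∨ U = ⊤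

/-- Subrepresentation on an invariant submodule. -/
def sub (ρ : Representation ℂ G V) {U : Submodule ℂ V} (hU : Invariant ρ U) :
    Representation ℂ G ↥U where
  toFun g := (ρ g).restrict fun v hv => hU g v hv
  map_one' := by
    apply LinearMap.ext; intro v; apply Subtype.ext
    simp [LinearMap.restrict_apply]
  map_mul' g h := by
    apply LinearMap.ext; intro v; apply Subtype.ext
    simp [LinearMap.restrict_apply]

@[simp] lemma sub_apply (ρ : Representation ℂ G V) {U : Submodule ℂ V} (hU : Invariant ρ U)
    (g : G) (v : ↥U) : ((sub ρ hU g v : ↥U) : V) = ρ g (v : V) := rfl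

lemma ker_invariant (ρ : Representation ℂ G V) (σ : Representation ℂ G W)
    (f : V →ₗ[ℂ] W) (hf : Equivariant ρ σ f) : Invariant ρ (LinearMap.ker f) := by
  intro g v hv
  rw [LinearMap.mem_ker] at hv ⊢
  rw [hf g v, hv, map_zero]

lemma range_invariant (ρ : Representation ℂ G V) (σ : Representation ℂ G W)
    (f : V →ₗ[ℂ] W) (hf : Equivariant ρ σ f) : Invariant σ (LinearMap.range f) := by
  rintro g w ⟨v, rfl⟩
  exact ⟨ρ g v, hf g v⟩

lemma map_invariant (ρ : Representation ℂ G V) (σ : Representation ℂ G W)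
    (f : V →ₗ[ℂ] W) (hf : Equivariant ρ σ f) (U : Submodule ℂ V) (hU : Invariant ρ U) :
    Invariant σ (U.map f) := by
  rintro g w ⟨v, hv, rfl⟩
  exact ⟨ρ g v, hU g v hv, hf g v⟩

end MonoidModules

section GroupModules

variable {V W : Type*} [AddCommGroup V] [Module ℂ V] [AddCommGroup W] [Module ℂ W]

/-- Quotient representation. -/
def quot (ρ : Representation ℂ G V) (U : Submodule ℂ V) (hU : Invariant ρ U) :
    Representation ℂ G (V ⧸ U) where
  toFun g := U.mapQ U (ρ g) fun v hv => hU g v hv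
  map_one' := by
    apply LinearMap.ext; intro x
    obtain ⟨v, rfl⟩ := Submodule.Quotient.mk_surjective U x
    simp [Submodule.mapQ_apply]
  map_mul' g h := by
    apply LinearMap.ext; intro x
    obtain ⟨v, rfl⟩ := Submodule.Quotient.mk_surjective U x
    simp [Submodule.mapQ_apply]

@[simp] lemma quot_apply (ρ : Representation ℂ G V) (U : Submodule ℂ V) (hU : Invariant ρ U)
    (g : G) (v : V) :
    quot ρ U hU g (Submodule.Quotient.mk v) = Submodule.Quotient.mk (ρ g v) := rfl

/-- Subquotient representation on `B/A`. -/
def subquot (ρ : Representation ℂ G V) {A B : Submodule ℂ V}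
    (hA : Invariant ρ A) (hB : Invariant ρ B) :
    Representation ℂ G (↥B ⧸ A.comap B.subtype) :=
  quot (sub ρ hB) (A.comap B.subtype) fun g v hv => hA g v.1 hv

lemma mkQ_equivariant (ρ : Representation ℂ G V) (U : Submodule ℂ V) (hU : Invariant ρ U) :
    Equivariant ρ (quot ρ U hU) U.mkQ := by
  intro g v
  show Submodule.Quotient.mk (ρ g v) = quot ρ U hU g (Submodule.Quotient.mk v)
  rw [quot_apply]

end GroupModules

end GRep

/-! ### TS-modules: representations of the affine group. -/

/-- A `TS`-module structure on `V` is a representation of the group `TS ≅ Gl_a(1)`. -/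
abbrev Rep (K : Type*) [Field K] (V : Type*) [AddCommGroup V] [Module ℂ V] :=
  Representation ℂ (Aff K) V

section RepDefs

open Aff

variable {K : Type*} [Field K]
variable {V W : Type*} [AddCommGroup V] [Module ℂ V] [AddCommGroup W] [Module ℂ W]

/-- Smoothness: every vector has open stabilizer. -/
def IsSmoothRep [TopologicalSpace K] (ρ : Rep K V) : Prop :=
  ∀ v : V, IsOpen {g : Aff K | ρ g v = v}

/-- Smoothness of a `T`-module, i.e. of a representation of `T ≅ k^×`. -/
def TIsSmooth {X : Type*} [AddCommMonoid X] [Module ℂ X] [TopologicalSpace K]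
    (τ : Representation ℂ Kˣ X) : Prop :=
  ∀ x : X, IsOpen {u : Kˣ | τ u x = x}

/-- Smooth character of `T ≅ k^×` (open kernel, equivalently locally constant). -/
def SmoothMulChar [TopologicalSpace K] (χ : Kˣ →* ℂˣ) : Prop :=
  IsOpen {u : Kˣ | χ u = 1}

/-- The space `V^S` of `S`-invariants. -/
def sInv (ρ : Rep K V) : Submodule ℂ V where
  carrier := {v | ∀ b : K, ρ (sS b) v = v}
  zero_mem' := fun b => map_zero _
  add_mem' {a b} ha hb := fun c => by rw [map_add, ha c, hb c]
  smul_mem' c v hv := fun b => by rw [map_smul, hv b]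

@[simp] lemma mem_sInv (ρ : Rep K V) (v : V) :
    v ∈ sInv ρ ↔ ∀ b : K, ρ (sS b) v = v := Iff.rfl

/-- The `χ`-eigenspace `X^{T,χ}` of a `T`-module. -/
def tEigenT {X : Type*} [AddCommMonoid X] [Module ℂ X]
    (τ : Representation ℂ Kˣ X) (χ : Kˣ →* ℂˣ) : Submodule ℂ X where
  carrier := {x | ∀ u : Kˣ, τ u x = (χ u : ℂ) • x}
  zero_mem' := fun u => by simp
  add_mem' {a b} ha hb := fun u => by rw [map_add, ha u, hb u, smul_add]
  smul_mem' c x hx := fun u => by rw [map_smul, hx u]; exact smul_comm c ((χ u : ℂ)) x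

@[simp] lemma mem_tEigenT {X : Type*} [AddCommMonoid X] [Module ℂ X]
    (τ : Representation ℂ Kˣ X) (χ : Kˣ →* ℂˣ) (x : X) :
    x ∈ tEigenT τ χ ↔ ∀ u : Kˣ, τ u x = (χ u : ℂ) • x := Iff.rfl

/-- The `χ`-eigenspace `V^{T,χ}` of a `TS`-module. -/
def tEigen (ρ : Rep K V) (χ : Kˣ →* ℂˣ) : Submodule ℂ V := tEigenT (ρ.comp xTHom) χ

/-- The kernel of the projection to the `S`-coinvariants `V_S`. -/
def sCoinvKer (ρ : Rep K V) : Submodule ℂ V :=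
  Submodule.span ℂ {w : V | ∃ (b : K) (v : V), w = ρ (sS b) v - v}

/-- The kernel of the projection to the twisted coinvariants `V_{S,ψ'}`. -/
def sTwistKer (ρ : Rep K V) (ψ' : AddChar K ℂ) : Submodule ℂ V :=
  Submodule.span ℂ {w : V | ∃ (b : K) (v : V), w = ρ (sS b) v - ψ' b • v}

/-- The kernel of the projection to the `χ`-coinvariants `X_{T,χ}` of a `T`-module. -/
def tTwistKerT {X : Type*} [AddCommGroup X] [Module ℂ X]
    (τ : Representation ℂ Kˣ X) (χ : Kˣ →* ℂˣ) : Submodule ℂ X :=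
  Submodule.span ℂ {w : X | ∃ (u : Kˣ) (x : X), w = τ u x - (χ u : ℂ) • x}

/-- The kernel of the projection to the `χ`-coinvariants `V_{T,χ}` of a `TS`-module. -/
def tTwistKer (ρ : Rep K V) (χ : Kˣ →* ℂˣ) : Submodule ℂ V := tTwistKerT (ρ.comp xTHom) χ

lemma sCoinvKer_invariant (ρ : Rep K V) : GRep.Invariant ρ (sCoinvKer ρ) := by
  intro g v hv
  have h : sCoinvKer ρ ≤ Submodule.comap (ρ g) (sCoinvKer ρ) := by
    refine Submodule.span_le.2 ?_
    rintro w ⟨b, v', rfl⟩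
    simp only [SetLike.mem_coe, Submodule.mem_comap, map_sub]
    have h1 : ρ g (ρ (sS b) v') = ρ (sS ((g.t : K) * b)) (ρ g v') := by
      rw [← Module.End.mul_apply, ← map_mul, mul_sS, map_mul, Module.End.mul_apply]
    rw [h1]
    exact Submodule.subset_span ⟨(g.t : K) * b, ρ g v', rfl⟩
  exact h hv

lemma sInv_invariant (ρ : Rep K V) : GRep.Invariant ρ (sInv ρ) := by
  intro g v hv
  rw [mem_sInv] at hv ⊢
  intro b
  have h1 : ρ (sS b) (ρ g v) = ρ g (ρ (sS (((g.t⁻¹ : Kˣ) : K) * b)) v) := by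
    rw [← Module.End.mul_apply, ← map_mul, sS_mul, map_mul, Module.End.mul_apply]
  rw [h1, hv _]

/-- The `S`-coinvariants `π₀(V) = V_S` as a `TS`-module (`S` acting trivially). -/
def piZeroRep (ρ : Rep K V) : Rep K (V ⧸ sCoinvKer ρ) :=
  GRep.quot ρ (sCoinvKer ρ) (sCoinvKer_invariant ρ)

/-- The `S`-coinvariants `π₀(V) = V_S` as a `T`-module. -/
def piZeroT (ρ : Rep K V) : Representation ℂ Kˣ (V ⧸ sCoinvKer ρ) :=
  (piZeroRep ρ).comp xTHom

/-- The `T`-module structure on `κ(V) = V^S`. -/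
def sInvT (ρ : Rep K V) : Representation ℂ Kˣ ↥(sInv ρ) :=
  (GRep.sub ρ (sInv_invariant ρ)).comp xTHom

/-- A `TS`-module is perfect if all its eigenspaces `V^{T,χ}` for smooth `χ` vanish. -/
def Perfect [TopologicalSpace K] (ρ : Rep K V) : Prop :=
  ∀ χ : Kˣ →* ℂˣ, SmoothMulChar χ → tEigen ρ χ = ⊥

/-- A finite-dimensional `T`-module is cyclic if each generalized eigenspace is a single
Jordan block; equivalently all eigenspaces `X^{T,χ}` have dimension at most one. -/
def TCyclic {X : Type*} [AddCommGroup X] [Module ℂ X]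
    (τ : Representation ℂ Kˣ X) : Prop :=
  ∀ χ : Kˣ →* ℂˣ, Module.finrank ℂ ↥(tEigenT τ χ) ≤ 1

lemma sCoinvKer_le_comap (ρ : Rep K V) (σ : Rep K W)
    (f : V →ₗ[ℂ] W) (hf : GRep.Equivariant ρ σ f) :
    sCoinvKer ρ ≤ (sCoinvKer σ).comap f := by
  refine Submodule.span_le.2 ?_
  rintro w ⟨b, v, rfl⟩
  simp only [SetLike.mem_coe, Submodule.mem_comap, map_sub]
  rw [hf]
  exact Submodule.subset_span ⟨b, f v, rfl⟩

/-- The map induced by an equivariant map on the `S`-coinvariants `π₀`. -/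
def piZeroMap (ρ : Rep K V) (σ : Rep K W) (f : V →ₗ[ℂ] W) (hf : GRep.Equivariant ρ σ f) :
    (V ⧸ sCoinvKer ρ) →ₗ[ℂ] (W ⧸ sCoinvKer σ) :=
  Submodule.mapQ _ _ f (sCoinvKer_le_comap ρ σ f hf)

lemma piZeroMap_equivariant (ρ : Rep K V) (σ : Rep K W) (f : V →ₗ[ℂ] W)
    (hf : GRep.Equivariant ρ σ f) :
    GRep.Equivariant (piZeroRep ρ) (piZeroRep σ) (piZeroMap ρ σ f hf) := by
  intro g x
  obtain ⟨v, rfl⟩ := Submodule.Quotient.mk_surjective _ x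
  show piZeroMap ρ σ f hf (piZeroRep ρ g (Submodule.Quotient.mk v))
      = piZeroRep σ g (piZeroMap ρ σ f hf (Submodule.Quotient.mk v))
  rw [show piZeroRep ρ g (Submodule.Quotient.mk v) = Submodule.Quotient.mk (ρ g v) from rfl]
  rw [show piZeroMap ρ σ f hf (Submodule.Quotient.mk v) = Submodule.Quotient.mk (f v) from rfl]
  rw [show piZeroMap ρ σ f hf (Submodule.Quotient.mk (ρ g v))
      = Submodule.Quotient.mk (f (ρ g v)) from rfl]
  rw [show piZeroRep σ g (Submodule.Quotient.mk (f v)) = Submodule.Quotient.mk (σ g (f v)) from rfl]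
  rw [hf]

lemma kappaImg_invariant (ρ : Rep K V) :
    GRep.Invariant (piZeroT ρ) ((sInv ρ).map (sCoinvKer ρ).mkQ) := by
  rintro u w ⟨v, hv, rfl⟩
  refine ⟨ρ (xT u) v, sInv_invariant ρ (xT u) v hv, ?_⟩
  rfl

end RepDefs

/-! ### Composition series and degree. -/

/-- A composition series for a `TS`-module, witnessing finite length: a maximal chain of
invariant submodules (the subquotients are then irreducible). -/
structure CompSeries {K : Type*} [Field K] {V : Type*} [AddCommGroup V] [Module ℂ V]
    (ρ : Rep K V) where
  n : ℕ
  W : ℕ → Submodule ℂ V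
  bot : W 0 = ⊥
  top : W n = ⊤
  inv : ∀ i, GRep.Invariant ρ (W i)
  lt : ∀ i < n, W i < W (i + 1)
  maximal : ∀ i < n, ∀ C : Submodule ℂ V, GRep.Invariant ρ C → W i ≤ C → C ≤ W (i + 1) →
    C = W i ∨ C = W (i + 1)

/-- The number of Jordan–Hölder constituents of a composition series isomorphic to a given
representation `σ` (applied with `σ = 𝕊`, this is the degree). -/
def CompSeries.deg {K : Type*} [Field K] {V : Type*} [AddCommGroup V] [Module ℂ V]
    {ρ : Rep K V} (c : CompSeries ρ) {W₀ : Type*} [AddCommMonoid W₀] [Module ℂ W₀]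
    (σ : Representation ℂ (Aff K) W₀) : ℕ :=
  (Finset.univ.filter fun i : Fin c.n =>
    GRep.Iso (GRep.subquot ρ (c.inv i.1) (c.inv (i.1 + 1))) σ).card

/-! ### Fiber products of a `T`-module with a `TS`-module over a `T`-module. -/

section Fiber

open Aff

variable {K : Type*} [Field K]
variable {X Y E : Type*} [AddCommGroup X] [Module ℂ X] [AddCommGroup Y] [Module ℂ Y]
  [AddCommGroup E] [Module ℂ E]

/-- The product `TS`-module `X × E` where `S` acts trivially on the `T`-module `X`. -/
def prodRepTE (τ : Representation ℂ Kˣ X) (ρ : Rep K E) : Rep K (X × E) where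
  toFun g := (τ g.t).prodMap (ρ g)
  map_one' := by
    apply LinearMap.ext; rintro ⟨x, v⟩
    simp
  map_mul' g h := by
    apply LinearMap.ext; rintro ⟨x, v⟩
    simp [map_mul]

/-- The underlying space of the fiber product `𝔼[f] = X ×_Y E`. -/
def fiberKer (f : X →ₗ[ℂ] Y) (q : E →ₗ[ℂ] Y) : Submodule ℂ (X × E) :=
  LinearMap.ker (f.comp (LinearMap.fst ℂ X E) - q.comp (LinearMap.snd ℂ X E))

lemma mem_fiberKer (f : X →ₗ[ℂ] Y) (q : E →ₗ[ℂ] Y) (p : X × E) :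
    p ∈ fiberKer f q ↔ f p.1 = q p.2 := by
  simp [fiberKer, sub_eq_zero]

lemma fiber_invariant (τX : Representation ℂ Kˣ X) (ρE : Rep K E)
    (τY : Representation ℂ Kˣ Y) (f : X →ₗ[ℂ] Y) (q : E →ₗ[ℂ] Y)
    (hf : ∀ (u : Kˣ) (x : X), f (τX u x) = τY u (f x))
    (hq : sCoinvKer ρE ≤ LinearMap.ker q)
    (hqT : ∀ (u : Kˣ) (v : E), q (ρE (xT u) v) = τY u (q v)) :
    GRep.Invariant (prodRepTE τX ρE) (fiberKer f q) := by
  intro g p hp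
  rw [mem_fiberKer] at hp ⊢
  have hsb : q (ρE (sS (((g.t⁻¹ : Kˣ) : K) * g.s)) p.2) = q p.2 := by
    have h1 : ρE (sS (((g.t⁻¹ : Kˣ) : K) * g.s)) p.2 - p.2 ∈ sCoinvKer ρE :=
      Submodule.subset_span ⟨_, _, rfl⟩
    have h2 := hq h1
    rw [LinearMap.mem_ker, map_sub, sub_eq_zero] at h2
    exact h2
  have hdecomp : ρE g p.2 = ρE (xT g.t) (ρE (sS (((g.t⁻¹ : Kˣ) : K) * g.s)) p.2) := by
    conv_lhs => rw [aff_decomp g]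
    rw [map_mul, Module.End.mul_apply]
  have h1 : ((prodRepTE τX ρE) g p).1 = τX g.t p.1 := rfl
  have h2 : ((prodRepTE τX ρE) g p).2 = ρE g p.2 := rfl
  rw [h1, h2, hf, hp, hdecomp, hqT, hsb]

end Fiber

/-! ### Jordan blocks of finite-dimensional `T`-modules. -/

section Jordan

variable {K : Type*} [Field K]
variable {X : Type*} [AddCommGroup X] [Module ℂ X]

/-- A Jordan block of a `T`-module: a nonzero indecomposable invariant direct summand. -/
def IsJordanBlock (τ : Representation ℂ Kˣ X) (J : Submodule ℂ X) : Prop :=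
  J ≠ ⊥ ∧ GRep.Invariant τ J ∧ (∃ C : Submodule ℂ X, GRep.Invariant τ C ∧ IsCompl J C) ∧
    ∀ A B : Submodule ℂ X, GRep.Invariant τ A → GRep.Invariant τ B → A ≤ J → B ≤ J →
      A ⊓ B = ⊥ → A ⊔ B = J → A = ⊥ ∨ B = ⊥

end Jordan

/-! ### Invariants and coinvariants for a normal subgroup of an arbitrary group. -/

section Grp

variable {Γ : Type*} [Group Γ]
variable {V W : Type*} [AddCommGroup V] [Module ℂ V] [AddCommGroup W] [Module ℂ W]

/-- Invariants `V^N` under a subgroup `N`. -/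
def grpInv (ρ : Representation ℂ Γ V) (N : Subgroup Γ) : Submodule ℂ V where
  carrier := {v | ∀ n ∈ N, ρ n v = v}
  zero_mem' := fun n _ => map_zero _
  add_mem' {a b} ha hb := fun n hn => by rw [map_add, ha n hn, hb n hn]
  smul_mem' c v hv := fun n hn => by rw [map_smul, hv n hn]

@[simp] lemma mem_grpInv (ρ : Representation ℂ Γ V) (N : Subgroup Γ) (v : V) :
    v ∈ grpInv ρ N ↔ ∀ n ∈ N, ρ n v = v := Iff.rfl

/-- The kernel of the projection to the coinvariants `V_N` under a subgroup `N`. -/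
def grpCoinvKer (ρ : Representation ℂ Γ V) (N : Subgroup Γ) : Submodule ℂ V :=
  Submodule.span ℂ {w : V | ∃ n ∈ N, ∃ v : V, w = ρ n v - v}

lemma grpInv_invariant (ρ : Representation ℂ Γ V) (N : Subgroup Γ) [hN : N.Normal] :
    GRep.Invariant ρ (grpInv ρ N) := by
  intro γ v hv
  rw [mem_grpInv] at hv ⊢
  intro n hn
  have hmem : γ⁻¹ * n * γ ∈ N := by
    have := hN.conj_mem n hn γ⁻¹
    simpa using this
  have key : ρ n (ρ γ v) = ρ γ (ρ (γ⁻¹ * n * γ) v) := by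
    rw [← Module.End.mul_apply, ← map_mul, ← Module.End.mul_apply, ← map_mul]
    congr 1
    group
  rw [key, hv _ hmem]

lemma grpCoinvKer_invariant (ρ : Representation ℂ Γ V) (N : Subgroup Γ) [hN : N.Normal] :
    GRep.Invariant ρ (grpCoinvKer ρ N) := by
  intro γ v hv
  have h : grpCoinvKer ρ N ≤ Submodule.comap (ρ γ) (grpCoinvKer ρ N) := by
    refine Submodule.span_le.2 ?_
    rintro w ⟨n, hn, v', rfl⟩
    simp only [SetLike.mem_coe, Submodule.mem_comap, map_sub]
    have key : ρ γ (ρ n v') = ρ (γ * n * γ⁻¹) (ρ γ v') := by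
      rw [← Module.End.mul_apply, ← map_mul, ← Module.End.mul_apply, ← map_mul]
      congr 1
      group
    rw [key]
    exact Submodule.subset_span ⟨γ * n * γ⁻¹, hN.conj_mem n hn γ, ρ γ v', rfl⟩
  exact h hv

/-- The map induced on `N`-invariants by an equivariant map. -/
def grpInvRestrict (ρ : Representation ℂ Γ V) (σ : Representation ℂ Γ W) (N : Subgroup Γ)
    (f : V →ₗ[ℂ] W) (hf : GRep.Equivariant ρ σ f) : ↥(grpInv ρ N) →ₗ[ℂ] ↥(grpInv σ N) :=
  f.restrict (fun v hv => by
    rw [mem_grpInv] at hv ⊢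
    intro n hn
    rw [← hf n v, hv n hn])

lemma grpCoinvKer_le_comap (ρ : Representation ℂ Γ V) (σ : Representation ℂ Γ W) (N : Subgroup Γ)
    (f : V →ₗ[ℂ] W) (hf : GRep.Equivariant ρ σ f) :
    grpCoinvKer ρ N ≤ (grpCoinvKer σ N).comap f := by
  refine Submodule.span_le.2 ?_
  rintro w ⟨n, hn, v, rfl⟩
  simp only [SetLike.mem_coe, Submodule.mem_comap, map_sub]
  rw [hf]
  exact Submodule.subset_span ⟨n, hn, f v, rfl⟩

/-- The map induced on `N`-coinvariants by an equivariant map. -/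
def grpCoinvMap (ρ : Representation ℂ Γ V) (σ : Representation ℂ Γ W) (N : Subgroup Γ)
    (f : V →ₗ[ℂ] W) (hf : GRep.Equivariant ρ σ f) :
    (V ⧸ grpCoinvKer ρ N) →ₗ[ℂ] (W ⧸ grpCoinvKer σ N) :=
  Submodule.mapQ _ _ f (grpCoinvKer_le_comap ρ σ N f hf)

end Grp

/-! ### Tate L-factors of finite-dimensional `T`-modules. -/

section Lfactor

variable {K : Type*} [NontriviallyNormedField K]
variable {X : Type*} [AddCommGroup X] [Module ℂ X]

/-- The part of a `T`-module where the `χ`-twisted action is unramified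
(trivial on the norm-one units). -/
def unrPart (τ : Representation ℂ Kˣ X) (χ : Kˣ →* ℂˣ) : Submodule ℂ X where
  carrier := {x | ∀ u : Kˣ, ‖(u : K)‖ = 1 → (χ u : ℂ) • τ u x = x}
  zero_mem' := fun u _ => by simp
  add_mem' {a b} ha hb := fun u hu => by rw [map_add, smul_add, ha u hu, hb u hu]
  smul_mem' c x hx := fun u hu => by
    rw [map_smul, smul_comm, hx u hu]

lemma unrPart_stable (τ : Representation ℂ Kˣ X) (χ : Kˣ →* ℂˣ) (ϖ : Kˣ) :
    ∀ x ∈ unrPart τ χ, ((χ ϖ : ℂ) • τ ϖ) x ∈ unrPart τ χ := by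
  intro x hx u hu
  have comm : τ u (τ ϖ x) = τ ϖ (τ u x) := by
    rw [← Module.End.mul_apply, ← map_mul, mul_comm, map_mul, Module.End.mul_apply]
  calc (χ u : ℂ) • τ u (((χ ϖ : ℂ) • τ ϖ) x)
      = (χ ϖ : ℂ) • ((χ u : ℂ) • τ u (τ ϖ x)) := by
        rw [LinearMap.smul_apply, map_smul, smul_comm]
    _ = (χ ϖ : ℂ) • τ ϖ ((χ u : ℂ) • τ u x) := by rw [comm, map_smul]
    _ = ((χ ϖ : ℂ) • τ ϖ) x := by rw [hx u hu, LinearMap.smul_apply]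

/-- The twisted uniformizer action on the unramified part. -/
def twistOp (τ : Representation ℂ Kˣ X) (χ : Kˣ →* ℂˣ) (ϖ : Kˣ) :
    ↥(unrPart τ χ) →ₗ[ℂ] ↥(unrPart τ χ) :=
  LinearMap.restrict ((χ ϖ : ℂ) • τ ϖ) (unrPart_stable τ χ ϖ)

/-- The Tate `L`-factor `L(s, χ ⊗ X) = det(1 - q^{-s}·(χ·τ)(ϖ) | X^{unr,χ})⁻¹` of a
(finite-dimensional) `T`-module `X`, relative to a uniformizer `ϖ`. -/
def Lfactor (τ : Representation ℂ Kˣ X) (χ : Kˣ →* ℂˣ) (ϖ : Kˣ) (s : ℂ) : ℂ :=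
  (LinearMap.det (LinearMap.id - (‖(ϖ : K)‖ : ℂ) ^ s • twistOp τ χ ϖ))⁻¹

end Lfactor

/-! ### The concrete `TS`-modules `𝕊`, `C_c^∞(k)`, `C_b^∞(k^×)` and `𝔼[χ]`. -/

section Concrete

open Aff

variable (K : Type*) [NontriviallyNormedField K]

/-- The representation of `TS` on functions on `k^×`:
`(s_b g)(x) = ψ(bx) g(x)`, `(x_λ g)(x) = g(xλ)`. -/
def repCx (ψ : AddChar K ℂ) : Rep K (Kˣ → ℂ) where
  toFun g :=
    { toFun := fun f x => ψ (g.s * (x : K)) * f (x * g.t)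
      map_add' := fun f₁ f₂ => by funext x; simp [mul_add]
      map_smul' := fun c f => by
        funext x
        simp only [Pi.smul_apply, smul_eq_mul, RingHom.id_apply]
        ring }
  map_one' := by
    apply LinearMap.ext; intro f; funext x
    simp
  map_mul' g h := by
    apply LinearMap.ext; intro f; funext x
    show ψ ((g.s + (g.t : K) * h.s) * (x : K)) * f (x * (g.t * h.t))
        = ψ (g.s * (x : K)) * (ψ (h.s * ((x * g.t : Kˣ) : K)) * f (x * g.t * h.t))
    have harg : (g.s + (g.t : K) * h.s) * (x : K)
        = g.s * (x : K) + h.s * ((x * g.t : Kˣ) : K) := by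
      push_cast
      ring
    rw [harg, AddChar.map_add_eq_mul, ← mul_assoc x g.t h.t]
    ring

@[simp] lemma repCx_apply (ψ : AddChar K ℂ) (g : Aff K) (f : Kˣ → ℂ) (x : Kˣ) :
    repCx K ψ g f x = ψ (g.s * (x : K)) * f (x * g.t) := rfl

/-- The `χ`-twisted representation of `TS` on functions on `k`:
`(s_b g)(x) = ψ(bx) g(x)`, `(x_λ g)(x) = χ(λ) g(xλ)`.  (Take `χ = 1` for the
untwisted action on `C_c^∞(k)`; the module `𝔼[χ]` is `C_c^∞(k)` with the twisted action.) -/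
def repCc (ψ : AddChar K ℂ) (χ : Kˣ →* ℂˣ) : Rep K (K → ℂ) where
  toFun g :=
    { toFun := fun f x => (χ g.t : ℂ) * ψ (g.s * x) * f (x * (g.t : K))
      map_add' := fun f₁ f₂ => by funext x; simp [mul_add]
      map_smul' := fun c f => by
        funext x
        simp only [Pi.smul_apply, smul_eq_mul, RingHom.id_apply]
        ring }
  map_one' := by
    apply LinearMap.ext; intro f; funext x
    simp
  map_mul' g h := by
    apply LinearMap.ext; intro f; funext x
    show (χ (g.t * h.t) : ℂ) * ψ ((g.s + (g.t : K) * h.s) * x) * f (x * ((g.t * h.t : Kˣ) : K))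
        = (χ g.t : ℂ) * ψ (g.s * x) * ((χ h.t : ℂ) * ψ (h.s * (x * (g.t : K)))
            * f (x * (g.t : K) * (h.t : K)))
    have harg : (g.s + (g.t : K) * h.s) * x = g.s * x + h.s * (x * (g.t : K)) := by ring
    have harg2 : x * ((g.t * h.t : Kˣ) : K) = x * (g.t : K) * (h.t : K) := by
      push_cast
      ring
    rw [harg, harg2, AddChar.map_add_eq_mul, map_mul]
    push_cast
    ring

@[simp] lemma repCc_apply (ψ : AddChar K ℂ) (χ : Kˣ →* ℂˣ) (g : Aff K) (f : K → ℂ) (x : K) :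
    repCc K ψ χ g f x = (χ g.t : ℂ) * ψ (g.s * x) * f (x * (g.t : K)) := rfl

/-- The one-dimensional `TS`-module `ℂ_χ` on which `S` acts trivially and `x_λ` by `χ(λ)`. -/
def chiRep (χ : Kˣ →* ℂˣ) : Rep K ℂ where
  toFun g := (χ g.t : ℂ) • LinearMap.id
  map_one' := by
    apply LinearMap.ext; intro c
    simp
  map_mul' g h := by
    apply LinearMap.ext; intro c
    simp only [mul_t, map_mul, LinearMap.smul_apply, LinearMap.id_apply, Module.End.mul_apply,
      Units.val_mul, smul_eq_mul]
    ring

/-- `C_c^∞(k)`: locally constant, compactly supported functions on `k`. -/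
def CcK : Submodule ℂ (K → ℂ) where
  carrier := {f | IsLocallyConstant f ∧ HasCompactSupport f}
  zero_mem' := ⟨IsLocallyConstant.const 0, by
    rw [hasCompactSupport_def]
    simp⟩
  add_mem' {a b} ha hb := ⟨ha.1.comp₂ hb.1 (· + ·), ha.2.add hb.2⟩
  smul_mem' c f hf := by
    refine ⟨?_, hf.2.mono (Function.support_const_smul_subset c f)⟩
    exact hf.1.comp (fun z => c * z)

@[simp] lemma mem_CcK (f : K → ℂ) :
    f ∈ CcK K ↔ IsLocallyConstant f ∧ HasCompactSupport f := Iff.rfl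

/-- `𝕊 = C_c^∞(k^×)`: locally constant, compactly supported functions on `k^×`. -/
def SSx : Submodule ℂ (Kˣ → ℂ) where
  carrier := {f | IsLocallyConstant f ∧ HasCompactSupport f}
  zero_mem' := ⟨IsLocallyConstant.const 0, by
    rw [hasCompactSupport_def]
    simp⟩
  add_mem' {a b} ha hb := ⟨ha.1.comp₂ hb.1 (· + ·), ha.2.add hb.2⟩
  smul_mem' c f hf := by
    refine ⟨?_, hf.2.mono (Function.support_const_smul_subset c f)⟩
    exact hf.1.comp (fun z => c * z)

@[simp] lemma mem_SSx (f : Kˣ → ℂ) :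
    f ∈ SSx K ↔ IsLocallyConstant f ∧ HasCompactSupport f := Iff.rfl

/-- `C_b^∞(k^×)`: locally constant functions on `k^×` whose support has compact closure
in `k`. -/
def Cb : Submodule ℂ (Kˣ → ℂ) where
  carrier := {f | IsLocallyConstant f ∧
    IsCompact (closure (((↑) : Kˣ → K) '' Function.support f))}
  zero_mem' := ⟨IsLocallyConstant.const 0, by simp⟩
  add_mem' {a b} ha hb := by
    refine ⟨ha.1.comp₂ hb.1 (· + ·), ?_⟩
    refine IsCompact.of_isClosed_subset (ha.2.union hb.2) isClosed_closure ?_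
    refine closure_minimal ?_ (ha.2.isClosed.union hb.2.isClosed)
    refine (Set.image_mono (Function.support_add _ _)).trans ?_
    rw [Set.image_union]
    exact Set.union_subset_union subset_closure subset_closure
  smul_mem' c f hf := by
    refine ⟨hf.1.comp (fun z => c * z), ?_⟩
    refine IsCompact.of_isClosed_subset hf.2 isClosed_closure ?_
    refine closure_mono ?_
    exact Set.image_mono (Function.support_const_smul_subset c f)

@[simp] lemma mem_Cb (f : Kˣ → ℂ) :
    f ∈ Cb K ↔ IsLocallyConstant f ∧
      IsCompact (closure (((↑) : Kˣ → K) '' Function.support f)) := Iff.rfl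

variable {K}

lemma SSx_invariant (ψ : AddChar K ℂ) (hψlc : IsLocallyConstant (⇑ψ)) :
    GRep.Invariant (repCx K ψ) (SSx K) := by
  rintro g f hf
  rw [mem_SSx] at hf ⊢
  obtain ⟨hlc, hcs⟩ := hf
  have heq : repCx K ψ g f
      = (fun x : Kˣ => ψ (g.s * (x : K))) * (f ∘ (Homeomorph.mulRight g.t)) := rfl
  constructor
  · rw [heq]
    refine IsLocallyConstant.mul ?_ ?_
    · exact hψlc.comp_continuous (continuous_const.mul Units.continuous_val)
    · exact hlc.comp_continuous (Homeomorph.mulRight g.t).continuous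
  · rw [heq]
    exact (hcs.comp_homeomorph (Homeomorph.mulRight g.t)).mul_left

lemma CcK_invariant (ψ : AddChar K ℂ) (hψlc : IsLocallyConstant (⇑ψ)) (χ : Kˣ →* ℂˣ) :
    GRep.Invariant (repCc K ψ χ) (CcK K) := by
  rintro g f hf
  rw [mem_CcK] at hf ⊢
  obtain ⟨hlc, hcs⟩ := hf
  have hne : ((g.t : Kˣ) : K) ≠ 0 := g.t.ne_zero
  have heq : repCc K ψ χ g f
      = (fun x : K => (χ g.t : ℂ) * ψ (g.s * x)) * (f ∘ (Homeomorph.mulRight₀ (g.t : K) hne)) :=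
    rfl
  constructor
  · rw [heq]
    refine IsLocallyConstant.mul ?_ ?_
    · exact ((hψlc.comp_continuous (continuous_const.mul continuous_id)).comp
        (fun z => (χ g.t : ℂ) * z))
    · exact hlc.comp_continuous (Homeomorph.mulRight₀ (g.t : K) hne).continuous
  · rw [heq]
    exact (hcs.comp_homeomorph (Homeomorph.mulRight₀ (g.t : K) hne)).mul_left

/-- The `TS`-module `𝕊 = C_c^∞(k^×)`. -/
def SRep (ψ : AddChar K ℂ) (hψlc : IsLocallyConstant (⇑ψ)) : Rep K ↥(SSx K) :=
  GRep.sub (repCx K ψ) (SSx_invariant ψ hψlc)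

/-- The `TS`-module `𝔼[χ]`, i.e. `C_c^∞(k)` with the `χ`-twisted action. -/
def ERep (ψ : AddChar K ℂ) (hψlc : IsLocallyConstant (⇑ψ)) (χ : Kˣ →* ℂˣ) : Rep K ↥(CcK K) :=
  GRep.sub (repCc K ψ χ) (CcK_invariant ψ hψlc χ)

/-- The `TS`-module `𝕊^s`, a direct sum of `s` copies of `𝕊`. -/
def SRepPow (ψ : AddChar K ℂ) (hψlc : IsLocallyConstant (⇑ψ)) (s : ℕ) :
    Rep K (Fin s → ↥(SSx K)) where
  toFun g := LinearMap.pi fun i => (SRep ψ hψlc g).comp (LinearMap.proj i)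
  map_one' := by
    apply LinearMap.ext; intro v; funext i
    simp
  map_mul' g h := by
    apply LinearMap.ext; intro v; funext i
    simp [map_mul]

/-- The submodule `E` of `C_b^∞(k^×)` consisting of functions which are `χ`-eigenvectors
modulo `𝕊`; the quotient `E/𝕊` is the `χ`-eigenspace of `C_b^∞(k^×)/𝕊`. -/
def quotEigen (ψ : AddChar K ℂ) (χ : Kˣ →* ℂˣ) : Submodule ℂ (Kˣ → ℂ) where
  carrier := {f | f ∈ Cb K ∧ ∀ u : Kˣ, repCx K ψ (Aff.xT u) f - (χ u : ℂ) • f ∈ SSx K}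
  zero_mem' := ⟨(Cb K).zero_mem, fun u => by simpa using (SSx K).zero_mem⟩
  add_mem' {a b} ha hb := by
    refine ⟨(Cb K).add_mem ha.1 hb.1, fun u => ?_⟩
    rw [map_add, smul_add, add_sub_add_comm]
    exact (SSx K).add_mem (ha.2 u) (hb.2 u)
  smul_mem' c f hf := by
    refine ⟨(Cb K).smul_mem c hf.1, fun u => ?_⟩
    rw [map_smul, smul_comm, ← smul_sub]
    exact (SSx K).smul_mem c (hf.2 u)

/-- Evaluation at `0 ∈ k`, realizing the quotient map `𝔼[χ] → ℂ_χ` with kernel `𝕊`. -/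
def ev0 : ↥(CcK K) →ₗ[ℂ] ℂ where
  toFun f := (f : K → ℂ) 0
  map_add' f g := rfl
  map_smul' c f := rfl

end Concrete

/-! ### The diagonal torus in GL(2). -/

section GL2

variable {K : Type*} [Field K]

/-- The diagonal element `diag(a, b)` of `GL(2, K)`. -/
def diagGL (a b : Kˣ) : Matrix.GeneralLinearGroup (Fin 2) K where
  val := Matrix.diagonal ![(a : K), (b : K)]
  inv := Matrix.diagonal ![((a : K))⁻¹, ((b : K))⁻¹]
  val_inv := by
    ext i j
    fin_cases i <;> fin_cases j <;>
      simp [Matrix.mul_apply, Fin.sum_univ_two, Matrix.diagonal, Matrix.one_apply,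
        a.ne_zero, b.ne_zero]
  inv_val := by
    ext i j
    fin_cases i <;> fin_cases j <;>
      simp [Matrix.mul_apply, Fin.sum_univ_two, Matrix.diagonal, Matrix.one_apply,
        a.ne_zero, b.ne_zero]

end GL2

set_option linter.all false


section Averaging

open Filter Topology

variable {K : Type*} [NontriviallyNormedField K] [IsUltrametricDist K]
variable {V : Type*} [AddCommGroup V] [Module ℂ V]

/-- The closed ball of radius `‖c‖` as an additive subgroup. -/
def cb (c : K) : AddSubgroup K where
  carrier := {b | ‖b‖ ≤ ‖c‖}
  zero_mem' := by simp
  add_mem' {a b} ha hb := (IsUltrametricDist.norm_add_le_max a b).trans (max_le ha hb)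
  neg_mem' {a} ha := by simpa using ha

@[simp] lemma mem_cb (c b : K) : b ∈ cb c ↔ ‖b‖ ≤ ‖c‖ := Iff.rfl

lemma cb_finite [ProperSpace K] (c δ : K) (hδ : δ ≠ 0) :
    Finite (↥(cb c) ⧸ (cb δ).addSubgroupOf (cb c)) := by
  have h1 : CompactSpace ↥(cb c) := by
    have : ((cb c : AddSubgroup K) : Set K) = Metric.closedBall 0 ‖c‖ := by
      ext b; simp
    refine isCompact_iff_compactSpace.1 (?_ : IsCompact ((cb c : AddSubgroup K) : Set K))
    rw [this]
    exact isCompact_closedBall _ _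
  apply AddSubgroup.quotient_finite_of_isOpen
  have h2 : IsOpen ((cb δ : AddSubgroup K) : Set K) := by
    have : ((cb δ : AddSubgroup K) : Set K) = Metric.closedBall 0 ‖δ‖ := by
      ext b; simp
    rw [this]
    exact IsUltrametricDist.isOpen_closedBall _ (by simpa using hδ)
  exact h2.preimage continuous_subtype_val

/-- vectors fixed by the ball of radius `‖c‖`. -/
def fixR (σ : K → V →ₗ[ℂ] V) (c : K) : Submodule ℂ V where
  carrier := {v | ∀ b ∈ cb c, σ b v = v}
  zero_mem' := fun b _ => map_zero _
  add_mem' {a b} ha hb := fun c hc => by rw [map_add, ha c hc, hb c hc]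
  smul_mem' c v hv := fun b hb => by rw [map_smul, hv b hb]

/-- kernel of the projection to coinvariants for the ball of radius `‖c‖`. -/
def coR (σ : K → V →ₗ[ℂ] V) (c : K) : Submodule ℂ V :=
  Submodule.span ℂ {w | ∃ b ∈ cb c, ∃ v : V, w = σ b v - v}

lemma coR_mono (σ : K → V →ₗ[ℂ] V) {c c' : K} (h : ‖c‖ ≤ ‖c'‖) : coR σ c ≤ coR σ c' := by
  apply Submodule.span_mono
  rintro w ⟨b, hb, v, rfl⟩
  exact ⟨b, le_trans hb h, v, rfl⟩

/-- averaging operator -/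
def avz (σ : K → V →ₗ[ℂ] V) (c δ : K)
    [Fintype (↥(cb c) ⧸ (cb δ).addSubgroupOf (cb c))] : V →ₗ[ℂ] V :=
  ∑ q : ↥(cb c) ⧸ (cb δ).addSubgroupOf (cb c), σ (q.out : K)

variable (σ : K → V →ₗ[ℂ] V)

lemma avz_shift (hadd : ∀ b c v, σ (b + c) v = σ b (σ c v))
    (c δ : K) [Fintype (↥(cb c) ⧸ (cb δ).addSubgroupOf (cb c))] (v : V)
    (hv : ∀ b ∈ cb δ, σ b v = v) (b : K) (hb : b ∈ cb c) :
    avz σ c δ (σ b v) = avz σ c δ v := by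
  simp only [avz, LinearMap.sum_apply]
  have key : ∀ q : ↥(cb c) ⧸ (cb δ).addSubgroupOf (cb c),
      σ (q.out : K) (σ b v)
        = σ ((q + (QuotientAddGroup.mk (⟨b, hb⟩ : ↥(cb c)))).out : K) v := by
    intro q
    set q' := q + (QuotientAddGroup.mk (⟨b, hb⟩ : ↥(cb c))) with hq'
    have h1 : (QuotientAddGroup.mk q'.out : ↥(cb c) ⧸ (cb δ).addSubgroupOf (cb c))
        = QuotientAddGroup.mk (q.out + ⟨b, hb⟩) := by
      rw [QuotientAddGroup.out_eq', QuotientAddGroup.mk_add, QuotientAddGroup.out_eq']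
    rw [QuotientAddGroup.eq, AddSubgroup.mem_addSubgroupOf] at h1
    have h2 := hv _ h1
    rw [← hadd]
    conv_rhs => rw [← h2, ← hadd]
    congr 2
    push_cast
    ring
  simp_rw [key]
  exact Equiv.sum_comp (Equiv.addRight (QuotientAddGroup.mk (⟨b, hb⟩ : ↥(cb c)) :
    ↥(cb c) ⧸ (cb δ).addSubgroupOf (cb c))) (fun q : ↥(cb c) ⧸ (cb δ).addSubgroupOf (cb c) => σ (q.out : K) v)

lemma avz_mem_fix (hadd : ∀ b c v, σ (b + c) v = σ b (σ c v))
    (c δ : K) [Fintype (↥(cb c) ⧸ (cb δ).addSubgroupOf (cb c))] (v : V)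
    (hv : ∀ b ∈ cb δ, σ b v = v) : avz σ c δ v ∈ fixR σ c := by
  intro b hb
  conv_rhs => rw [← avz_shift σ hadd c δ v hv b hb]
  simp only [avz, LinearMap.sum_apply, map_sum]
  refine Finset.sum_congr rfl fun q _ => ?_
  rw [← hadd, ← hadd, add_comm]

lemma avz_of_fix (c δ : K) [Fintype (↥(cb c) ⧸ (cb δ).addSubgroupOf (cb c))] (v : V)
    (hv : v ∈ fixR σ c) :
    avz σ c δ v = (Fintype.card (↥(cb c) ⧸ (cb δ).addSubgroupOf (cb c)) : ℂ) • v := by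
  simp only [avz, LinearMap.sum_apply]
  rw [Finset.sum_congr rfl fun q _ => hv _ (Quotient.out q).2]
  simp [Nat.cast_smul_eq_nsmul]

lemma avz_sub_mem (c δ : K) [Fintype (↥(cb c) ⧸ (cb δ).addSubgroupOf (cb c))] (v : V) :
    avz σ c δ v - (Fintype.card (↥(cb c) ⧸ (cb δ).addSubgroupOf (cb c)) : ℂ) • v
      ∈ coR σ c := by
  have : avz σ c δ v - (Fintype.card (↥(cb c) ⧸ (cb δ).addSubgroupOf (cb c)) : ℂ) • v
      = ∑ q : ↥(cb c) ⧸ (cb δ).addSubgroupOf (cb c), (σ (q.out : K) v - v) := by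
    simp [avz, Nat.cast_smul_eq_nsmul]
  rw [this]
  exact Submodule.sum_mem _ fun q _ => Submodule.subset_span ⟨_, (Quotient.out q).2, v, rfl⟩

lemma exists_ball_of_eventually {P : K → Prop} (h : ∀ᶠ b in 𝓝 (0 : K), P b) :
    ∃ δ : K, δ ≠ 0 ∧ ∀ b, ‖b‖ ≤ ‖δ‖ → P b := by
  obtain ⟨ε, hε, h⟩ := Metric.eventually_nhds_iff.1 h
  obtain ⟨δ, hδ0, hδ⟩ := NormedField.exists_norm_lt K hε
  exact ⟨δ, by simpa using hδ0, fun b hb => h (by simpa using hb.trans_lt hδ)⟩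

variable [ProperSpace K]

lemma coR_avz (hadd : ∀ b c v, σ (b + c) v = σ b (σ c v))
    (hsm : ∀ v, ∀ᶠ b in 𝓝 (0 : K), σ b v = v) (c : K) (w : V) (hw : w ∈ coR σ c) :
    ∃ δ : K, δ ≠ 0 ∧ ∀ δ' : K, δ' ≠ 0 → ‖δ'‖ ≤ ‖δ‖ →
      ∀ _ : Fintype (↥(cb c) ⧸ (cb δ').addSubgroupOf (cb c)), avz σ c δ' w = 0 := by
  induction hw using Submodule.span_induction with
  | mem w hw =>
    obtain ⟨b, hb, v, rfl⟩ := hw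
    obtain ⟨δ, hδ, h⟩ := exists_ball_of_eventually (hsm v)
    refine ⟨δ, hδ, fun δ' _ hle _ => ?_⟩
    rw [map_sub, avz_shift σ hadd c δ' v (fun b hb => h b (le_trans hb hle)) b hb, sub_self]
  | zero => exact ⟨1, one_ne_zero, fun _ _ _ _ => map_zero _⟩
  | add x y _ _ hx hy =>
    obtain ⟨δ₁, h1, H1⟩ := hx
    obtain ⟨δ₂, h2, H2⟩ := hy
    rcases le_total ‖δ₁‖ ‖δ₂‖ with h | h
    · refine ⟨δ₁, h1, fun δ' h' hle _ => ?_⟩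
      rw [map_add, H1 δ' h' hle, H2 δ' h' (hle.trans h), add_zero]
    · refine ⟨δ₂, h2, fun δ' h' hle _ => ?_⟩
      rw [map_add, H1 δ' h' (hle.trans h), H2 δ' h' hle, add_zero]
  | smul a x _ hx =>
    obtain ⟨δ₁, h1, H1⟩ := hx
    refine ⟨δ₁, h1, fun δ' h' hle _ => ?_⟩
    rw [map_smul, H1 δ' h' hle, smul_zero]

lemma fix_co_zero (hadd : ∀ b c v, σ (b + c) v = σ b (σ c v))
    (hsm : ∀ v, ∀ᶠ b in 𝓝 (0 : K), σ b v = v) (c : K) (w : V) (hw : w ∈ fixR σ c) (hw' : w ∈ coR σ c) : w = 0 := by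
  obtain ⟨δ, hδ, h⟩ := coR_avz σ hadd hsm c w hw'
  have := cb_finite c δ hδ
  letI : Fintype (↥(cb c) ⧸ (cb δ).addSubgroupOf (cb c)) := Fintype.ofFinite _
  have h1 := h δ hδ le_rfl inferInstance
  rw [avz_of_fix σ c δ w hw] at h1
  rcases smul_eq_zero.1 h1 with h2 | h2
  · exact absurd h2 (Nat.cast_ne_zero.2 Fintype.card_ne_zero)
  · exact h2

lemma exists_decomp (hadd : ∀ b c v, σ (b + c) v = σ b (σ c v))
    (hsm : ∀ v, ∀ᶠ b in 𝓝 (0 : K), σ b v = v) (c : K) (v : V) : ∃ w ∈ fixR σ c, v - w ∈ coR σ c := by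
  obtain ⟨δ, hδ, h⟩ := exists_ball_of_eventually (hsm v)
  have := cb_finite c δ hδ
  letI : Fintype (↥(cb c) ⧸ (cb δ).addSubgroupOf (cb c)) := Fintype.ofFinite _
  set N : ℂ := (Fintype.card (↥(cb c) ⧸ (cb δ).addSubgroupOf (cb c)) : ℂ) with hN
  have hN0 : N ≠ 0 := Nat.cast_ne_zero.2 Fintype.card_ne_zero
  refine ⟨N⁻¹ • avz σ c δ v, Submodule.smul_mem _ _ (avz_mem_fix σ hadd c δ v h), ?_⟩
  have h1 := Submodule.smul_mem _ (-N⁻¹) (avz_sub_mem σ c δ v)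
  rw [← hN, smul_sub, smul_smul] at h1
  convert h1 using 1
  rw [neg_mul, inv_mul_cancel₀ hN0]
  module

lemma avz_eq_zero (hadd : ∀ b c v, σ (b + c) v = σ b (σ c v))
    (hsm : ∀ v, ∀ᶠ b in 𝓝 (0 : K), σ b v = v) (c δ : K) [Fintype (↥(cb c) ⧸ (cb δ).addSubgroupOf (cb c))] (v : V)
    (hv : ∀ b ∈ cb δ, σ b v = v) (hco : v ∈ coR σ c) : avz σ c δ v = 0 := by
  refine fix_co_zero σ hadd hsm c _ (avz_mem_fix σ hadd c δ v hv) ?_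
  have h1 := Submodule.add_mem _ (avz_sub_mem σ c δ v) (Submodule.smul_mem _
    (Fintype.card (↥(cb c) ⧸ (cb δ).addSubgroupOf (cb c)) : ℂ) hco)
  simpa using h1

end Averaging

section Twisted

open Filter Topology Aff

variable {K : Type*} [NontriviallyNormedField K] [IsUltrametricDist K] [ProperSpace K]
variable {V : Type*} [AddCommGroup V] [Module ℂ V]

lemma psi_conductor (ψ : AddChar K ℂ) (hψlc : IsLocallyConstant (⇑ψ)) (hψne : ψ ≠ 1) :
    ∃ d : K, d ≠ 0 ∧ (∀ y : K, ‖y‖ ≤ ‖d‖ → ψ y = 1) ∧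
      ∀ x : K, ‖d‖ < ‖x‖ → ∃ y : K, ‖y‖ ≤ ‖x‖ ∧ ψ y ≠ 1 := by
  have h1 : ∀ᶠ b in 𝓝 (0 : K), ψ b = 1 := by
    have := (hψlc.isOpen_fiber (ψ 0)).mem_nhds (x := 0) rfl
    filter_upwards [this] with b hb
    simpa using hb
  obtain ⟨δ, hδ, h⟩ := exists_ball_of_eventually h1
  obtain ⟨y0, hy0⟩ : ∃ y, ψ y ≠ 1 := by
    by_contra! hcon
    exact hψne (by ext y; simp [hcon y])
  set D : Set K := {x | (∀ y, ‖y‖ ≤ ‖x‖ → ψ y = 1) ∧ ‖δ‖ ≤ ‖x‖} with hD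
  have hcompact : IsCompact D := by
    refine (isCompact_closedBall (0 : K) ‖y0‖).of_isClosed_subset ?_ ?_
    · rw [← isOpen_compl_iff, isOpen_iff_mem_nhds]
      intro x hx
      by_cases hx0 : x = 0
      · have : Metric.ball (0 : K) ‖δ‖ ∈ 𝓝 x := by
          rw [hx0]; exact Metric.ball_mem_nhds _ (by simpa using hδ)
        filter_upwards [this] with z hz hz'
        have := hz'.2
        simp at hz
        linarith
      · have : Metric.ball x ‖x‖ ∈ 𝓝 x := Metric.ball_mem_nhds _ (by simpa using hx0)
        filter_upwards [this] with z hz hz'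
        apply hx
        have hn : ‖z‖ = ‖x‖ := by
          rw [Metric.mem_ball, dist_eq_norm] at hz
          have := IsUltrametricDist.norm_add_eq_max_of_norm_ne_norm (x := z - x) (y := x) hz.ne
          rw [sub_add_cancel, max_eq_right hz.le] at this
          exact this
        rw [hD, Set.mem_setOf_eq] at hz' ⊢
        rwa [hn] at hz'
    · intro x hx
      simp only [Metric.mem_closedBall, dist_zero_right]
      by_contra! hlt
      exact hy0 (hx.1 _ hlt.le)
  obtain ⟨d, hd, hmax⟩ := hcompact.exists_isMaxOn ⟨δ, h, le_rfl⟩ continuous_norm.continuousOn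
  refine ⟨d, ?_, hd.1, ?_⟩
  · rintro rfl
    have := hd.2
    simp at this
    exact hδ this
  · intro x hx
    by_contra! hcon
    have : x ∈ D := ⟨hcon, hd.2.trans hx.le⟩
    have := hmax this
    simp at this
    linarith

/-- `S` acts smoothly. -/
def SSm (ρ : Rep K V) : Prop := ∀ v, ∀ᶠ b in 𝓝 (0 : K), ρ (sS b) v = v

/-- the twisted action of `S` -/
def tw (ρ : Rep K V) (ψ : AddChar K ℂ) (a b : K) : V →ₗ[ℂ] V := ψ (-(a * b)) • ρ (sS b)

lemma sS_add (b c : K) : (sS (b + c) : Aff K) = sS b * sS c := by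
  ext <;> simp

lemma psi_neg_mul (ψ : AddChar K ℂ) (x : K) : ψ (-x) * ψ x = 1 := by
  rw [← AddChar.map_add_eq_mul]; simp

lemma tw_add (ρ : Rep K V) (ψ : AddChar K ℂ) (a : K) (b c : K) (v : V) :
    tw ρ ψ a (b + c) v = tw ρ ψ a b (tw ρ ψ a c v) := by
  simp only [tw, LinearMap.smul_apply, map_smul, smul_smul, sS_add, map_mul,
    Module.End.mul_apply]
  rw [← AddChar.map_add_eq_mul]
  congr 2
  ring

lemma psi_eventually (ψ : AddChar K ℂ) (hψlc : IsLocallyConstant (⇑ψ)) (a : K) :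
    ∀ᶠ b in 𝓝 (0 : K), ψ (a * b) = 1 := by
  have h1 : IsLocallyConstant (fun b : K => ψ (a * b)) :=
    hψlc.comp_continuous (continuous_const.mul continuous_id)
  have := h1.isOpen_fiber (ψ (a * 0)) |>.mem_nhds (x := 0) rfl
  filter_upwards [this] with b hb
  simpa using hb

lemma tw_eq_iff (ρ : Rep K V) (ψ : AddChar K ℂ) (a b : K) (v : V) :
    tw ρ ψ a b v = v ↔ ρ (sS b) v = ψ (a * b) • v := by
  simp only [tw, LinearMap.smul_apply]
  constructor
  · intro h
    conv_rhs => rw [← h, smul_smul, mul_comm, psi_neg_mul, one_smul]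
  · intro h
    rw [h, smul_smul, psi_neg_mul, one_smul]

lemma tw_smooth (ρ : Rep K V) (hρ : SSm ρ) (ψ : AddChar K ℂ) (hψlc : IsLocallyConstant (⇑ψ))
    (a : K) (v : V) : ∀ᶠ b in 𝓝 (0 : K), tw ρ ψ a b v = v := by
  filter_upwards [hρ v, psi_eventually ψ hψlc a] with b h1 h2
  rw [tw_eq_iff, h1, h2, one_smul]

end Twisted


section Whit

open Filter Topology Aff

variable {K : Type*} [NontriviallyNormedField K] [IsUltrametricDist K] [ProperSpace K]
variable {V : Type*} [AddCommGroup V] [Module ℂ V]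

/-- the twisted coinvariant kernel -/
def twK (ρ : Rep K V) (ψ : AddChar K ℂ) (a : K) : Submodule ℂ V :=
  Submodule.span ℂ {w | ∃ (b : K) (v : V), w = tw ρ ψ a b v - v}

lemma coR_le_twK (ρ : Rep K V) (ψ : AddChar K ℂ) (a c : K) : coR (tw ρ ψ a) c ≤ twK ρ ψ a := by
  apply Submodule.span_mono
  rintro w ⟨b, hb, v, rfl⟩
  exact ⟨b, v, rfl⟩

lemma mem_twK_exists (ρ : Rep K V) (ψ : AddChar K ℂ) (a : K) (w : V) (hw : w ∈ twK ρ ψ a) :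
    ∃ c : K, w ∈ coR (tw ρ ψ a) c := by
  induction hw using Submodule.span_induction with
  | mem w hw =>
    obtain ⟨b, v, rfl⟩ := hw
    exact ⟨b, Submodule.subset_span ⟨b, (le_rfl : ‖b‖ ≤ ‖b‖), v, rfl⟩⟩
  | zero => exact ⟨0, Submodule.zero_mem _⟩
  | add x y _ _ hx hy =>
    obtain ⟨c₁, h1⟩ := hx
    obtain ⟨c₂, h2⟩ := hy
    rcases le_total ‖c₁‖ ‖c₂‖ with h | h
    · exact ⟨c₂, Submodule.add_mem _ (coR_mono _ h h1) h2⟩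
    · exact ⟨c₁, Submodule.add_mem _ h1 (coR_mono _ h h2)⟩
  | smul a x _ hx =>
    obtain ⟨c₁, h1⟩ := hx
    exact ⟨c₁, Submodule.smul_mem _ _ h1⟩

lemma zero_of_all_twK (ψ : AddChar K ℂ) (hψlc : IsLocallyConstant (⇑ψ)) (hψne : ψ ≠ 1)
    (ρ : Rep K V) (hρ : SSm ρ) (w : V) (hw : ∀ a, w ∈ twK ρ ψ a) : w = 0 := by
  obtain ⟨d, hd0, hd1, hd2⟩ := psi_conductor ψ hψlc hψne
  obtain ⟨δ, hδ0, hδ⟩ := exists_ball_of_eventually (hρ w)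
  set A : AddSubgroup K := cb (d / δ) with hA
  have hAc : IsCompact (A : Set K) := by
    have : (A : Set K) = Metric.closedBall 0 ‖d / δ‖ := by
      ext b; simp [hA]
    rw [this]
    exact isCompact_closedBall _ _
  obtain ⟨c, hc⟩ : ∃ c : K, ∀ a ∈ (A : Set K), w ∈ coR (tw ρ ψ a) c := by
    refine hAc.induction_on (p := fun s => ∃ c : K, ∀ a ∈ s, w ∈ coR (tw ρ ψ a) c) ?_ ?_ ?_ ?_
    · exact ⟨0, by simp⟩
    · rintro s t hst ⟨c, hc⟩
      exact ⟨c, fun a ha => hc a (hst ha)⟩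
    · rintro s t ⟨c₁, h1⟩ ⟨c₂, h2⟩
      rcases le_total ‖c₁‖ ‖c₂‖ with h | h
      · exact ⟨c₂, fun a ha => ha.elim (fun ha => coR_mono _ h (h1 a ha)) (fun ha => h2 a ha)⟩
      · exact ⟨c₁, fun a ha => ha.elim (fun ha => h1 a ha) (fun ha => coR_mono _ h (h2 a ha))⟩
    · intro a _
      obtain ⟨c, hc⟩ := mem_twK_exists ρ ψ a w (hw a)
      have hev : ∀ᶠ e in 𝓝 (0 : K), ‖e * c‖ < ‖d‖ := by
        have : Tendsto (fun e : K => ‖e * c‖) (𝓝 0) (𝓝 ‖(0 : K) * c‖) :=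
          ((continuous_id.mul continuous_const).norm).tendsto 0
        refine this.eventually (gt_mem_nhds ?_)
        simpa using hd0
      have hev' : ∀ᶠ a' in 𝓝 a, ‖(a' - a) * c‖ < ‖d‖ := by
        have : Tendsto (fun a' : K => a' - a) (𝓝 a) (𝓝 0) := by
          have : Continuous fun a' : K => a' - a := by fun_prop
          simpa using this.tendsto a
        exact this.eventually hev
      refine ⟨_, mem_nhdsWithin_of_mem_nhds hev', c, fun a' ha' => ?_⟩
      refine Submodule.span_mono ?_ hc
      rintro u ⟨b, hb, v, rfl⟩
      refine ⟨b, hb, v, ?_⟩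
      have : ψ (-(a' * b)) = ψ (-(a * b)) := by
        have h1 : ψ ((a' - a) * b) = 1 := by
          apply hd1
          rw [norm_mul]
          refine le_trans ?_ (le_of_lt ha')
          rw [norm_mul]
          gcongr
          exact hb
        have h2 : -(a * b) = -(a' * b) + (a' - a) * b := by ring
        rw [h2, AddChar.map_add_eq_mul, h1, mul_one]
      simp [tw, this]
  have := cb_finite c δ hδ0
  letI : Fintype (↥(cb c) ⧸ (cb δ).addSubgroupOf (cb c)) := Fintype.ofFinite _
  let Q := ↥(cb c) ⧸ (cb δ).addSubgroupOf (cb c)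
  have hz : ∀ a ∈ A, ∑ q : Q, ψ (-(a * (q.out : K))) • ρ (sS (q.out : K)) w = 0 := by
    intro a ha
    have h1 := avz_eq_zero (tw ρ ψ a) (tw_add ρ ψ a) (tw_smooth ρ hρ ψ hψlc a) c δ w ?_ (hc a ha)
    · simpa [avz, tw] using h1
    · intro b hb
      rw [tw_eq_iff, hδ b hb, hd1, one_smul]
      rw [norm_mul]
      have h2 : ‖a‖ ≤ ‖d / δ‖ := ha
      have h3 : ‖b‖ ≤ ‖δ‖ := hb
      calc ‖a‖ * ‖b‖ ≤ ‖d / δ‖ * ‖δ‖ := by gcongr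
        _ = ‖d‖ := by rw [← norm_mul, div_mul_cancel₀ _ hδ0]
  let χ : Q → (Multiplicative A →* ℂ) := fun q =>
    { toFun := fun a => ψ (-((Multiplicative.toAdd a : A) * (q.out : K)))
      map_one' := by simp
      map_mul' := fun a b => by
        rw [← AddChar.map_add_eq_mul]
        congr 1
        simp
        ring }
  have hχ : Function.Injective χ := by
    intro q q' h
    by_contra hne
    have hnot : ¬ ‖-(q.out : K) + (q'.out : K)‖ ≤ ‖δ‖ := by
      intro hle
      apply hne
      rw [← QuotientAddGroup.out_eq' q, ← QuotientAddGroup.out_eq' q', QuotientAddGroup.eq,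
        AddSubgroup.mem_addSubgroupOf]
      simpa using hle
    push Not at hnot
    set β := -(q.out : K) + (q'.out : K) with hβ
    have hβ0 : β ≠ 0 := by
      intro h0; rw [h0] at hnot; simp at hnot; linarith [norm_nonneg δ]
    have hlt : ‖d‖ < ‖d * β / δ‖ := by
      rw [norm_div, norm_mul, lt_div_iff₀ (by simpa using hδ0)]
      exact mul_lt_mul_of_pos_left hnot (by simpa using hd0)
    obtain ⟨y, hy1, hy2⟩ := hd2 _ hlt
    have hyA : y / β ∈ A := by
      rw [hA, mem_cb, norm_div, div_le_iff₀ (by simpa using hβ0), ← norm_mul]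
      have : d / δ * β = d * β / δ := by ring
      rw [this]
      exact hy1
    have h1 := DFunLike.congr_fun h (Multiplicative.ofAdd (⟨y / β, hyA⟩ : A))
    simp only [χ, MonoidHom.coe_mk, OneHom.coe_mk, toAdd_ofAdd] at h1
    apply hy2
    have h2 : y = y / β * (q'.out : K) + -(y / β * (q.out : K)) := by
      have : y = y / β * β := by field_simp
      conv_lhs => rw [this, hβ]
      ring
    rw [h2, AddChar.map_add_eq_mul, h1, mul_comm, psi_neg_mul]
  have hli : LinearIndependent ℂ (fun q : Q => (χ q : Multiplicative A → ℂ)) :=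
    (linearIndependent_monoidHom (Multiplicative A) ℂ).comp χ hχ
  have hall : ∀ (q : Q), ρ (sS (q.out : K)) w = 0 := by
    intro q
    rw [← Module.forall_dual_apply_eq_zero_iff ℂ]
    intro l
    refine Fintype.linearIndependent_iff.1 hli (fun q => l (ρ (sS (q.out : K)) w)) ?_ q
    funext a
    obtain ⟨a, rfl⟩ := Multiplicative.ofAdd.surjective a
    have h1 := congrArg l (hz (a : K) a.2)
    simp only [map_sum, map_smul, map_zero, smul_eq_mul] at h1
    simp only [Finset.sum_apply, Pi.smul_apply, smul_eq_mul, Pi.zero_apply]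
    rw [← h1]
    exact Finset.sum_congr rfl fun q _ => mul_comm _ _
  have h1 := hall (QuotientAddGroup.mk 0)
  have h2 := congrArg (ρ (sS (-((QuotientAddGroup.mk 0 : Q).out : K)))) h1
  rw [← Module.End.mul_apply, ← map_mul, ← sS_add, map_zero] at h2
  simpa [show (sS (0 : K) : Aff K) = 1 from rfl] using h2

lemma tw_comm_sS (ρ : Rep K V) (ψ : AddChar K ℂ) (a c : K) (w : V) (hw : w ∈ twK ρ ψ a) :
    ρ (sS c) w ∈ twK ρ ψ a := by
  have : twK ρ ψ a ≤ (twK ρ ψ a).comap (ρ (sS c)) := by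
    refine Submodule.span_le.2 ?_
    rintro w ⟨b, v, rfl⟩
    refine Submodule.subset_span ⟨b, ρ (sS c) v, ?_⟩
    simp only [tw, LinearMap.smul_apply, map_sub, map_smul]
    rw [← Module.End.mul_apply, ← map_mul, ← Module.End.mul_apply, ← map_mul, ← sS_add,
      ← sS_add, add_comm]
  exact this hw

lemma tw_xT (ρ : Rep K V) (ψ : AddChar K ℂ) (a : K) (y : Kˣ) (w : V) (hw : w ∈ twK ρ ψ a) :
    ρ (xT y) w ∈ twK ρ ψ (a * (y⁻¹ : Kˣ)) := by
  have : twK ρ ψ a ≤ (twK ρ ψ (a * (y⁻¹ : Kˣ))).comap (ρ (xT y)) := by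
    refine Submodule.span_le.2 ?_
    rintro w ⟨b, v, rfl⟩
    refine Submodule.subset_span ⟨y * b, ρ (xT y) v, ?_⟩
    simp only [tw, LinearMap.smul_apply, map_sub, map_smul]
    rw [← Module.End.mul_apply, ← map_mul, ← Module.End.mul_apply, ← map_mul, mul_sS]
    have : a * ((y⁻¹ : Kˣ) : K) * (y * b) = a * b := by
      rw [mul_assoc, Units.inv_mul_cancel_left]
    rw [this]; rfl
  exact this hw

/-- Whittaker functional -/
def IsWh (ρ : Rep K V) (ψ : AddChar K ℂ) (Λ : V →ₗ[ℂ] ℂ) : Prop :=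
  ∀ b v, Λ (ρ (sS b) v) = ψ b * Λ v

lemma exists_wh (ψ : AddChar K ℂ) (hψlc : IsLocallyConstant (⇑ψ)) (hψne : ψ ≠ 1)
    (ρ : Rep K V) (hρ : SSm ρ) (v : V) (hv : v ∉ sInv ρ) :
    ∃ Λ : V →ₗ[ℂ] ℂ, IsWh ρ ψ Λ ∧ ∃ x : Kˣ, Λ (ρ (xT x) v) ≠ 0 := by
  by_contra! hcon
  apply hv
  have h1 : ∀ x : Kˣ, ρ (xT x) v ∈ twK ρ ψ 1 := by
    intro x
    by_contra hx
    obtain ⟨Λ, hΛ1, hΛ2⟩ := Submodule.exists_le_ker_of_notMem hx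
    refine hΛ1 (hcon Λ ?_ x)
    intro b u
    have h2 : tw ρ ψ 1 b u - u ∈ LinearMap.ker Λ := hΛ2 (Submodule.subset_span ⟨b, u, rfl⟩)
    simp only [tw, LinearMap.smul_apply, LinearMap.mem_ker, map_sub, map_smul, one_mul,
      smul_eq_mul, sub_eq_zero] at h2
    rw [← h2, ← mul_assoc, mul_comm (ψ b), psi_neg_mul, one_mul]
  have h2 : ∀ a : K, a ≠ 0 → v ∈ twK ρ ψ a := by
    intro a ha
    have h3 := tw_xT ρ ψ 1 (Units.mk0 a ha)⁻¹ _ (h1 (Units.mk0 a ha))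
    rw [← Module.End.mul_apply, ← map_mul] at h3
    have h4 : (xT (Units.mk0 a ha)⁻¹ * xT (Units.mk0 a ha) : Aff K) = 1 := by
      ext <;> simp
    rw [h4] at h3
    simpa using h3
  intro b
  rw [← sub_eq_zero]
  apply zero_of_all_twK ψ hψlc hψne ρ hρ
  intro a
  by_cases ha : a = 0
  · subst ha
    refine Submodule.subset_span ⟨b, v, ?_⟩
    simp [tw]
  · exact Submodule.sub_mem _ (tw_comm_sS ρ ψ a b v (h2 a ha)) (h2 a ha)

lemma sInv_sCoinv (ψ : AddChar K ℂ) (ρ : Rep K V) (hρ : SSm ρ) (v : V) (h1 : v ∈ sInv ρ)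
    (hψlc : IsLocallyConstant (⇑ψ)) (h2 : v ∈ sCoinvKer ρ) : v = 0 := by
  have h3 : v ∈ twK ρ ψ 0 := by
    refine Submodule.span_mono ?_ h2
    rintro w ⟨b, u, rfl⟩
    exact ⟨b, u, by simp [tw]⟩
  obtain ⟨c, hc⟩ := mem_twK_exists ρ ψ 0 v h3
  refine fix_co_zero (tw ρ ψ 0) (tw_add ρ ψ 0) (tw_smooth ρ hρ ψ hψlc 0) c v ?_ hc
  intro b _
  simpa [tw] using h1 b

end Whit


section Kir

open Filter Topology Aff

variable {K : Type*} [NontriviallyNormedField K]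
variable {V : Type*} [AddCommGroup V] [Module ℂ V]

/-- smoothness along the torus -/
def TSm (ρ : Rep K V) : Prop := ∀ v, ∀ᶠ u in 𝓝 (1 : Kˣ), ρ (xT u) v = v

lemma continuous_sS : Continuous (sS : K → Aff K) := by
  refine continuous_induced_rng.2 ?_
  show Continuous fun b : K => ((1 : Kˣ), b)
  fun_prop

lemma continuous_xT : Continuous (xT : Kˣ → Aff K) := by
  refine continuous_induced_rng.2 ?_
  show Continuous fun u : Kˣ => (u, (0 : K))
  fun_prop

lemma SSm_of_smooth (ρ : Rep K V) (h : IsSmoothRep ρ) : SSm ρ := by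
  intro v
  have := (h v).preimage continuous_sS
  refine this.mem_nhds ?_
  show ρ (sS 0) v = v
  rw [show (sS (0 : K) : Aff K) = 1 from rfl]; simp

lemma TSm_of_smooth (ρ : Rep K V) (h : IsSmoothRep ρ) : TSm ρ := by
  intro v
  have := (h v).preimage continuous_xT
  refine this.mem_nhds ?_
  show ρ (xT 1) v = v
  rw [show (xT (1 : Kˣ) : Aff K) = 1 from rfl]; simp

lemma SSm_sub (ρ : Rep K V) (h : SSm ρ) {U : Submodule ℂ V} (hU : GRep.Invariant ρ U) :
    SSm (GRep.sub ρ hU) := by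
  intro v
  filter_upwards [h v] with b hb
  exact Subtype.ext hb

lemma TSm_sub (ρ : Rep K V) (h : TSm ρ) {U : Submodule ℂ V} (hU : GRep.Invariant ρ U) :
    TSm (GRep.sub ρ hU) := by
  intro v
  filter_upwards [h v] with b hb
  exact Subtype.ext hb

lemma SSm_quot (ρ : Rep K V) (h : SSm ρ) {U : Submodule ℂ V} (hU : GRep.Invariant ρ U) :
    SSm (GRep.quot ρ U hU) := by
  intro v
  obtain ⟨v, rfl⟩ := Submodule.Quotient.mk_surjective _ v
  filter_upwards [h v] with b hb
  rw [GRep.quot_apply, hb]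

lemma TSm_quot (ρ : Rep K V) (h : TSm ρ) {U : Submodule ℂ V} (hU : GRep.Invariant ρ U) :
    TSm (GRep.quot ρ U hU) := by
  intro v
  obtain ⟨v, rfl⟩ := Submodule.Quotient.mk_surjective _ v
  filter_upwards [h v] with b hb
  rw [GRep.quot_apply, hb]

lemma SSm_subquot (ρ : Rep K V) (h : SSm ρ) {A B : Submodule ℂ V} (hA : GRep.Invariant ρ A)
    (hB : GRep.Invariant ρ B) : SSm (GRep.subquot ρ hA hB) :=
  SSm_quot _ (SSm_sub ρ h hB) _

lemma TSm_subquot (ρ : Rep K V) (h : TSm ρ) {A B : Submodule ℂ V} (hA : GRep.Invariant ρ A)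
    (hB : GRep.Invariant ρ B) : TSm (GRep.subquot ρ hA hB) :=
  TSm_quot _ (TSm_sub ρ h hB) _

lemma aff_decomp' (g : Aff K) : g = sS g.s * xT g.t := by
  ext <;> simp

lemma rho_mul (ρ : Rep K V) (g h : Aff K) (v : V) : ρ (g * h) v = ρ g (ρ h v) := by
  rw [map_mul]; rfl

lemma xT_mul (u v : Kˣ) : (xT (u * v) : Aff K) = xT u * xT v := by
  ext <;> simp

lemma rho_xT_inv (ρ : Rep K V) (u : Kˣ) (v : V) : ρ (xT u⁻¹) (ρ (xT u) v) = v := by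
  rw [← rho_mul, ← xT_mul, inv_mul_cancel, show (xT (1 : Kˣ) : Aff K) = 1 from rfl]; simp

lemma rho_xT_inv' (ρ : Rep K V) (u : Kˣ) (v : V) : ρ (xT u) (ρ (xT u⁻¹) v) = v := by
  rw [← rho_mul, ← xT_mul, mul_inv_cancel, show (xT (1 : Kˣ) : Aff K) = 1 from rfl]; simp

/-- The Kirillov map attached to a functional -/
def wh (ρ : Rep K V) (Λ : V →ₗ[ℂ] ℂ) : V →ₗ[ℂ] (Kˣ → ℂ) :=
  LinearMap.pi fun x => Λ.comp (ρ (xT x))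

@[simp] lemma wh_apply (ρ : Rep K V) (Λ : V →ₗ[ℂ] ℂ) (v : V) (x : Kˣ) :
    wh ρ Λ v x = Λ (ρ (xT x) v) := rfl

lemma wh_equivariant (ρ : Rep K V) (ψ : AddChar K ℂ) (Λ : V →ₗ[ℂ] ℂ) (hΛ : IsWh ρ ψ Λ) :
    GRep.Equivariant ρ (repCx K ψ) (wh ρ Λ) := by
  intro g v
  funext x
  rw [repCx_apply, wh_apply, wh_apply, ← hΛ, ← rho_mul, ← rho_mul]
  congr 3
  ext <;> simp [mul_comm]

/-- germs at zero -/
def gZ (K : Type*) [NontriviallyNormedField K] : Filter Kˣ := comap ((↑) : Kˣ → K) (𝓝 0)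

lemma gZ_iff {P : Kˣ → Prop} :
    (∀ᶠ x in gZ K, P x) ↔ ∃ ε > 0, ∀ x : Kˣ, ‖(x : K)‖ < ε → P x := by
  rw [gZ, eventually_comap, Metric.eventually_nhds_iff]
  constructor
  · rintro ⟨ε, h, H⟩
    exact ⟨ε, h, fun x hx => H (y := x) (by simpa using hx) x rfl⟩
  · rintro ⟨ε, h, H⟩
    refine ⟨ε, h, fun y hy x hx => H x ?_⟩
    subst hx
    simpa using hy

instance gZ_neBot : (gZ K).NeBot := by
  rw [neBot_iff]
  intro h
  have h1 : ∀ᶠ x in gZ K, False := by rw [h]; exact eventually_bot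
  obtain ⟨ε, hε, H⟩ := gZ_iff.1 h1
  obtain ⟨δ, hδ0, hδ⟩ := NormedField.exists_norm_lt K hε
  exact H (Units.mk0 δ (by simpa using hδ0)) hδ

lemma gZ_mul {P : Kˣ → Prop} (h : ∀ᶠ x in gZ K, P x) (u : Kˣ) : ∀ᶠ x in gZ K, P (x * u) := by
  rw [gZ_iff] at h ⊢
  obtain ⟨ε, hε, H⟩ := h
  have hu : 0 < ‖(u : K)‖ := by simp
  refine ⟨ε / ‖(u : K)‖, by positivity, fun x hx => H _ ?_⟩
  rw [Units.val_mul, norm_mul]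
  rwa [lt_div_iff₀ hu] at hx

/-- smooth function on the units -/
def Sm (ψ : AddChar K ℂ) (φ : Kˣ → ℂ) : Prop :=
  (∀ᶠ b in 𝓝 (0 : K), repCx K ψ (sS b) φ = φ) ∧ (∀ᶠ u in 𝓝 (1 : Kˣ), repCx K ψ (xT u) φ = φ)

lemma Sm_wh (ρ : Rep K V) (ψ : AddChar K ℂ) (h1 : SSm ρ) (h2 : TSm ρ) (Λ : V →ₗ[ℂ] ℂ)
    (hΛ : IsWh ρ ψ Λ) (v : V) : Sm ψ (wh ρ Λ v) := by
  constructor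
  · filter_upwards [h1 v] with b hb
    rw [← wh_equivariant ρ ψ Λ hΛ, hb]
  · filter_upwards [h2 v] with b hb
    rw [← wh_equivariant ρ ψ Λ hΛ, hb]

lemma Sm_sub (ψ : AddChar K ℂ) {φ φ' : Kˣ → ℂ} (h : Sm ψ φ) (h' : Sm ψ φ') : Sm ψ (φ - φ') := by
  constructor
  · filter_upwards [h.1, h'.1] with b hb hb'
    rw [map_sub, hb, hb']
  · filter_upwards [h.2, h'.2] with b hb hb'
    rw [map_sub, hb, hb']

lemma Sm_rep (ψ : AddChar K ℂ) {φ : Kˣ → ℂ} (h : Sm ψ φ) (u : Kˣ) :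
    Sm ψ (repCx K ψ (xT u) φ) := by
  constructor
  · have h1 : ∀ᶠ b in 𝓝 (0 : K), repCx K ψ (sS (((u⁻¹ : Kˣ) : K) * b)) φ = φ := by
      have : Tendsto (fun b : K => ((u⁻¹ : Kˣ) : K) * b) (𝓝 0) (𝓝 0) := by
        have : Continuous (fun b : K => ((u⁻¹ : Kˣ) : K) * b) := by fun_prop
        simpa using this.tendsto 0
      exact this.eventually h.1
    filter_upwards [h1] with b hb
    rw [← rho_mul, sS_mul, rho_mul]
    simp only [xT_t]
    rw [hb]
  · filter_upwards [h.2] with v hv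
    rw [← rho_mul, ← xT_mul, mul_comm, xT_mul, rho_mul, hv]

lemma Sm_bdd [IsUltrametricDist K] [ProperSpace K] (ψ : AddChar K ℂ) (hψlc : IsLocallyConstant (⇑ψ)) (hψne : ψ ≠ 1) {φ : Kˣ → ℂ}
    (h : Sm ψ φ) : ∃ R : ℝ, ∀ x : Kˣ, φ x ≠ 0 → ‖(x : K)‖ ≤ R := by
  obtain ⟨d, hd0, hd1, hd2⟩ := psi_conductor ψ hψlc hψne
  obtain ⟨δ, hδ0, hδ⟩ := exists_ball_of_eventually h.1
  refine ⟨‖d‖ / ‖δ‖, fun x hx => ?_⟩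
  have hδ' : 0 < ‖δ‖ := by simpa using hδ0
  rw [le_div_iff₀ hδ']
  by_contra! hlt
  rw [← norm_mul] at hlt
  obtain ⟨y, hy1, hy2⟩ := hd2 _ hlt
  apply hy2
  have hb := hδ (y * ((x⁻¹ : Kˣ) : K)) (by
    have hx' : 0 < ‖(x : K)‖ := by simp
    rw [norm_mul] at hy1 ⊢
    rw [Units.val_inv_eq_inv_val, norm_inv, ← div_eq_mul_inv, div_le_iff₀ hx']
    linarith)
  have := congrFun hb x
  simp only [repCx_apply, sS_s, sS_t, mul_one] at this
  rw [Units.inv_mul_cancel_right] at this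
  exact mul_right_cancel₀ hx (by rw [this, one_mul])

lemma Sm_lc (ψ : AddChar K ℂ) {φ : Kˣ → ℂ} (h : Sm ψ φ) : IsLocallyConstant φ := by
  rw [IsLocallyConstant.iff_eventually_eq]
  intro x
  have h1 : Tendsto (fun y : Kˣ => x⁻¹ * y) (𝓝 x) (𝓝 1) := by
    have : Continuous (fun y : Kˣ => x⁻¹ * y) := by fun_prop
    simpa using this.tendsto x
  filter_upwards [h1.eventually h.2] with y hy
  have := congrFun hy x
  simpa using this

lemma isCompact_annulus [ProperSpace K] (r R : ℝ) (hr : 0 < r) :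
    IsCompact {x : Kˣ | r ≤ ‖(x : K)‖ ∧ ‖(x : K)‖ ≤ R} := by
  rw [Units.isEmbedding_val₀.isCompact_iff]
  have : ((↑) : Kˣ → K) '' {x : Kˣ | r ≤ ‖(x : K)‖ ∧ ‖(x : K)‖ ≤ R}
      = {x : K | r ≤ ‖x‖} ∩ Metric.closedBall 0 R := by
    ext y
    constructor
    · rintro ⟨x, ⟨h1, h2⟩, rfl⟩
      exact ⟨h1, by simpa using h2⟩
    · rintro ⟨h1, h2⟩
      have hy : y ≠ 0 := by
        rintro rfl
        simp at h1; linarith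
      exact ⟨Units.mk0 y hy, ⟨h1, by simpa using h2⟩, rfl⟩
  rw [this]
  exact (isCompact_closedBall _ _).inter_left (isClosed_le continuous_const continuous_norm)

lemma SSx_of_Sm [IsUltrametricDist K] [ProperSpace K] (ψ : AddChar K ℂ) (hψlc : IsLocallyConstant (⇑ψ)) (hψne : ψ ≠ 1) {φ : Kˣ → ℂ}
    (h : Sm ψ φ) (h0 : ∀ᶠ x in gZ K, φ x = 0) : φ ∈ SSx K := by
  refine ⟨Sm_lc ψ h, ?_⟩
  obtain ⟨R, hR⟩ := Sm_bdd ψ hψlc hψne h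
  obtain ⟨ε, hε, H⟩ := gZ_iff.1 h0
  refine HasCompactSupport.intro (isCompact_annulus ε R hε) fun x hx => ?_
  by_contra hne
  apply hx
  refine ⟨?_, hR x hne⟩
  by_contra! hlt
  exact hne (H x hlt)

lemma SSx_vanish [ProperSpace K] {φ : Kˣ → ℂ} (h : φ ∈ SSx K) : ∀ᶠ x in gZ K, φ x = 0 := by
  have hc : IsCompact (((↑) : Kˣ → K) '' tsupport φ) := h.2.isCompact.image Units.continuous_val
  have h0 : (0 : K) ∉ (((↑) : Kˣ → K) '' tsupport φ) := by
    rintro ⟨x, _, hx⟩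
    exact x.ne_zero hx
  have := hc.isClosed.isOpen_compl.mem_nhds h0
  refine mem_comap.2 ⟨_, this, fun x hx => ?_⟩
  by_contra hne
  exact hx ⟨x, subset_tsupport _ hne, rfl⟩

lemma Sm_of_SSx (ψ : AddChar K ℂ) (hψlc : IsLocallyConstant (⇑ψ)) {φ : Kˣ → ℂ}
    (h : φ ∈ SSx K) : Sm ψ φ := by
  have hc : IsCompact (tsupport φ) := h.2.isCompact
  have hlc := h.1
  constructor
  · have h1 : ∀ᶠ b in 𝓝 (0 : K), ∀ x ∈ tsupport φ, ψ (b * (x : K)) = 1 := by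
      refine hc.eventually_forall_of_forall_eventually fun x _ => ?_
      have h2 : Continuous fun z : K × Kˣ => z.1 * (z.2 : K) := by
        exact continuous_fst.mul (Units.continuous_val.comp continuous_snd)
      have h3 := (hψlc.comp_continuous h2).eventually_eq ((0 : K), x)
      filter_upwards [h3] with z hz
      simpa using hz
    filter_upwards [h1] with b hb
    funext x
    simp only [repCx_apply, sS_s, sS_t, mul_one]
    by_cases hx : φ x = 0
    · simp [hx]
    · rw [hb x (subset_tsupport _ hx), one_mul]
  · have h1 : ∀ᶠ u in 𝓝 (1 : Kˣ), ∀ x ∈ tsupport φ, φ (x * u) = φ x := by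
      refine hc.eventually_forall_of_forall_eventually fun x _ => ?_
      have h2 : Continuous fun z : Kˣ × Kˣ => z.2 * z.1 := by fun_prop
      have h3 := (hlc.comp_continuous h2).eventually_eq ((1 : Kˣ), x)
      have h4 := (hlc.comp_continuous (continuous_snd (X := Kˣ))).eventually_eq ((1 : Kˣ), x)
      filter_upwards [h3, h4] with z hz hz'
      simp only [Function.comp_apply, mul_one] at hz hz'
      rw [hz, hz']
    have h1' : ∀ᶠ u in 𝓝 (1 : Kˣ), ∀ x ∈ tsupport φ, φ (x * u⁻¹) = φ x := by
      have : Tendsto (fun u : Kˣ => u⁻¹) (𝓝 1) (𝓝 1) := by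
        simpa using (continuous_inv (G := Kˣ)).tendsto 1
      exact this.eventually h1
    filter_upwards [h1, h1'] with u hu hu'
    funext x
    simp only [repCx_apply, xT_s, xT_t, zero_mul, AddChar.map_zero_eq_one, one_mul]
    by_cases hx : φ x = 0
    · by_cases hxu : φ (x * u) = 0
      · rw [hx, hxu]
      · have := hu' (x * u) (subset_tsupport _ hxu)
        rw [mul_inv_cancel_right] at this
        exact this.symm
    · exact hu x (subset_tsupport _ hx)

end Kir


section Kir2

open Filter Topology Aff

variable {K : Type*} [NontriviallyNormedField K] [IsUltrametricDist K] [ProperSpace K]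
variable {V : Type*} [AddCommGroup V] [Module ℂ V]

lemma norm_unit_eq_one {e : K} (he : ‖e‖ < 1) (u : Kˣ) (hu : ‖(u : K) - 1‖ ≤ ‖e‖) : ‖(u : K)‖ = 1 := by
  have h1 : ‖(u : K) - 1‖ < ‖(1 : K)‖ := by rw [norm_one]; exact hu.trans_lt he
  have := IsUltrametricDist.norm_add_eq_max_of_norm_ne_norm (x := (u : K) - 1) (y := 1) h1.ne
  rw [sub_add_cancel, max_eq_right h1.le, norm_one] at this
  exact this

/-- small subgroup of the units -/
def uSub (e : K) (he : ‖e‖ < 1) : Subgroup Kˣ where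
  carrier := {u | ‖(u : K) - 1‖ ≤ ‖e‖}
  one_mem' := by simp
  mul_mem' {u v} hu hv := by
    have h1 : ((u * v : Kˣ) : K) - 1 = u * (v - 1) + (u - 1) := by push_cast; ring
    show ‖((u * v : Kˣ) : K) - 1‖ ≤ ‖e‖
    rw [h1]
    refine (IsUltrametricDist.norm_add_le_max _ _).trans (max_le ?_ hu)
    rw [norm_mul, norm_unit_eq_one he u hu, one_mul]
    exact hv
  inv_mem' {u} hu := by
    have h1 : ((u⁻¹ : Kˣ) : K) - 1 = -(((u⁻¹ : Kˣ) : K) * (u - 1)) := by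
      rw [mul_sub, Units.inv_mul]; ring
    show ‖((u⁻¹ : Kˣ) : K) - 1‖ ≤ ‖e‖
    rw [h1, norm_neg, norm_mul, Units.val_inv_eq_inv_val, norm_inv, norm_unit_eq_one he u hu]
    simpa using hu

lemma mem_uSub (e : K) (he : ‖e‖ < 1) (u : Kˣ) : u ∈ uSub e he ↔ ‖(u : K) - 1‖ ≤ ‖e‖ := Iff.rfl

lemma uSub_mem_nhds (e : K) (he : ‖e‖ < 1) (he0 : e ≠ 0) : (uSub e he : Set Kˣ) ∈ 𝓝 (1 : Kˣ) := by
  have h1 : Tendsto (fun u : Kˣ => ‖(u : K) - 1‖) (𝓝 1) (𝓝 0) := by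
    have : Continuous (fun u : Kˣ => ‖(u : K) - 1‖) :=
      (Units.continuous_val.sub continuous_const).norm
    simpa using this.tendsto 1
  have h2 : 0 < ‖e‖ := by simpa using he0
  filter_upwards [h1.eventually (gt_mem_nhds h2)] with u hu
  exact le_of_lt hu

lemma exists_unit_ball {P : Kˣ → Prop} (h : ∀ᶠ u in 𝓝 (1 : Kˣ), P u) :
    ∃ r : ℝ, 0 < r ∧ ∀ u : Kˣ, ‖(u : K) - 1‖ < r → P u := by
  rw [Units.isEmbedding_val₀.isInducing.nhds_eq_comap, eventually_comap,
    Metric.eventually_nhds_iff] at h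
  obtain ⟨r, hr, H⟩ := h
  exact ⟨r, hr, fun u hu => H (y := (u : K)) (by simpa [dist_eq_norm] using hu) u rfl⟩

/-- indicator of the small ball around one -/
def ind (e : K) : Kˣ → ℂ := fun x => if ‖(x : K) - 1‖ ≤ ‖e‖ then 1 else 0

lemma cut (ψ : AddChar K ℂ) (hψlc : IsLocallyConstant (⇑ψ)) (hψne : ψ ≠ 1)
    (I : Submodule ℂ (Kˣ → ℂ)) (hI : GRep.Invariant (repCx K ψ) I) (hSm : ∀ φ ∈ I, Sm ψ φ)
    (f : Kˣ → ℂ) (hf : f ∈ I) (e : K) (he0 : e ≠ 0) :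
    ∃ w : I, (⟨f, hf⟩ - w ∈ twK (GRep.sub (repCx K ψ) hI) ψ 1) ∧
      ∀ x : Kˣ, w.1 x = if ‖(x : K) - 1‖ ≤ ‖e‖ then f x else 0 := by
  obtain ⟨d, hd0, hd1, hd2⟩ := psi_conductor ψ hψlc hψne
  set ρ := GRep.sub (repCx K ψ) hI with hρ
  have hS : SSm ρ := by
    intro v
    filter_upwards [(hSm v.1 v.2).1] with b hb
    exact Subtype.ext hb
  set c := d / e with hc
  obtain ⟨w, hw1, hw2⟩ := exists_decomp (tw ρ ψ 1) (tw_add ρ ψ 1) (tw_smooth ρ hS ψ hψlc 1) c ⟨f, hf⟩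
  have hwx : ∀ x : Kˣ, ‖e‖ < ‖(x : K) - 1‖ → w.1 x = 0 := by
    intro x hx
    have hlt : ‖d‖ < ‖c * (x - 1)‖ := by
      rw [hc, norm_mul, norm_div, div_mul_eq_mul_div, lt_div_iff₀ (by simpa using he0)]
      exact mul_lt_mul_of_pos_left hx (by simpa using hd0)
    obtain ⟨y, hy1, hy2⟩ := hd2 _ hlt
    have hx0 : (x : K) - 1 ≠ 0 := by
      intro h0; rw [h0] at hx; simp at hx; linarith [norm_nonneg e]
    have hb : ‖y / (x - 1)‖ ≤ ‖c‖ := by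
      rw [norm_div, div_le_iff₀ (by simpa using hx0), ← norm_mul]
      exact hy1
    have h1 := hw1 _ hb
    rw [tw_eq_iff] at h1
    have h2 := congrFun (congrArg Subtype.val h1) x
    set b := y / ((x : K) - 1) with hbdef
    have h3 : ψ (b * x) * w.1 x = ψ b * w.1 x := by
      simpa [ρ] using h2
    have h4 : b * x = y + b := by
      have : y = b * (x - 1) := by rw [hbdef]; field_simp
      rw [this]; ring
    rw [h4, AddChar.map_add_eq_mul] at h3
    by_contra hne
    have h5 := mul_right_cancel₀ hne h3
    apply hy2
    have hψb : ψ b ≠ 0 := by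
      intro h0
      have := psi_neg_mul ψ b
      rw [h0, mul_zero] at this
      exact zero_ne_one this
    exact mul_right_cancel₀ hψb (by rw [h5, one_mul])
  have hux : ∀ x : Kˣ, ‖(x : K) - 1‖ ≤ ‖e‖ → ∀ u ∈ coR (tw ρ ψ 1) c, u.1 x = 0 := by
    intro x hx u hu
    induction hu using Submodule.span_induction with
    | mem u hu =>
      obtain ⟨b, hb, v, rfl⟩ := hu
      have hb' : ‖b‖ ≤ ‖c‖ := hb
      have h1 : ψ (b * (x - 1)) = 1 := by
        apply hd1
        rw [norm_mul]
        calc ‖b‖ * ‖(x : K) - 1‖ ≤ ‖c‖ * ‖e‖ := by gcongr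
          _ = ‖d‖ := by rw [← norm_mul, hc, div_mul_cancel₀ _ he0]
      have h2 : ψ (b * x) = ψ b := by
        have : b * x = b * (x - 1) + b := by ring
        rw [this, AddChar.map_add_eq_mul, h1, one_mul]
      have h3 : ((tw ρ ψ 1 b v - v : ↥I) : Kˣ → ℂ) x = ψ (-b) * (ψ (b * x) * v.1 x) - v.1 x := by
        simp [tw, ρ]
      rw [h3, h2, ← mul_assoc, psi_neg_mul, one_mul, sub_self]
    | zero => rfl
    | add u v _ _ h1 h2 => simp [h1, h2]
    | smul a u _ h1 => simp [h1]
  refine ⟨w, coR_le_twK ρ ψ 1 c hw2, fun x => ?_⟩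
  split_ifs with hx
  · have h1 := hux x hx _ hw2
    simp only [Submodule.coe_sub, Pi.sub_apply, sub_eq_zero] at h1
    exact h1.symm
  · push Not at hx
    exact hwx x hx

lemma ind_mem (ψ : AddChar K ℂ) (hψlc : IsLocallyConstant (⇑ψ)) (hψne : ψ ≠ 1)
    (I : Submodule ℂ (Kˣ → ℂ)) (hI : GRep.Invariant (repCx K ψ) I) (hSm : ∀ φ ∈ I, Sm ψ φ)
    (f : Kˣ → ℂ) (hf : f ∈ I) (hf1 : f 1 ≠ 0) :
    ∃ r : ℝ, 0 < r ∧ ∀ e : K, e ≠ 0 → ‖e‖ < r → ind e ∈ I := by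
  obtain ⟨r, hr, H⟩ := exists_unit_ball (hSm f hf).2
  refine ⟨r, hr, fun e he0 her => ?_⟩
  obtain ⟨w, -, hw⟩ := cut ψ hψlc hψne I hI hSm f hf e he0
  have hw : w.1 = f 1 • ind e := by
    funext x
    simp only [Pi.smul_apply, ind, smul_eq_mul]
    rw [hw]
    split_ifs with hx
    · rw [mul_one]
      have := congrFun (H x (hx.trans_lt her)) 1
      simpa using this
    · rw [mul_zero]
  have h1 := Submodule.smul_mem I (f 1)⁻¹ w.2
  rwa [hw, smul_smul, inv_mul_cancel₀ hf1, one_smul] at h1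

lemma kir (ψ : AddChar K ℂ) (hψlc : IsLocallyConstant (⇑ψ)) (hψne : ψ ≠ 1)
    (I : Submodule ℂ (Kˣ → ℂ)) (hI : GRep.Invariant (repCx K ψ) I) (hSm : ∀ φ ∈ I, Sm ψ φ)
    (hne : I ≠ ⊥) : SSx K ≤ I := by
  obtain ⟨f₀, hf₀, hf₀0⟩ := Submodule.exists_mem_ne_zero_of_ne_bot hne
  obtain ⟨x₀, hx₀⟩ := Function.ne_iff.1 hf₀0
  obtain ⟨r, hr, H⟩ := ind_mem ψ hψlc hψne I hI hSm _ (hI (xT x₀) f₀ hf₀) (by simpa using hx₀)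
  intro g hg
  obtain ⟨r', hr', H'⟩ := exists_unit_ball (Sm_of_SSx ψ hψlc hg).2
  obtain ⟨e, he0, he⟩ := NormedField.exists_norm_lt K (lt_min (lt_min hr hr') one_pos)
  have he0 : e ≠ 0 := by simpa using he0
  have her : ‖e‖ < r := he.trans_le ((min_le_left _ _).trans (min_le_left _ _))
  have her' : ‖e‖ < r' := he.trans_le ((min_le_left _ _).trans (min_le_right _ _))
  have he1 : ‖e‖ < 1 := he.trans_le (min_le_right _ _)
  have hind := H e he0 her
  set U := uSub e he1 with hU
  obtain ⟨t, ht1, ht2⟩ := hg.2.isCompact.elim_nhds_subcover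
    (fun x => {y : Kˣ | x⁻¹ * y ∈ U}) (fun x _ => by
      have : Tendsto (fun y : Kˣ => x⁻¹ * y) (𝓝 x) (𝓝 1) := by
        have : Continuous (fun y : Kˣ => x⁻¹ * y) := by fun_prop
        simpa using this.tendsto x
      exact this.eventually (uSub_mem_nhds e he1 he0))
  let S : Finset (Kˣ ⧸ U) := t.image (QuotientGroup.mk)
  have hsum : g = ∑ q ∈ S, g q.out • repCx K ψ (xT q.out⁻¹) (ind e) := by
    funext x
    simp only [Finset.sum_apply, Pi.smul_apply, smul_eq_mul, repCx_apply, xT_s, xT_t, zero_mul,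
      AddChar.map_zero_eq_one, one_mul]
    have hiff : ∀ q : Kˣ ⧸ U, ind e (x * q.out⁻¹) = if (QuotientGroup.mk x : Kˣ ⧸ U) = q then 1 else 0 := by
      intro q
      unfold ind
      congr 1
      rw [← mem_uSub e he1, eq_comm (a := (QuotientGroup.mk x : Kˣ ⧸ U))]
      conv_rhs => rw [← QuotientGroup.out_eq' q, QuotientGroup.eq, mul_comm]
    simp only [hiff, mul_ite, mul_one, mul_zero, Finset.sum_ite_eq]
    split_ifs with hx
    · have h1 : x⁻¹ * (QuotientGroup.mk x : Kˣ ⧸ U).out ∈ U := by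
        rw [← QuotientGroup.eq, QuotientGroup.out_eq']
      have h2 := congrFun (H' _ (((mem_uSub e he1 _).1 h1).trans_lt her')) x
      simpa using h2.symm
    · by_contra hne
      have h1 := ht2 (subset_tsupport _ hne)
      simp only [Set.mem_iUnion] at h1
      obtain ⟨y, hy, hyx⟩ := h1
      apply hx
      refine Finset.mem_image.2 ⟨y, hy, ?_⟩
      rw [QuotientGroup.eq]
      exact hyx
  rw [hsum]
  exact Submodule.sum_mem _ fun q _ => Submodule.smul_mem _ _ (hI _ _ hind)

lemma psi_germ (ψ : AddChar K ℂ) (hψlc : IsLocallyConstant (⇑ψ)) (b : K) :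
    ∀ᶠ x : Kˣ in gZ K, ψ (b * (x : K)) = 1 := by
  have h1 : ∀ᶠ y in 𝓝 (0 : K), ψ (b * y) = 1 := by
    have h2 : Continuous fun y : K => b * y := by fun_prop
    have h3 := (hψlc.comp_continuous h2).eventually_eq 0
    filter_upwards [h3] with z hz
    simpa using hz
  exact tendsto_comap.eventually h1

lemma wh_coinv (ψ : AddChar K ℂ) (hψlc : IsLocallyConstant (⇑ψ)) (hψne : ψ ≠ 1)
    (ρ : Rep K V) (h1 : SSm ρ) (h2 : TSm ρ) (Λ : V →ₗ[ℂ] ℂ) (hΛ : IsWh ρ ψ Λ) (hΛ0 : Λ ≠ 0) :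
    (sCoinvKer ρ).map (wh ρ Λ) = SSx K := by
  apply le_antisymm
  · rw [sCoinvKer, Submodule.map_span, Submodule.span_le]
    rintro _ ⟨_, ⟨b, v, rfl⟩, rfl⟩
    refine SSx_of_Sm ψ hψlc hψne (Sm_wh ρ ψ h1 h2 Λ hΛ _) ?_
    filter_upwards [psi_germ ψ hψlc b] with x hx
    rw [map_sub, wh_equivariant ρ ψ Λ hΛ]
    simp only [Pi.sub_apply, repCx_apply, sS_s, sS_t, mul_one]
    rw [hx, one_mul, sub_self]
  · apply kir ψ hψlc hψne _ (GRep.map_invariant ρ _ _ (wh_equivariant ρ ψ Λ hΛ) _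
      (sCoinvKer_invariant ρ))
    · rintro _ ⟨v, _, rfl⟩
      exact Sm_wh ρ ψ h1 h2 Λ hΛ v
    · intro hbot
      obtain ⟨v, hv⟩ : ∃ v, Λ v ≠ 0 := by
        by_contra! h
        exact hΛ0 (LinearMap.ext h)
      apply hψne
      ext b
      have h3 : wh ρ Λ (ρ (sS b) v - v) ∈ (sCoinvKer ρ).map (wh ρ Λ) :=
        ⟨_, Submodule.subset_span ⟨b, v, rfl⟩, rfl⟩
      rw [hbot, Submodule.mem_bot, map_sub, wh_equivariant ρ ψ Λ hΛ] at h3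
      have h4 := congrFun h3 1
      have h5 : Λ (ρ (xT 1) v) = Λ v := by
        rw [show (xT (1 : Kˣ) : Aff K) = 1 from rfl]; simp
      simp only [Pi.sub_apply, repCx_apply, sS_s, sS_t, mul_one, wh_apply, Units.val_one,
        Pi.zero_apply, sub_eq_zero, h5] at h4
      rw [AddChar.one_apply]
      exact mul_right_cancel₀ hv (by rw [h4, one_mul])

end Kir2


section Deg

open Filter Topology Aff

variable {K : Type*} [NontriviallyNormedField K] [IsUltrametricDist K] [ProperSpace K]
variable {V : Type*} [AddCommGroup V] [Module ℂ V]

lemma IsWh_twK (ρ : Rep K V) (ψ : AddChar K ℂ) (Λ : V →ₗ[ℂ] ℂ) (hΛ : IsWh ρ ψ Λ) (v : V)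
    (hv : v ∈ twK ρ ψ 1) : Λ v = 0 := by
  have : twK ρ ψ 1 ≤ LinearMap.ker Λ := by
    refine Submodule.span_le.2 ?_
    rintro w ⟨b, v, rfl⟩
    simp only [SetLike.mem_coe, LinearMap.mem_ker, map_sub, tw, LinearMap.smul_apply, map_smul,
      one_mul, smul_eq_mul, hΛ b v, ← mul_assoc, psi_neg_mul, sub_self]
  exact this hv

lemma SRep_wh (ψ : AddChar K ℂ) (hψlc : IsLocallyConstant (⇑ψ)) (hψne : ψ ≠ 1)
    (Λ : ↥(SSx K) →ₗ[ℂ] ℂ) (hΛ : IsWh (SRep ψ hψlc) ψ Λ) (f : ↥(SSx K)) (hf : f.1 1 = 0) :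
    Λ f = 0 := by
  obtain ⟨r, hr, H⟩ := exists_unit_ball (Sm_of_SSx ψ hψlc f.2).2
  obtain ⟨e, he0, her⟩ := NormedField.exists_norm_lt K hr
  have he0 : e ≠ 0 := by simpa using he0
  obtain ⟨w, hw1, hw2⟩ := cut ψ hψlc hψne (SSx K) (SSx_invariant ψ hψlc)
    (fun φ hφ => Sm_of_SSx ψ hψlc hφ) f.1 f.2 e he0
  have hw : w = 0 := by
    apply Subtype.ext
    funext x
    rw [hw2]
    split_ifs with hx
    · have := congrFun (H x (hx.trans_lt her)) 1
      simp only [repCx_apply, xT_s, zero_mul, AddChar.map_zero_eq_one, xT_t, one_mul] at this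
      rw [this, hf]; rfl
    · rfl
  rw [hw, sub_zero] at hw1
  exact IsWh_twK _ ψ Λ hΛ _ hw1

lemma SRep_wh_prop (ψ : AddChar K ℂ) (hψlc : IsLocallyConstant (⇑ψ)) (hψne : ψ ≠ 1)
    (Λ₁ Λ₂ : ↥(SSx K) →ₗ[ℂ] ℂ) (h1 : IsWh (SRep ψ hψlc) ψ Λ₁) (h2 : IsWh (SRep ψ hψlc) ψ Λ₂)
    (f g : ↥(SSx K)) : Λ₁ f * Λ₂ g = Λ₁ g * Λ₂ f := by
  have key : ∀ Λ : ↥(SSx K) →ₗ[ℂ] ℂ, IsWh (SRep ψ hψlc) ψ Λ → g.1 1 * Λ f = f.1 1 * Λ g := by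
    intro Λ hΛ
    have := SRep_wh ψ hψlc hψne Λ hΛ (g.1 1 • f - f.1 1 • g) (by simp [mul_comm])
    simpa [sub_eq_zero] using this
  have k1 := key Λ₁ h1
  have k2 := key Λ₂ h2
  by_cases hg : g.1 1 = 0
  · rw [SRep_wh ψ hψlc hψne Λ₁ h1 g hg, SRep_wh ψ hψlc hψne Λ₂ h2 g hg]; ring
  · apply mul_left_cancel₀ hg
    linear_combination Λ₂ g * k1 - Λ₁ g * k2

lemma irred_iso (ψ : AddChar K ℂ) (hψlc : IsLocallyConstant (⇑ψ)) (hψne : ψ ≠ 1)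
    (ρ : Rep K V) (h1 : SSm ρ) (h2 : TSm ρ) (hirr : GRep.Irred ρ) (hS : sInv ρ ≠ ⊤) :
    GRep.Iso ρ (SRep ψ hψlc) ∧ sCoinvKer ρ = ⊤ := by
  obtain ⟨v, hv⟩ : ∃ v, v ∉ sInv ρ := by
    by_contra! h
    exact hS (eq_top_iff.2 fun x _ => h x)
  obtain ⟨Λ, hΛ, x, hx⟩ := exists_wh ψ hψlc hψne ρ h1 v hv
  have hΛ0 : Λ ≠ 0 := by rintro rfl; exact hx rfl
  have heq := wh_equivariant ρ ψ Λ hΛ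
  have hker : LinearMap.ker (wh ρ Λ) = ⊥ := by
    rcases hirr.2 _ (GRep.ker_invariant ρ _ _ heq) with h | h
    · exact h
    · exfalso
      have : v ∈ LinearMap.ker (wh ρ Λ) := by rw [h]; trivial
      exact hx (congrFun (LinearMap.mem_ker.1 this) x)
  have hco : sCoinvKer ρ = ⊤ := by
    rcases hirr.2 _ (sCoinvKer_invariant ρ) with h | h
    · exfalso
      apply hv
      intro b
      have : ρ (sS b) v - v ∈ sCoinvKer ρ := Submodule.subset_span ⟨b, v, rfl⟩
      rw [h, Submodule.mem_bot, sub_eq_zero] at this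
      exact this
    · exact h
  have hmap := wh_coinv ψ hψlc hψne ρ h1 h2 Λ hΛ hΛ0
  rw [hco, Submodule.map_top] at hmap
  refine ⟨?_, hco⟩
  let φ : V →ₗ[ℂ] ↥(SSx K) := LinearMap.codRestrict _ (wh ρ Λ) fun v => by
    rw [← hmap]; exact ⟨v, rfl⟩
  have hφ : Function.Bijective φ := by
    constructor
    · intro a b hab
      exact LinearMap.ker_eq_bot.1 hker (congrArg Subtype.val hab)
    · rintro ⟨g, hg⟩
      have hg' := hg
      rw [← hmap] at hg'
      obtain ⟨v, hv⟩ := hg'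
      exact ⟨v, Subtype.ext hv⟩
  refine ⟨LinearEquiv.ofBijective φ hφ, fun g v => ?_⟩
  apply Subtype.ext
  exact heq g v

lemma subquot_irred {ρ : Rep K V} (c : CompSeries ρ) (i : ℕ) (hi : i < c.n) :
    GRep.Irred (GRep.subquot ρ (c.inv i) (c.inv (i + 1))) := by
  constructor
  · refine Submodule.Quotient.nontrivial_iff.2 ?_
    intro h
    refine absurd (c.lt i hi) (not_lt_of_ge ?_)
    intro w hw
    have : (⟨w, hw⟩ : ↥(c.W (i + 1))) ∈ (c.W i).comap (c.W (i + 1)).subtype := by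
      rw [h]; trivial
    exact this
  · intro U hU
    let A : Submodule ℂ ↥(c.W (i + 1)) := (c.W i).comap (c.W (i + 1)).subtype
    let C : Submodule ℂ V := (U.comap A.mkQ).map (c.W (i + 1)).subtype
    have hCinv : GRep.Invariant ρ C := by
      rintro g _ ⟨w, hw, rfl⟩
      exact ⟨GRep.sub ρ (c.inv (i + 1)) g w, hU g _ hw, rfl⟩
    have h1 : c.W i ≤ C := by
      intro w hw
      refine ⟨⟨w, (c.lt i hi).le hw⟩, ?_, rfl⟩
      have : A.mkQ ⟨w, (c.lt i hi).le hw⟩ = 0 := by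
        rw [Submodule.mkQ_apply, Submodule.Quotient.mk_eq_zero]; exact hw
      show A.mkQ _ ∈ U
      rw [this]; exact U.zero_mem
    have h2 : C ≤ c.W (i + 1) := by
      rintro _ ⟨w, hw, rfl⟩
      exact w.2
    rcases c.maximal i hi C hCinv h1 h2 with h | h
    · left
      rw [eq_bot_iff]
      intro x hx
      obtain ⟨w, rfl⟩ := Submodule.Quotient.mk_surjective _ x
      have : w.1 ∈ C := ⟨w, hx, rfl⟩
      rw [h] at this
      exact (Submodule.Quotient.mk_eq_zero A).2 this
    · right
      rw [eq_top_iff]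
      intro x _
      obtain ⟨w, rfl⟩ := Submodule.Quotient.mk_surjective _ x
      have : w.1 ∈ C := by rw [h]; exact w.2
      obtain ⟨w', hw', he⟩ := this
      have : w' = w := Subtype.ext he
      subst this
      exact hw'

/-- the `i`-th factor has trivial `S`-action -/
def STriv {ρ : Rep K V} (c : CompSeries ρ) (i : ℕ) : Prop :=
  ∀ w ∈ c.W (i + 1), ∀ b, ρ (sS b) w - w ∈ c.W i

lemma factor_cases (ψ : AddChar K ℂ) (hψlc : IsLocallyConstant (⇑ψ)) (hψne : ψ ≠ 1)
    {ρ : Rep K V} (h1 : SSm ρ) (h2 : TSm ρ) (c : CompSeries ρ) (i : ℕ) (hi : i < c.n) :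
    STriv c i ∨ (GRep.Iso (GRep.subquot ρ (c.inv i) (c.inv (i + 1))) (SRep ψ hψlc) ∧
      c.W (i + 1) ≤ c.W i ⊔ sCoinvKer ρ) := by
  set σ := GRep.subquot ρ (c.inv i) (c.inv (i + 1)) with hσ
  by_cases hS : sInv σ = ⊤
  · left
    intro w hw b
    have : (Submodule.Quotient.mk ⟨w, hw⟩ : ↥(c.W (i + 1)) ⧸ (c.W i).comap (c.W (i + 1)).subtype) ∈ sInv σ := by
      rw [hS]; trivial
    have h3 := this b
    have h4 : σ (sS b) (Submodule.Quotient.mk ⟨w, hw⟩) = Submodule.Quotient.mk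
      (GRep.sub ρ (c.inv (i + 1)) (sS b) ⟨w, hw⟩) := rfl
    rw [h4, Submodule.Quotient.eq] at h3
    exact h3
  · right
    obtain ⟨h3, h4⟩ := irred_iso ψ hψlc hψne σ (SSm_subquot ρ h1 _ _) (TSm_subquot ρ h2 _ _)
      (subquot_irred c i hi) hS
    refine ⟨h3, fun w hw => ?_⟩
    let A : Submodule ℂ ↥(c.W (i + 1)) := (c.W i).comap (c.W (i + 1)).subtype
    have key : sCoinvKer σ ≤ (((c.W i ⊔ sCoinvKer ρ).comap (c.W (i + 1)).subtype).map A.mkQ) := by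
      refine Submodule.span_le.2 ?_
      rintro _ ⟨b, x, rfl⟩
      obtain ⟨u, rfl⟩ := Submodule.Quotient.mk_surjective _ x
      refine ⟨GRep.sub ρ (c.inv (i + 1)) (sS b) u - u, ?_, rfl⟩
      exact Submodule.mem_sup_right (Submodule.subset_span ⟨b, u.1, rfl⟩)
    have h5 : (Submodule.Quotient.mk ⟨w, hw⟩ : ↥(c.W (i + 1)) ⧸ A) ∈ sCoinvKer σ := by
      rw [h4]; trivial
    obtain ⟨u, hu, he⟩ := key h5
    have he' : (Submodule.Quotient.mk u : ↥(c.W (i + 1)) ⧸ A) = Submodule.Quotient.mk ⟨w, hw⟩ := he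
    rw [Submodule.Quotient.eq] at he'
    have h6 : u.1 - w ∈ c.W i := he'
    have h7 : w = u.1 - (u.1 - w) := by abel
    rw [h7]
    exact Submodule.sub_mem _ hu (Submodule.mem_sup_left h6)

lemma psi_ne_zero (ψ : AddChar K ℂ) (b : K) : ψ b ≠ 0 := by
  intro h0
  have := psi_neg_mul ψ b
  rw [h0, mul_zero] at this
  exact zero_ne_one this

lemma exists_psi_ne (ψ : AddChar K ℂ) (hψne : ψ ≠ 1) : ∃ b, ψ b ≠ 1 := by
  by_contra! h
  exact hψne (by ext b; simpa using h b)

lemma SRep_triv (ψ : AddChar K ℂ) (hψlc : IsLocallyConstant (⇑ψ)) (hψne : ψ ≠ 1) (f : ↥(SSx K))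
    (hf : f ∈ sInv (SRep ψ hψlc)) : f = 0 := by
  apply Subtype.ext
  funext x
  obtain ⟨b, hb⟩ := exists_psi_ne ψ hψne
  have h1 := congrFun (congrArg Subtype.val (hf (b * ((x⁻¹ : Kˣ) : K)))) x
  have h2 : ψ b * f.1 x = f.1 x := by
    have : ψ (b * ((x⁻¹ : Kˣ) : K) * x) * f.1 (x * 1) = f.1 x := h1
    simpa using this
  by_contra hne
  exact hb (mul_right_cancel₀ hne (by rw [h2, one_mul]))

lemma not_iso_of_triv (ψ : AddChar K ℂ) (hψlc : IsLocallyConstant (⇑ψ)) (hψne : ψ ≠ 1)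
    {ρ : Rep K V} (c : CompSeries ρ) (i : ℕ) (hi : i < c.n) (ht : STriv c i) :
    ¬ GRep.Iso (GRep.subquot ρ (c.inv i) (c.inv (i + 1))) (SRep ψ hψlc) := by
  rintro ⟨e, he⟩
  have := (subquot_irred c i hi).1
  obtain ⟨x, hx⟩ := exists_ne (0 : ↥(c.W (i + 1)) ⧸ (c.W i).comap (c.W (i + 1)).subtype)
  apply hx
  rw [← e.map_eq_zero_iff]
  apply SRep_triv ψ hψlc hψne
  intro b
  rw [← he]
  congr 1
  obtain ⟨w, rfl⟩ := Submodule.Quotient.mk_surjective _ x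
  have h4 : GRep.subquot ρ (c.inv i) (c.inv (i + 1)) (sS b) (Submodule.Quotient.mk w) = Submodule.Quotient.mk
      (GRep.sub ρ (c.inv (i + 1)) (sS b) w) := rfl
  rw [h4, Submodule.Quotient.eq]
  exact ht w.1 w.2 b

lemma deg_one_index (ψ : AddChar K ℂ) (hψlc : IsLocallyConstant (⇑ψ)) (hψne : ψ ≠ 1)
    {ρ : Rep K V} (h1 : SSm ρ) (h2 : TSm ρ) (c : CompSeries ρ) (hdeg : c.deg (SRep ψ hψlc) = 1) :
    ∃ i < c.n, GRep.Iso (GRep.subquot ρ (c.inv i) (c.inv (i + 1))) (SRep ψ hψlc) ∧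
      ¬ STriv c i ∧ ∀ j < c.n, j ≠ i → STriv c j := by
  rw [CompSeries.deg, Finset.card_eq_one] at hdeg
  obtain ⟨i, hi⟩ := hdeg
  have hmem : ∀ j : Fin c.n, GRep.Iso (GRep.subquot ρ (c.inv j.1) (c.inv (j.1 + 1))) (SRep ψ hψlc)
      ↔ j = i := by
    intro j
    have := Finset.ext_iff.1 hi j
    simpa using this
  have hii := (hmem i).2 rfl
  refine ⟨i.1, i.2, hii, fun ht => not_iso_of_triv ψ hψlc hψne c i.1 i.2 ht hii, fun j hj hne => ?_⟩
  rcases factor_cases ψ hψlc hψne h1 h2 c j hj with h | h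
  · exact h
  · exact absurd (congrArg Fin.val ((hmem ⟨j, hj⟩).1 h.1)) hne

lemma wh_step (ψ : AddChar K ℂ) (hψne : ψ ≠ 1) {ρ : Rep K V} (c : CompSeries ρ) (i : ℕ)
    (ht : STriv c i) (Λ : V →ₗ[ℂ] ℂ) (hΛ : IsWh ρ ψ Λ) (h0 : ∀ w ∈ c.W i, Λ w = 0) :
    ∀ w ∈ c.W (i + 1), Λ w = 0 := by
  intro w hw
  obtain ⟨b, hb⟩ := exists_psi_ne ψ hψne
  have h1 := h0 _ (ht w hw b)
  rw [map_sub, hΛ, sub_eq_zero] at h1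
  by_contra hne
  exact hb (mul_right_cancel₀ hne (by rw [h1, one_mul]))

lemma wh_prop (ψ : AddChar K ℂ) (hψlc : IsLocallyConstant (⇑ψ)) (hψne : ψ ≠ 1)
    {ρ : Rep K V} (h1 : SSm ρ) (h2 : TSm ρ) (c : CompSeries ρ) (hdeg : c.deg (SRep ψ hψlc) = 1)
    (Λ₁ Λ₂ : V →ₗ[ℂ] ℂ) (hΛ₁ : IsWh ρ ψ Λ₁) (hΛ₂ : IsWh ρ ψ Λ₂) (hne : Λ₁ ≠ 0) :
    ∃ a : ℂ, Λ₂ = a • Λ₁ := by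
  obtain ⟨i, hi, ⟨e, he⟩, -, hj⟩ := deg_one_index ψ hψlc hψne h1 h2 c hdeg
  have hlow : ∀ Λ : V →ₗ[ℂ] ℂ, IsWh ρ ψ Λ → ∀ k ≤ i, ∀ w ∈ c.W k, Λ w = 0 := by
    intro Λ hΛ k
    induction k with
    | zero => intro _ w hw; rw [c.bot] at hw; rw [(Submodule.mem_bot ℂ).1 hw, map_zero]
    | succ k ih =>
      intro hk
      exact wh_step ψ hψne c k (hj k (by omega) (by omega)) Λ hΛ (ih (by omega))
  have hhigh : ∀ Λ : V →ₗ[ℂ] ℂ, IsWh ρ ψ Λ → (∀ w ∈ c.W (i + 1), Λ w = 0) → Λ = 0 := by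
    intro Λ hΛ h0
    have : ∀ k, i + 1 ≤ k → k ≤ c.n → ∀ w ∈ c.W k, Λ w = 0 := by
      intro k hk
      induction k, hk using Nat.le_induction with
      | base => exact fun _ => h0
      | succ k hk ih =>
        intro hkn
        exact wh_step ψ hψne c k (hj k (by omega) (by omega)) Λ hΛ (ih (by omega))
    ext v
    exact this c.n hi le_rfl v (by rw [c.top]; trivial)
  let A : Submodule ℂ ↥(c.W (i + 1)) := (c.W i).comap (c.W (i + 1)).subtype
  let D : (Λ : V →ₗ[ℂ] ℂ) → IsWh ρ ψ Λ → (↥(SSx K) →ₗ[ℂ] ℂ) := fun Λ hΛ =>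
    (A.liftQ (Λ.comp (c.W (i + 1)).subtype) (fun w hw => hlow Λ hΛ i le_rfl _ hw)).comp
      e.symm.toLinearMap
  have hD : ∀ Λ hΛ (w : ↥(c.W (i + 1))), D Λ hΛ (e (Submodule.Quotient.mk w)) = Λ w := by
    intro Λ hΛ w
    simp only [D, LinearMap.comp_apply, LinearEquiv.coe_coe, LinearEquiv.symm_apply_apply]
    exact Submodule.liftQ_apply _ _ _
  have hDwh : ∀ Λ hΛ, IsWh (SRep ψ hψlc) ψ (D Λ hΛ) := by
    intro Λ hΛ b f
    obtain ⟨x, rfl⟩ := e.surjective f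
    obtain ⟨w, rfl⟩ := Submodule.Quotient.mk_surjective _ x
    rw [← he]
    have h4 : GRep.subquot ρ (c.inv i) (c.inv (i + 1)) (sS b) (Submodule.Quotient.mk w) = Submodule.Quotient.mk
      (GRep.sub ρ (c.inv (i + 1)) (sS b) w) := rfl
    rw [h4, hD Λ hΛ, hD Λ hΛ, ← hΛ]
    rfl
  obtain ⟨u, hu, hu0⟩ : ∃ u ∈ c.W (i + 1), Λ₁ u ≠ 0 := by
    by_contra! h
    exact hne (hhigh Λ₁ hΛ₁ h)
  refine ⟨Λ₂ u / Λ₁ u, ?_⟩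
  rw [← sub_eq_zero]
  apply hhigh
  · intro b v
    simp [hΛ₁ b v, hΛ₂ b v]; ring
  · intro w hw
    have := SRep_wh_prop ψ hψlc hψne _ _ (hDwh Λ₁ hΛ₁) (hDwh Λ₂ hΛ₂)
      (e (Submodule.Quotient.mk ⟨u, hu⟩)) (e (Submodule.Quotient.mk ⟨w, hw⟩))
    rw [hD Λ₁ hΛ₁, hD Λ₂ hΛ₂, hD Λ₁ hΛ₁, hD Λ₂ hΛ₂] at this
    simp only [LinearMap.sub_apply, LinearMap.smul_apply, smul_eq_mul]
    simp only at this
    field_simp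
    linear_combination this

/-- summary of the Kirillov model of a degree one module -/
lemma exists_kirillov (ψ : AddChar K ℂ) (hψlc : IsLocallyConstant (⇑ψ)) (hψne : ψ ≠ 1)
    {ρ : Rep K V} (h1 : SSm ρ) (h2 : TSm ρ) (c : CompSeries ρ) (hdeg : c.deg (SRep ψ hψlc) = 1) :
    ∃ Λ : V →ₗ[ℂ] ℂ, IsWh ρ ψ Λ ∧ Λ ≠ 0 ∧ LinearMap.ker (wh ρ Λ) = sInv ρ := by
  obtain ⟨i, hi, -, hns, hj⟩ := deg_one_index ψ hψlc hψne h1 h2 c hdeg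
  obtain ⟨v, hv⟩ : ∃ v, v ∉ sInv ρ := by
    by_contra! h
    apply hns
    intro w hw b
    rw [h w b, sub_self]
    exact Submodule.zero_mem _
  obtain ⟨Λ, hΛ, x, hx⟩ := exists_wh ψ hψlc hψne ρ h1 v hv
  have hΛ0 : Λ ≠ 0 := by rintro rfl; exact hx rfl
  refine ⟨Λ, hΛ, hΛ0, le_antisymm ?_ ?_⟩
  · intro u hu
    by_contra hus
    obtain ⟨Λ', hΛ', y, hy⟩ := exists_wh ψ hψlc hψne ρ h1 u hus
    obtain ⟨a, rfl⟩ := wh_prop ψ hψlc hψne h1 h2 c hdeg Λ Λ' hΛ hΛ' hΛ0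
    have := congrFun (LinearMap.mem_ker.1 hu) y
    simp only [wh_apply, Pi.zero_apply] at this
    exact hy (by simp [this])
  · intro u hu
    rw [LinearMap.mem_ker]
    funext y
    obtain ⟨b, hb⟩ := exists_psi_ne ψ hψne
    have h3 : ρ (xT y) u ∈ sInv ρ := sInv_invariant ρ _ _ hu
    have h4 := congrArg Λ (h3 b)
    rw [hΛ] at h4
    by_contra hne
    exact hb (mul_right_cancel₀ hne (by rw [one_mul]; exact h4))

end Deg


section Fin

open Filter Topology Aff

lemma aeval_inj {C : Type*} [AddCommGroup C] [Module ℂ C] (z : Module.End ℂ C)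
    (h : ∀ a : ℂ, Function.Bijective (z - algebraMap ℂ (Module.End ℂ C) a))
    (p : Polynomial ℂ) (hp : p ≠ 0) :
    Function.Injective (Polynomial.aeval z p) := by
  have hs := IsAlgClosed.splits p
  rw [hs.eq_prod_roots]
  have hlead : p.leadingCoeff ≠ 0 := by simpa using hp
  generalize p.leadingCoeff = a at hlead
  generalize p.roots = m
  rw [map_mul, Polynomial.aeval_C]
  have h1 : Function.Injective (Polynomial.aeval z (m.map fun r => Polynomial.X - Polynomial.C r).prod) := by
    induction m using Multiset.induction_on with
    | empty =>
      rw [Multiset.map_zero, Multiset.prod_zero, map_one]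
      exact Function.injective_id
    | cons r m ih =>
      rw [Multiset.map_cons, Multiset.prod_cons, map_mul]
      rw [Module.End.mul_eq_comp, LinearMap.coe_comp]
      refine Function.Injective.comp ?_ ih
      have := (h r).1
      simpa using this
  rw [Module.End.mul_eq_comp, LinearMap.coe_comp]
  refine Function.Injective.comp ?_ h1
  intro x y hxy
  have : a • x = a • y := by simpa [Module.algebraMap_end_apply] using hxy
  exact smul_right_injective _ hlead this

lemma dixmier {C : Type*} [AddCommGroup C] [Module ℂ C] (z : Module.End ℂ C) [Nontrivial C]
    (hr : Module.rank ℂ C ≤ Cardinal.aleph0) :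
    ∃ a : ℂ, ¬ Function.Bijective (z - algebraMap ℂ (Module.End ℂ C) a) := by
  by_contra! h
  obtain ⟨v, hv⟩ := exists_ne (0 : C)
  choose w hw using fun a => (h a).2 v
  have hli : LinearIndependent ℂ w := by
    rw [linearIndependent_iff']
    intro s g hsum i hi
    let P : Polynomial ℂ := ∑ i ∈ s, Polynomial.C (g i) * ∏ j ∈ s.erase i, (Polynomial.X - Polynomial.C j)
    have hP : Polynomial.aeval z P v = 0 := by
      have h1 : ∀ i ∈ s, Polynomial.aeval z (∏ j ∈ s, (Polynomial.X - Polynomial.C j)) (w i) =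
          Polynomial.aeval z (∏ j ∈ s.erase i, (Polynomial.X - Polynomial.C j)) v := by
        intro i hi
        rw [← Finset.prod_erase_mul _ _ hi, map_mul, Module.End.mul_apply]
        congr 1
        rw [← hw i]
        simp
      have h2 := congrArg (Polynomial.aeval z (∏ j ∈ s, (Polynomial.X - Polynomial.C j))) hsum
      rw [map_zero, map_sum] at h2
      rw [← h2]
      simp only [P, map_sum, LinearMap.sum_apply, map_mul, Module.End.mul_apply]
      refine Finset.sum_congr rfl fun i hi => ?_
      rw [map_smul, h1 i hi, Polynomial.aeval_C, Module.algebraMap_end_apply]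
    have hP0 : P = 0 := by
      by_contra hne
      exact hv (aeval_inj z h P hne (by rw [hP, map_zero]))
    have h3 := congrArg (Polynomial.eval i) hP0
    simp only [P, Polynomial.eval_finset_sum, Polynomial.eval_mul, Polynomial.eval_C,
      Polynomial.eval_prod, Polynomial.eval_sub, Polynomial.eval_X, Polynomial.eval_zero] at h3
    rw [Finset.sum_eq_single i] at h3
    · rcases mul_eq_zero.1 h3 with h3 | h3
      · exact h3
      · exfalso
        rw [Finset.prod_eq_zero_iff] at h3
        obtain ⟨j, hj, hij⟩ := h3
        exact (Finset.mem_erase.1 hj).1 (sub_eq_zero.1 hij).symm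
    · intro b hb hbi
      rw [Finset.prod_eq_zero (i := i) (Finset.mem_erase.2 ⟨hbi.symm, hi⟩) (by simp), mul_zero]
    · intro hi'; exact absurd hi hi'
  have hc := hli.cardinal_lift_le_rank
  have h4 : Cardinal.lift.{0} (Module.rank ℂ C) ≤ Cardinal.aleph0 := by simpa using hr
  have h5 := hc.trans h4
  rw [Cardinal.mk_complex] at h5
  simp only [Cardinal.lift_continuum] at h5
  exact absurd h5 (not_le_of_gt Cardinal.aleph0_lt_continuum)

variable {K : Type*} [NontriviallyNormedField K] [IsUltrametricDist K] [ProperSpace K]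

lemma orbit_countable {C : Type*} [AddCommGroup C] [Module ℂ C] (τ : Representation ℂ Kˣ C)
    (v : C) (h : ∀ᶠ u in 𝓝 (1 : Kˣ), τ u v = v) : (Set.range fun u => τ u v).Countable := by
  haveI : SecondCountableTopology K := inferInstance
  haveI : SecondCountableTopology Kᵐᵒᵖ := MulOpposite.opHomeomorph.symm.isEmbedding.secondCountableTopology
  haveI : SecondCountableTopology Kˣ := Units.isEmbedding_embedProduct.secondCountableTopology
  obtain ⟨D, hDc, hDd⟩ := TopologicalSpace.exists_countable_dense Kˣ
  refine (hDc.image fun u => τ u v).mono ?_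
  rintro _ ⟨u, rfl⟩
  have h1 : ∀ᶠ u' in 𝓝 u, τ (u⁻¹ * u') v = v := by
    have hc : Tendsto (fun u' : Kˣ => u⁻¹ * u') (𝓝 u) (𝓝 1) := by
      have : Continuous fun u' : Kˣ => u⁻¹ * u' := by fun_prop
      simpa using this.tendsto u
    exact hc.eventually h
  obtain ⟨d, hdD, hd⟩ := hDd.inter_nhds_nonempty h1
  refine ⟨d, hdD, ?_⟩
  have : τ u (τ (u⁻¹ * d) v) = τ u v := congrArg (τ u) hd
  rw [← Module.End.mul_apply, ← map_mul, mul_inv_cancel_left] at this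
  exact this

lemma tau_comm {C : Type*} [AddCommGroup C] [Module ℂ C] (τ : Representation ℂ Kˣ C) (a b : Kˣ)
    (v : C) : τ a (τ b v) = τ b (τ a v) := by
  rw [← Module.End.mul_apply, ← map_mul, mul_comm, map_mul, Module.End.mul_apply]

lemma tirr_fd {C : Type*} [AddCommGroup C] [Module ℂ C] (τ : Representation ℂ Kˣ C)
    (hsm : ∀ v, ∀ᶠ u in 𝓝 (1 : Kˣ), τ u v = v) (hirr : GRep.Irred τ) :
    FiniteDimensional ℂ C := by
  haveI := hirr.1
  obtain ⟨v, hv⟩ := exists_ne (0 : C)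
  have hspan : Submodule.span ℂ (Set.range fun u => τ u v) = ⊤ := by
    have hinv : GRep.Invariant τ (Submodule.span ℂ (Set.range fun u => τ u v)) := by
      intro g w hw
      have : Submodule.span ℂ (Set.range fun u => τ u v) ≤
          (Submodule.span ℂ (Set.range fun u => τ u v)).comap (τ g) := by
        refine Submodule.span_le.2 ?_
        rintro _ ⟨u, rfl⟩
        exact Submodule.subset_span ⟨g * u, by simp [map_mul]⟩
      exact this hw
    rcases hirr.2 _ hinv with h | h
    · exfalso
      rw [Submodule.span_eq_bot] at h
      exact hv (h v ⟨1, by simp⟩)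
    · exact h
  have hr : Module.rank ℂ C ≤ Cardinal.aleph0 := by
    rw [← rank_top, ← hspan]
    exact (rank_span_le _).trans (Cardinal.le_aleph0_iff_set_countable.2 (orbit_countable τ v (hsm v)))
  have hscal : ∀ u, ∃ a : ℂ, ∀ x, τ u x = a • x := by
    intro u
    obtain ⟨a, ha⟩ := dixmier (τ u) hr
    refine ⟨a, ?_⟩
    set z : Module.End ℂ C := τ u - algebraMap ℂ (Module.End ℂ C) a with hz
    have hzap : ∀ x, z x = τ u x - a • x := by
      intro x; simp [hz, Module.algebraMap_end_apply]
    have hzc : GRep.Equivariant τ τ z := by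
      intro g x
      rw [hzap, hzap, map_sub, map_smul, tau_comm]
    have h1 := hirr.2 _ (GRep.ker_invariant τ τ z hzc)
    have h2 := hirr.2 _ (GRep.range_invariant τ τ z hzc)
    have h3 : z = 0 := by
      rcases h1 with h1 | h1
      · rcases h2 with h2 | h2
        · exact LinearMap.range_eq_bot.1 h2
        · exact absurd ⟨LinearMap.ker_eq_bot.1 h1, LinearMap.range_eq_top.1 h2⟩ ha
      · exact LinearMap.ker_eq_top.1 h1
    intro x
    have := hzap x
    rw [h3, LinearMap.zero_apply] at this
    exact (sub_eq_zero.1 this.symm)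
  have hinv : GRep.Invariant τ (Submodule.span ℂ {v}) := by
    intro g w hw
    obtain ⟨a, ha⟩ := hscal g
    rw [ha]
    exact Submodule.smul_mem _ _ hw
  rcases hirr.2 (Submodule.span ℂ {v}) hinv with h | h
  · rw [Submodule.span_singleton_eq_bot] at h
    exact absurd h hv
  · exact ⟨⟨{v}, by simpa using h⟩⟩

variable {V : Type*} [AddCommGroup V] [Module ℂ V]

lemma striv_fd {ρ : Rep K V} (h2 : TSm ρ) (c : CompSeries ρ) (i : ℕ) (hi : i < c.n)
    (ht : STriv c i) :
    FiniteDimensional ℂ (↥(c.W (i + 1)) ⧸ (c.W i).comap (c.W (i + 1)).subtype) := by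
  have hirr := subquot_irred c i hi
  have hsm := TSm_subquot ρ h2 (c.inv i) (c.inv (i + 1))
  apply tirr_fd ((GRep.subquot ρ (c.inv i) (c.inv (i + 1))).comp xTHom) hsm
  refine ⟨hirr.1, fun U hU => hirr.2 U ?_⟩
  intro g x hx
  have hS : ∀ b x, GRep.subquot ρ (c.inv i) (c.inv (i + 1)) (sS b) x = x := by
    intro b x
    obtain ⟨w, rfl⟩ := Submodule.Quotient.mk_surjective _ x
    have h4 : GRep.subquot ρ (c.inv i) (c.inv (i + 1)) (sS b) (Submodule.Quotient.mk w) = Submodule.Quotient.mk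
      (GRep.sub ρ (c.inv (i + 1)) (sS b) w) := rfl
    rw [h4, Submodule.Quotient.eq]
    exact ht w.1 w.2 b
  rw [aff_decomp' g, map_mul, Module.End.mul_apply, hS]
  exact hU g.t x hx

lemma coinv_fd (ψ : AddChar K ℂ) (hψlc : IsLocallyConstant (⇑ψ)) (hψne : ψ ≠ 1)
    {ρ : Rep K V} (h1 : SSm ρ) (h2 : TSm ρ) (c : CompSeries ρ) :
    FiniteDimensional ℂ (V ⧸ sCoinvKer ρ) := by
  have key : ∀ i ≤ c.n, ((c.W i).map (sCoinvKer ρ).mkQ).FG := by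
    intro i
    induction i with
    | zero => intro _; rw [c.bot, Submodule.map_bot]; exact Submodule.fg_bot
    | succ i ih =>
      intro hi
      have hIH := ih (by omega)
      rcases factor_cases ψ hψlc hψne h1 h2 c i hi with h | h
      · have hfd := striv_fd h2 c i hi h
        obtain ⟨Q, hQ⟩ := ((c.W i).comap (c.W (i + 1)).subtype).exists_isCompl
        have hQfd : FiniteDimensional ℂ Q :=
          Module.Finite.equiv (Submodule.quotientEquivOfIsCompl _ Q hQ)
        have hQfg : Q.FG := Module.Finite.iff_fg.1 hQfd
        have hle : c.W (i + 1) = c.W i ⊔ Q.map (c.W (i + 1)).subtype := by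
          apply le_antisymm
          · intro w hw
            have : (⟨w, hw⟩ : ↥(c.W (i + 1))) ∈ ((c.W i).comap (c.W (i + 1)).subtype) ⊔ Q := by
              rw [hQ.sup_eq_top]; trivial
            obtain ⟨a, ha, b, hb, hab⟩ := Submodule.mem_sup.1 this
            have : a.1 + b.1 = w := congrArg Subtype.val hab
            rw [← this]
            exact Submodule.add_mem_sup ha ⟨b, hb, rfl⟩
          · refine sup_le (c.lt i hi).le ?_
            rintro _ ⟨w, _, rfl⟩
            exact w.2
        rw [hle, Submodule.map_sup]
        exact hIH.sup ((hQfg.map _).map _)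
      · have : (c.W (i + 1)).map (sCoinvKer ρ).mkQ = (c.W i).map (sCoinvKer ρ).mkQ := by
          apply le_antisymm
          · refine (Submodule.map_mono h.2).trans ?_
            rw [Submodule.map_sup]
            refine sup_le le_rfl ?_
            rintro _ ⟨w, hw, rfl⟩
            have : (sCoinvKer ρ).mkQ w = 0 := by simpa using hw
            rw [this]; exact Submodule.zero_mem _
          · exact Submodule.map_mono (c.lt i hi).le
        rw [this]; exact hIH
  have := key c.n le_rfl
  rw [c.top, Submodule.map_top, Submodule.range_mkQ] at this
  exact ⟨this⟩

lemma exists_common_eig {C : Type*} [AddCommGroup C] [Module ℂ C] [FiniteDimensional ℂ C]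
    [Nontrivial C] (τ : Representation ℂ Kˣ C) : ∃ v ≠ 0, ∀ u, ∃ a : ℂ, τ u v = a • v := by
  obtain ⟨N, ⟨hN1, hN2⟩, hmin⟩ := WellFounded.has_min
    (wellFounded_lt (α := Submodule ℂ C)) {N | N ≠ ⊥ ∧ GRep.Invariant τ N}
    ⟨⊤, top_ne_bot, fun _ _ _ => trivial⟩
  obtain ⟨v, hv, hv0⟩ := Submodule.exists_mem_ne_zero_of_ne_bot hN1
  refine ⟨v, hv0, fun u => ?_⟩
  haveI : Nontrivial N := Submodule.nontrivial_iff_ne_bot.2 hN1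
  obtain ⟨a, ha⟩ := Module.End.exists_eigenvalue (GRep.sub τ hN2 u)
  obtain ⟨w, hw⟩ := ha.exists_hasEigenvector
  refine ⟨a, ?_⟩
  let N' : Submodule ℂ C := N ⊓ LinearMap.ker (τ u - a • LinearMap.id)
  have hmem : ∀ x, x ∈ N' ↔ x ∈ N ∧ τ u x = a • x := by
    intro x; simp [N', sub_eq_zero]
  have hN' : GRep.Invariant τ N' := by
    intro g x hx
    rw [hmem] at hx ⊢
    exact ⟨hN2 g x hx.1, by rw [tau_comm, hx.2, map_smul]⟩
  have hne : N' ≠ ⊥ := by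
    rw [Submodule.ne_bot_iff]
    refine ⟨w.1, (hmem _).2 ⟨w.2, ?_⟩, fun h => hw.2 (Subtype.ext h)⟩
    exact congrArg Subtype.val hw.apply_eq_smul
  have hle : N ≤ N' := by
    by_contra hh
    exact hmin N' ⟨hne, hN'⟩ (lt_of_le_of_ne inf_le_left (fun h => hh h.ge))
  exact ((hmem v).1 (hle hv)).2

lemma perfect_sInv (ψ : AddChar K ℂ) (hψlc : IsLocallyConstant (⇑ψ)) (hψne : ψ ≠ 1)
    {ρ : Rep K V} (h1 : SSm ρ) (h2 : TSm ρ) (c : CompSeries ρ) (hp : Perfect ρ) :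
    sInv ρ = ⊥ := by
  haveI := coinv_fd ψ hψlc hψne h1 h2 c
  have hinj : Function.Injective ((sCoinvKer ρ).mkQ.comp (sInv ρ).subtype) := by
    rw [injective_iff_map_eq_zero]
    intro x hx
    have h3 : x.1 ∈ sCoinvKer ρ := by simpa using hx
    exact Subtype.ext (sInv_sCoinv ψ ρ h1 x.1 x.2 hψlc h3)
  haveI : FiniteDimensional ℂ ↥(sInv ρ) := Module.Finite.of_injective _ hinj
  by_contra hne
  haveI : Nontrivial ↥(sInv ρ) := Submodule.nontrivial_iff_ne_bot.2 hne
  obtain ⟨v, hv0, hv⟩ := exists_common_eig (sInvT ρ)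
  choose a ha using hv
  have hv1 : v.1 ≠ 0 := fun h => hv0 (Subtype.ext h)
  have ha' : ∀ u, ρ (xT u) v.1 = a u • v.1 := fun u => congrArg Subtype.val (ha u)
  have hmul : ∀ u w, a (u * w) = a u * a w := by
    intro u w
    apply smul_left_injective ℂ hv0
    show a (u * w) • v = (a u * a w) • v
    rw [← ha, map_mul, Module.End.mul_apply, ha w, map_smul, ha u, smul_smul, mul_comm]
  have hone : a 1 = 1 := by
    apply smul_left_injective ℂ hv0
    show a 1 • v = (1 : ℂ) • v
    rw [← ha, map_one, one_smul]; rfl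
  let χ : Kˣ →* ℂˣ := MonoidHom.toHomUnits ⟨⟨a, hone⟩, hmul⟩
  have hχ : ∀ u, (χ u : ℂ) = a u := fun u => rfl
  have hsm : SmoothMulChar χ := by
    have hnh : {u : Kˣ | χ u = 1} ∈ 𝓝 (1 : Kˣ) := by
      filter_upwards [h2 v.1] with u hu
      apply Units.ext
      rw [hχ, Units.val_one]
      apply smul_left_injective ℂ hv1
      show a u • v.1 = (1 : ℂ) • v.1
      rw [← ha', hu, one_smul]
    exact Subgroup.isOpen_of_mem_nhds χ.ker (g := 1) hnh
  have : v.1 ∈ tEigen ρ χ := fun u => by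
    show ρ (xT u) v.1 = _
    rw [ha', hχ]
  rw [hp χ hsm] at this
  exact hv1 this

end Fin


section Germ

open Filter Topology Aff

variable {K : Type*} [NontriviallyNormedField K] [IsUltrametricDist K] [ProperSpace K]
variable {V : Type*} [AddCommGroup V] [Module ℂ V]
variable {X : Type*} [AddCommGroup X] [Module ℂ X]

lemma wh_xT (ρ : Rep K V) (Λ : V →ₗ[ℂ] ℂ) (u x : Kˣ) (m : V) :
    wh ρ Λ (ρ (xT u) m) x = wh ρ Λ m (x * u) := by
  rw [wh_apply, wh_apply, xT_mul, rho_mul]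

/-- a finite dimensional space of functions vanishing near zero does so uniformly -/
lemma unif_zero [FiniteDimensional ℂ X] (F : X →ₗ[ℂ] (Kˣ → ℂ))
    (h : ∀ y, ∀ᶠ x in gZ K, F y x = 0) : ∀ᶠ x in gZ K, ∀ y, F y x = 0 := by
  let b := Module.finBasis ℂ X
  have h1 : ∀ᶠ x in gZ K, ∀ i, F (b i) x = 0 := eventually_all.2 fun i => h (b i)
  filter_upwards [h1] with x hx y
  have : (LinearMap.proj x).comp F = (0 : X →ₗ[ℂ] ℂ) := b.ext fun i => by simpa using hx i
  exact LinearMap.congr_fun this y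

lemma exists_germ [FiniteDimensional ℂ X] (ρ : Rep K V) (h2 : TSm ρ) (Λ : V →ₗ[ℂ] ℂ)
    (τ : Representation ℂ Kˣ X) (q : V →ₗ[ℂ] X) (hq : Function.Surjective q)
    (hqT : ∀ u v, q (ρ (xT u) v) = τ u (q v))
    (hker : ∀ m, q m = 0 → ∀ᶠ x in gZ K, wh ρ Λ m x = 0) :
    ∃ L : X →ₗ[ℂ] ℂ, ∀ m, ∀ᶠ x in gZ K, wh ρ Λ m x = L (τ x (q m)) := by
  obtain ⟨s, hs⟩ := LinearMap.exists_rightInverse_of_surjective q (LinearMap.range_eq_top.2 hq)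
  have hs' : ∀ y, q (s y) = y := fun y => LinearMap.congr_fun hs y
  obtain ⟨ϖ₀, hϖ0, hϖ1⟩ := NormedField.exists_norm_lt_one K
  have hϖne : ϖ₀ ≠ 0 := norm_pos_iff.1 hϖ0
  let ϖ : Kˣ := Units.mk0 ϖ₀ hϖne
  have hϖ : ‖(ϖ : K)‖ = ‖ϖ₀‖ := rfl
  -- uniform agreement
  have hunif : ∃ ε > 0, ∀ u ∈ {x : Kˣ | ‖ϖ₀‖ ≤ ‖(x : K)‖ ∧ ‖(x : K)‖ ≤ 1}, ∀ y, ∀ x : Kˣ, ‖(x : K)‖ < ε →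
      wh ρ Λ (s y) (x * u) = wh ρ Λ (s (τ u y)) x := by
    refine (isCompact_annulus (K := K) ‖ϖ₀‖ 1 hϖ0).induction_on
      (p := fun S => ∃ ε > 0, ∀ u ∈ S, ∀ y, ∀ x : Kˣ, ‖(x : K)‖ < ε →
      wh ρ Λ (s y) (x * u) = wh ρ Λ (s (τ u y)) x) ⟨1, one_pos, fun u hu => hu.elim⟩ ?_ ?_ ?_
    · rintro S T hST ⟨ε, hε, H⟩
      exact ⟨ε, hε, fun u hu => H u (hST hu)⟩
    · rintro S T ⟨ε, hε, H⟩ ⟨ε', hε', H'⟩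
      refine ⟨min ε ε', lt_min hε hε', ?_⟩
      rintro u (hu | hu) y x hx
      · exact H u hu y x (hx.trans_le (min_le_left _ _))
      · exact H' u hu y x (hx.trans_le (min_le_right _ _))
    · intro u₀ _
      have hz : ∀ᶠ x in gZ K, ∀ y, (wh ρ Λ ∘ₗ (ρ (xT u₀) ∘ₗ s - s ∘ₗ τ u₀)) y x = 0 := by
        apply unif_zero
        intro y
        apply hker
        simp [hs', hqT]
      obtain ⟨ε, hε, H⟩ := gZ_iff.1 hz
      let b := Module.finBasis ℂ X
      have hloc : ∀ᶠ u in 𝓝 (1 : Kˣ), ∀ i, ρ (xT u) (s (b i)) = s (b i) :=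
        eventually_all.2 fun i => h2 _
      have hc : Tendsto (fun u : Kˣ => u₀⁻¹ * u) (𝓝 u₀) (𝓝 1) := by
        have : Continuous fun u : Kˣ => u₀⁻¹ * u := by fun_prop
        simpa using this.tendsto u₀
      refine ⟨{u | ∀ i, ρ (xT (u₀⁻¹ * u)) (s (b i)) = s (b i)}, ?_, ε, hε, ?_⟩
      · exact mem_nhdsWithin_of_mem_nhds (hc.eventually hloc)
      · intro u hu y x hx
        have h3 : ∀ y, ρ (xT u) (s y) = ρ (xT u₀) (s y) := by
          have : ρ (xT (u₀⁻¹ * u)) ∘ₗ s = s := b.ext fun i => hu i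
          intro y
          have h4 := LinearMap.congr_fun this y
          conv_rhs => rw [← h4]
          rw [LinearMap.comp_apply, ← rho_mul, ← xT_mul, mul_inv_cancel_left]
        have h5 : τ u y = τ u₀ y := by
          have := congrArg q (h3 y)
          rwa [hqT, hqT, hs'] at this
        have h6 := H x hx y
        simp only [LinearMap.comp_apply, LinearMap.sub_apply, map_sub, Pi.sub_apply] at h6
        rw [← wh_xT, h3, h5]
        exact sub_eq_zero.1 h6
  obtain ⟨ε, hε, H⟩ := hunif
  obtain ⟨x₁, hx1, hx2⟩ := NormedField.exists_norm_lt K hε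
  have hx1 : x₁ ≠ 0 := norm_pos_iff.1 hx1
  let x₀ : Kˣ := Units.mk0 x₁ hx1
  have hx₀ : ‖(x₀ : K)‖ < ε := hx2
  have key : ∀ N : ℕ, ∀ u : Kˣ, ‖ϖ₀‖ ^ N ≤ ‖(u : K)‖ → ‖(u : K)‖ ≤ 1 → ∀ y,
      wh ρ Λ (s y) (x₀ * u) = wh ρ Λ (s (τ u y)) x₀ := by
    intro N
    induction N with
    | zero =>
      intro u h1 h2 y
      rw [pow_zero] at h1
      exact H u ⟨hϖ1.le.trans h1, h2⟩ y x₀ hx₀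
    | succ N ih =>
      intro u h1 h2 y
      by_cases hu : ‖ϖ₀‖ ≤ ‖(u : K)‖
      · exact H u ⟨hu, h2⟩ y x₀ hx₀
      · push Not at hu
        have hn : ‖((u * ϖ⁻¹ : Kˣ) : K)‖ = ‖(u : K)‖ / ‖ϖ₀‖ := by
          rw [Units.val_mul, norm_mul, Units.val_inv_eq_inv_val, norm_inv, hϖ, div_eq_mul_inv]
        have h3 : ‖ϖ₀‖ ^ N ≤ ‖((u * ϖ⁻¹ : Kˣ) : K)‖ := by
          rw [hn, le_div_iff₀ hϖ0, ← pow_succ]; exact h1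
        have h4 : ‖((u * ϖ⁻¹ : Kˣ) : K)‖ ≤ 1 := by
          rw [hn, div_le_one hϖ0]; exact hu.le
        have h5 := ih (u * ϖ⁻¹) h3 h4 (τ ϖ y)
        have h6 := H ϖ ⟨le_rfl, hϖ1.le⟩ y (x₀ * (u * ϖ⁻¹)) (by
          rw [Units.val_mul, norm_mul]
          calc ‖(x₀ : K)‖ * ‖((u * ϖ⁻¹ : Kˣ) : K)‖ ≤ ‖(x₀ : K)‖ * 1 := by gcongr
            _ < ε := by rw [mul_one]; exact hx₀)
        rw [h5] at h6
        have e1 : x₀ * (u * ϖ⁻¹) * ϖ = x₀ * u := by group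
        have e2 : τ (u * ϖ⁻¹) (τ ϖ y) = τ u y := by
          rw [← Module.End.mul_apply, ← map_mul]; congr 2; group
        rw [e1, e2] at h6
        exact h6
  refine ⟨(LinearMap.proj x₀) ∘ₗ wh ρ Λ ∘ₗ s ∘ₗ τ x₀⁻¹, fun m => ?_⟩
  have h7 : ∀ᶠ x in gZ K, wh ρ Λ (m - s (q m)) x = 0 := hker _ (by rw [map_sub, hs', sub_self])
  have h8 : ∀ᶠ x : Kˣ in gZ K, ‖(x : K)‖ < ‖(x₀ : K)‖ :=
    gZ_iff.2 ⟨‖(x₀ : K)‖, norm_pos_iff.2 x₀.ne_zero, fun _ h => h⟩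
  filter_upwards [h7, h8] with x hx hx'
  rw [map_sub, Pi.sub_apply, sub_eq_zero] at hx
  rw [hx]
  have hx0 : 0 < ‖(x₀ : K)‖ := norm_pos_iff.2 x₀.ne_zero
  have hn : ‖((x₀⁻¹ * x : Kˣ) : K)‖ = ‖(x : K)‖ / ‖(x₀ : K)‖ := by
    rw [Units.val_mul, norm_mul, Units.val_inv_eq_inv_val, norm_inv, div_eq_mul_inv, mul_comm]
  obtain ⟨N, hN⟩ := exists_pow_lt_of_lt_one (norm_pos_iff.2 (x₀⁻¹ * x).ne_zero) hϖ1
  have h9 := key N (x₀⁻¹ * x) hN.le (by rw [hn, div_le_one hx0]; exact hx'.le) (q m)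
  rw [mul_inv_cancel_left] at h9
  rw [h9, map_mul, Module.End.mul_apply]
  rfl

lemma ev_zero [FiniteDimensional ℂ X] (τ : Representation ℂ Kˣ X) (L : X →ₗ[ℂ] ℂ) (y : X)
    (h : ∀ᶠ x in gZ K, L (τ x y) = 0) (x : Kˣ) : L (τ x y) = 0 := by
  let Z : Submodule ℂ X :=
    { carrier := {y | ∀ᶠ x in gZ K, L (τ x y) = 0}
      zero_mem' := by simp
      add_mem' := by
        intro a b ha hb
        have ha' : ∀ᶠ x in gZ K, L (τ x a) = 0 := ha
        have hb' : ∀ᶠ x in gZ K, L (τ x b) = 0 := hb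
        show ∀ᶠ x in gZ K, L (τ x (a + b)) = 0
        filter_upwards [ha', hb'] with x h1 h2
        rw [map_add, map_add, h1, h2, add_zero]
      smul_mem' := by
        intro c a ha
        have ha' : ∀ᶠ x in gZ K, L (τ x a) = 0 := ha
        show ∀ᶠ x in gZ K, L (τ x (c • a)) = 0
        filter_upwards [ha'] with x h1
        rw [map_smul, map_smul, h1, smul_zero] }
  have hZ : ∀ u, ∀ y ∈ Z, τ u y ∈ Z := by
    intro u y hy
    have := gZ_mul (show ∀ᶠ x in gZ K, L (τ x y) = 0 from hy) u
    show ∀ᶠ x in gZ K, L (τ x (τ u y)) = 0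
    simpa only [map_mul, Module.End.mul_apply] using this
  let F : Z →ₗ[ℂ] (Kˣ → ℂ) := LinearMap.pi fun x => L ∘ₗ τ x ∘ₗ Z.subtype
  have h1 : ∀ᶠ x in gZ K, ∀ y : Z, F y x = 0 := unif_zero F fun y => y.2
  haveI := gZ_neBot (K := K)
  obtain ⟨x₀, hx₀⟩ := h1.exists
  have h2 : τ (x₀⁻¹ * x) y ∈ Z := hZ _ _ h
  have h3 := hx₀ ⟨_, h2⟩
  have h4 : L (τ x₀ (τ (x₀⁻¹ * x) y)) = 0 := h3
  rwa [← Module.End.mul_apply, ← map_mul, mul_inv_cancel_left] at h4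

lemma exists_B [FiniteDimensional ℂ X] (τ : Representation ℂ Kˣ X) (L L' : X →ₗ[ℂ] ℂ)
    (h : ∀ y, (∀ x, L (τ x y) = 0) → L' y = 0) :
    ∃ B ∈ Submodule.span ℂ (Set.range τ), L' = L ∘ₗ B := by
  let comp : Module.End ℂ X →ₗ[ℂ] Module.Dual ℂ X := LinearMap.compRight ℂ L
  have h1 : L' ∈ (Submodule.span ℂ (Set.range τ)).map comp := by
    rw [← Subspace.dualCoannihilator_dualAnnihilator_eq (W := (Submodule.span ℂ (Set.range τ)).map comp)]
    rw [Submodule.mem_dualAnnihilator]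
    intro y hy
    rw [Submodule.mem_dualCoannihilator] at hy
    apply h
    intro x
    exact hy (comp (τ x)) ⟨τ x, Submodule.subset_span ⟨x, rfl⟩, rfl⟩
  obtain ⟨B, hB, hB'⟩ := h1
  exact ⟨B, hB, hB'.symm⟩

lemma span_comm (τ : Representation ℂ Kˣ X) (B : Module.End ℂ X)
    (hB : B ∈ Submodule.span ℂ (Set.range τ)) (D : Module.End ℂ X) (hD : ∀ u, Commute D (τ u)) :
    Commute D B := by
  induction hB using Submodule.span_induction with
  | mem x hx => obtain ⟨u, rfl⟩ := hx; exact hD u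
  | zero => exact Commute.zero_right _
  | add x y _ _ h1 h2 => exact h1.add_right h2
  | smul a x _ h => exact h.smul_right a

lemma exists_aut [FiniteDimensional ℂ X] (τ : Representation ℂ Kˣ X) (L L' : X →ₗ[ℂ] ℂ)
    (h : ∀ y, (∀ x, L (τ x y) = 0) ↔ (∀ x, L' (τ x y) = 0)) :
    ∃ A : X ≃ₗ[ℂ] X, (∀ u y, A (τ u y) = τ u (A y)) ∧ ∀ y, L' y = L (A y) := by
  obtain ⟨B, hB, hLB⟩ := exists_B τ L L' fun y hy => by simpa using (h y).1 hy 1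
  obtain ⟨C, hC, hLC⟩ := exists_B τ L' L fun y hy => by simpa using (h y).2 hy 1
  have hτ : ∀ u v, Commute (τ u) (τ v) := fun u v => by
    show τ u * τ v = τ v * τ u
    rw [← map_mul, ← map_mul, mul_comm]
  have hBτ : ∀ u, Commute B (τ u) := fun u => (span_comm τ B hB (τ u) (hτ u)).symm
  have hBC : Commute B C := span_comm τ C hC B hBτ
  obtain ⟨n, hn, hn1⟩ := (B.eventually_isCompl_ker_pow_range_pow.and (eventually_ge_atTop 1)).exists
  set P := LinearMap.ker (B ^ n) with hP
  set R := LinearMap.range (B ^ n) with hR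
  have hBn : ∀ u y, (B ^ n) (τ u y) = τ u ((B ^ n) y) := fun u y =>
    LinearMap.congr_fun ((hBτ u).pow_left n) y
  have hPτ : ∀ u, ∀ y ∈ P, τ u y ∈ P := by
    intro u y hy
    rw [hP, LinearMap.mem_ker] at hy ⊢
    rw [hBn, hy, map_zero]
  have hRτ : ∀ u, ∀ y ∈ R, τ u y ∈ R := by
    rintro u _ ⟨z, rfl⟩
    exact ⟨τ u z, hBn u z⟩
  have hBBn : ∀ y, (B ^ n) (B y) = B ((B ^ n) y) := fun y =>
    LinearMap.congr_fun ((Commute.refl B).pow_left n) y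
  have hPB : ∀ y ∈ P, B y ∈ P := by
    intro y hy
    rw [hP, LinearMap.mem_ker] at hy ⊢
    rw [hBBn, hy, map_zero]
  have hRB : ∀ y ∈ R, B y ∈ R := by
    rintro _ ⟨z, rfl⟩
    exact ⟨B z, hBBn z⟩
  have hLBC : ∀ y, L y = L (C (B y)) := by
    intro y
    have h1 : L y = L' (C y) := LinearMap.congr_fun hLC y
    have h2 : L' (C y) = L (B (C y)) := LinearMap.congr_fun hLB _
    have h3 : B (C y) = C (B y) := LinearMap.congr_fun hBC y
    rw [h1, h2, h3]
  have hLP : ∀ y ∈ P, L y = 0 := by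
    have : ∀ k, ∀ y, L y = L ((C ^ k) ((B ^ k) y)) := by
      intro k
      induction k with
      | zero => intro y; rfl
      | succ k ih =>
        intro y
        rw [ih y, hLBC]
        have h3 : B ((C ^ k) ((B ^ k) y)) = (C ^ k) (B ((B ^ k) y)) :=
          LinearMap.congr_fun (hBC.pow_right k) _
        rw [h3, pow_succ', pow_succ']
        rfl
    intro y hy
    rw [this n y, LinearMap.mem_ker.1 hy, map_zero, map_zero]
  have hL'P : ∀ y ∈ P, L' y = 0 := by
    intro y hy
    rw [hLB]
    exact hLP _ (hPB y hy)
  let π : X →ₗ[ℂ] X := P.projection R hn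
  have hπP : ∀ y ∈ P, π y = y := fun y hy => Submodule.projection_apply_left hn ⟨y, hy⟩
  have hπR : ∀ y ∈ R, π y = 0 := fun y hy => by
    have := Submodule.ker_projection hn
    rw [← LinearMap.mem_ker, this]; exact hy
  let A : X →ₗ[ℂ] X := π + B ∘ₗ (LinearMap.id - π)
  have hA : ∀ a ∈ P, ∀ b ∈ R, A (a + b) = a + B b := by
    intro a ha b hb
    simp [A, hπP a ha, hπR b hb]
  have hdec : ∀ y, ∃ a ∈ P, ∃ b ∈ R, a + b = y := fun y =>
    Submodule.mem_sup.1 (by rw [hn.sup_eq_top]; trivial)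
  have hAinj : Function.Injective A := by
    rw [injective_iff_map_eq_zero]
    intro y hy
    obtain ⟨a, ha, b, hb, rfl⟩ := hdec y
    rw [hA a ha b hb] at hy
    have h1 : a ∈ R := by
      rw [eq_neg_of_add_eq_zero_left hy]; exact R.neg_mem (hRB b hb)
    have ha0 : a = 0 := Submodule.disjoint_def.1 hn.disjoint a ha h1
    rw [ha0, zero_add] at hy
    have hbP : b ∈ P := by
      rw [hP, LinearMap.mem_ker]
      obtain ⟨k, rfl⟩ := Nat.exists_eq_add_of_le' hn1
      rw [pow_succ, Module.End.mul_apply, hy, map_zero]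
    have hb0 : b = 0 := Submodule.disjoint_def.1 hn.disjoint b hbP hb
    rw [ha0, hb0, add_zero]
  refine ⟨LinearEquiv.ofInjectiveEndo A hAinj, ?_, ?_⟩
  · intro u y
    obtain ⟨a, ha, b, hb, rfl⟩ := hdec y
    show A (τ u (a + b)) = τ u (A (a + b))
    rw [map_add, hA _ (hPτ u a ha) _ (hRτ u b hb), hA a ha b hb, map_add]
    congr 1
    exact LinearMap.congr_fun (hBτ u) b
  · intro y
    obtain ⟨a, ha, b, hb, rfl⟩ := hdec y
    show L' (a + b) = L (A (a + b))
    rw [hA a ha b hb, map_add, map_add, hLP a ha, hL'P a ha]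
    congr 1
    exact LinearMap.congr_fun hLB b

end Germ


section Conv

open Filter Topology Aff

variable {K : Type*} [NontriviallyNormedField K] [IsUltrametricDist K] [ProperSpace K]
variable {V : Type*} [AddCommGroup V] [Module ℂ V]
variable {X : Type*} [AddCommGroup X] [Module ℂ X]

lemma q_all (ρ : Rep K V) (τ : Representation ℂ Kˣ X) (q : V →ₗ[ℂ] X)
    (hqker : LinearMap.ker q = sCoinvKer ρ)
    (hqT : ∀ u v, q (ρ (xT u) v) = τ u (q v)) (g : Aff K) (v : V) :
    q (ρ g v) = τ g.t (q v) := by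
  conv_lhs => rw [aff_decomp' g]
  rw [rho_mul, ← hqT]
  have h : ρ (sS g.s) (ρ (xT g.t) v) - ρ (xT g.t) v ∈ LinearMap.ker q := by
    rw [hqker]; exact Submodule.subset_span ⟨_, _, rfl⟩
  rw [LinearMap.mem_ker, map_sub, sub_eq_zero] at h
  exact h

lemma germ_data (ψ : AddChar K ℂ) (hψlc : IsLocallyConstant (⇑ψ)) (hψne : ψ ≠ 1)
    [FiniteDimensional ℂ X] {ρ : Rep K V} (h1 : SSm ρ) (h2 : TSm ρ) (c : CompSeries ρ)
    (hdeg : c.deg (SRep ψ hψlc) = 1)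
    (τ : Representation ℂ Kˣ X) (q : V →ₗ[ℂ] X) (hq : Function.Surjective q)
    (hqker : LinearMap.ker q = sCoinvKer ρ)
    (hqT : ∀ u v, q (ρ (xT u) v) = τ u (q v)) :
    ∃ (Λ : V →ₗ[ℂ] ℂ) (L : X →ₗ[ℂ] ℂ), IsWh ρ ψ Λ ∧ LinearMap.ker (wh ρ Λ) = sInv ρ ∧
      (sCoinvKer ρ).map (wh ρ Λ) = SSx K ∧
      (∀ m, ∀ᶠ x in gZ K, wh ρ Λ m x = L (τ x (q m))) ∧
      ∀ y, (∀ x, L (τ x y) = 0) ↔ y ∈ (sInv ρ).map q := by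
  obtain ⟨Λ, hΛ, hΛ0, hker⟩ := exists_kirillov ψ hψlc hψne h1 h2 c hdeg
  have hco := wh_coinv ψ hψlc hψne ρ h1 h2 Λ hΛ hΛ0
  obtain ⟨L, hL⟩ := exists_germ ρ h2 Λ τ q hq hqT (by
    intro m hm
    apply SSx_vanish
    rw [← hco]
    exact ⟨m, by rw [← hqker]; exact hm, rfl⟩)
  refine ⟨Λ, L, hΛ, hker, hco, hL, fun y => ⟨fun hy => ?_, ?_⟩⟩
  · obtain ⟨m, rfl⟩ := hq y
    have h3 : wh ρ Λ m ∈ SSx K := by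
      apply SSx_of_Sm ψ hψlc hψne (Sm_wh ρ ψ h1 h2 Λ hΛ m)
      filter_upwards [hL m] with x hx
      rw [hx, hy]
    rw [← hco] at h3
    obtain ⟨m', hm', he⟩ := h3
    refine ⟨m - m', ?_, ?_⟩
    · show m - m' ∈ sInv ρ
      rw [← hker, LinearMap.mem_ker, map_sub, he, sub_self]
    · have : q m' = 0 := by rw [← LinearMap.mem_ker, hqker]; exact hm'
      rw [map_sub, this, sub_zero]
  · rintro ⟨m, hm, rfl⟩ x
    apply ev_zero
    have h3 : wh ρ Λ m = 0 := by rw [← LinearMap.mem_ker, hker]; exact hm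
    filter_upwards [hL m] with x hx
    rw [← hx, h3]; rfl

lemma cyclic_of_degone (ψ : AddChar K ℂ) (hψlc : IsLocallyConstant (⇑ψ)) (hψne : ψ ≠ 1)
    {ρ : Rep K V} (h1 : SSm ρ) (h2 : TSm ρ) (c : CompSeries ρ)
    (hdeg : c.deg (SRep ψ hψlc) = 1) :
    TCyclic (GRep.quot (piZeroT ρ) ((sInv ρ).map (sCoinvKer ρ).mkQ) (kappaImg_invariant ρ)) := by
  haveI := coinv_fd ψ hψlc hψne h1 h2 c
  obtain ⟨Λ, L, hΛ, hker, hco, hL, hN⟩ := germ_data ψ hψlc hψne h1 h2 c hdeg (piZeroT ρ)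
    (sCoinvKer ρ).mkQ (Submodule.mkQ_surjective _) (Submodule.ker_mkQ _) (fun u v => rfl)
  intro χ
  let κ := (sInv ρ).map (sCoinvKer ρ).mkQ
  have hle : κ ≤ LinearMap.ker L := fun y hy => by simpa using (hN y).2 hy 1
  let l : ((V ⧸ sCoinvKer ρ) ⧸ κ) →ₗ[ℂ] ℂ := κ.liftQ L hle
  have hinj : Function.Injective (l ∘ₗ (tEigenT (GRep.quot (piZeroT ρ) κ (kappaImg_invariant ρ)) χ).subtype) := by
    rw [injective_iff_map_eq_zero]
    rintro ⟨y, hy⟩ h0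
    apply Subtype.ext
    show y = 0
    obtain ⟨z, rfl⟩ := Submodule.Quotient.mk_surjective _ y
    rw [Submodule.Quotient.mk_eq_zero]
    apply (hN z).1
    intro x
    have h3 := hy x
    have h4 : l (Submodule.Quotient.mk (piZeroT ρ x z)) = (χ x : ℂ) • l (Submodule.Quotient.mk z) := by
      rw [← map_smul, ← h3]; rfl
    have h5 : l (Submodule.Quotient.mk z) = 0 := h0
    rw [h5, smul_zero] at h4
    exact h4
  simpa using LinearMap.finrank_le_finrank_of_injective hinj

lemma iso_of_range {V₁ V₂ Z : Type*} [AddCommGroup V₁] [Module ℂ V₁] [AddCommGroup V₂] [Module ℂ V₂]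
    [AddCommGroup Z] [Module ℂ Z] {G : Type*} [Monoid G] (ρ₁ : Representation ℂ G V₁)
    (ρ₂ : Representation ℂ G V₂) (σ : Representation ℂ G Z) (a : V₁ →ₗ[ℂ] Z) (b : V₂ →ₗ[ℂ] Z)
    (ha : GRep.Equivariant ρ₁ σ a) (hb : GRep.Equivariant ρ₂ σ b)
    (hai : Function.Injective a) (hbi : Function.Injective b)
    (h1 : ∀ x, ∃ y, b y = a x) (h2 : ∀ y, ∃ x, a x = b y) : GRep.Iso ρ₁ ρ₂ := by
  choose F hF using h1
  let φ : V₁ →ₗ[ℂ] V₂ :=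
    { toFun := F
      map_add' := fun x y => hbi (by rw [hF, map_add, map_add, hF, hF])
      map_smul' := fun c x => hbi (by rw [hF, map_smul, RingHom.id_apply, map_smul, hF]) }
  have hφ : Function.Bijective φ := by
    constructor
    · intro x y hxy
      apply hai
      rw [← hF, ← hF]
      exact congrArg b hxy
    · intro y
      obtain ⟨x, hx⟩ := h2 y
      exact ⟨x, hbi (by rw [← hx]; exact hF x)⟩
  refine ⟨LinearEquiv.ofBijective φ hφ, fun g v => hbi ?_⟩
  show b (F (ρ₁ g v)) = b (ρ₂ g (F v))
  rw [hF, ha, hb, hF]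

lemma converse_iso (ψ : AddChar K ℂ) (hψlc : IsLocallyConstant (⇑ψ)) (hψne : ψ ≠ 1)
    [FiniteDimensional ℂ X] {ρ : Rep K V} (h1 : SSm ρ) (h2 : TSm ρ) (c : CompSeries ρ)
    (hdeg : c.deg (SRep ψ hψlc) = 1)
    (τ : Representation ℂ Kˣ X) (p : V →ₗ[ℂ] X) (hp : Function.Surjective p)
    (hpker : LinearMap.ker p = sCoinvKer ρ)
    (hpT : ∀ u v, p (ρ (xT u) v) = τ u (p v))
    {E Y : Type*} [AddCommGroup E] [Module ℂ E] [AddCommGroup Y] [Module ℂ Y] [FiniteDimensional ℂ Y]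
    (ρE : Rep K E) (h1' : SSm ρE) (h2' : TSm ρE) (cE : CompSeries ρE)
    (hEdeg : cE.deg (SRep ψ hψlc) = 1) (hEperf : Perfect ρE)
    (τY : Representation ℂ Kˣ Y) (f : X →ₗ[ℂ] Y) (hf : ∀ (u : Kˣ) (x : X), f (τ u x) = τY u (f x))
    (hfker : LinearMap.ker f = (sInv ρ).map p)
    (q : E →ₗ[ℂ] Y) (hqsurj : Function.Surjective q)
    (hqker : LinearMap.ker q = sCoinvKer ρE)
    (hqT : ∀ (u : Kˣ) (v : E), q (ρE (xT u) v) = τY u (q v)) :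
    GRep.Iso ρ (GRep.sub (prodRepTE τ ρE) (fiber_invariant τ ρE τY f q hf hqker.ge hqT)) := by
  obtain ⟨Λ, L, hΛ, hker, hco, hL, hN⟩ := germ_data ψ hψlc hψne h1 h2 c hdeg τ p hp hpker hpT
  obtain ⟨Λ', l, hΛ', hker', hco', hL', hN'⟩ :=
    germ_data ψ hψlc hψne h1' h2' cE hEdeg τY q hqsurj hqker hqT
  rw [perfect_sInv ψ hψlc hψne h1' h2' cE hEperf] at hN' hker'
  obtain ⟨A, hAτ, hAL⟩ := exists_aut τ L (l ∘ₗ f) (by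
    intro y
    rw [hN, ← hfker, LinearMap.mem_ker]
    simp only [LinearMap.comp_apply, hf]
    rw [hN']
    simp)
  let F := fiberKer f q
  let a : V →ₗ[ℂ] X × (Kˣ → ℂ) := p.prod (wh ρ Λ)
  let b : ↥F →ₗ[ℂ] X × (Kˣ → ℂ) := (A.toLinearMap.prodMap (wh ρE Λ')) ∘ₗ F.subtype
  have hgerm : ∀ (m : V) (x : X) (e : E), A x = p m → f x = q e → wh ρ Λ m - wh ρE Λ' e ∈ SSx K := by
    intro m x e h3 h4
    apply SSx_of_Sm ψ hψlc hψne
      (Sm_sub ψ (Sm_wh ρ ψ h1 h2 Λ hΛ m) (Sm_wh ρE ψ h1' h2' Λ' hΛ' e))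
    filter_upwards [hL m, hL' e] with t ht ht'
    rw [Pi.sub_apply, ht, ht', ← h3, ← h4, ← hAτ, ← hAL, LinearMap.comp_apply, hf, sub_self]
  refine iso_of_range ρ _ (prodRepTE τ (repCx K ψ)) a b ?_ ?_ ?_ ?_ ?_ ?_
  · intro g v
    refine Prod.ext ?_ ?_
    · exact q_all ρ τ p hpker hpT g v
    · exact wh_equivariant ρ ψ Λ hΛ g v
  · intro g v
    refine Prod.ext ?_ ?_
    · exact hAτ g.t v.1.1
    · exact wh_equivariant ρE ψ Λ' hΛ' g v.1.2
  · rw [injective_iff_map_eq_zero]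
    intro v hv
    have h3 : p v = 0 := congrArg Prod.fst hv
    have h4 : wh ρ Λ v = 0 := congrArg Prod.snd hv
    rw [← LinearMap.mem_ker, hpker] at h3
    rw [← LinearMap.mem_ker, hker] at h4
    exact sInv_sCoinv ψ ρ h1 v h4 hψlc h3
  · rw [injective_iff_map_eq_zero]
    intro v hv
    have h3 : A v.1.1 = 0 := congrArg Prod.fst hv
    have h4 : wh ρE Λ' v.1.2 = 0 := congrArg Prod.snd hv
    rw [← LinearMap.mem_ker, hker'] at h4
    apply Subtype.ext
    refine Prod.ext ?_ h4
    simpa using h3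
  · intro m
    obtain ⟨e, he⟩ := hqsurj (f (A.symm (p m)))
    have h3 := hgerm m (A.symm (p m)) e (by simp) he.symm
    rw [← hco'] at h3
    obtain ⟨e', he', h4⟩ := h3
    have h5 : q e' = 0 := by rw [← LinearMap.mem_ker, hqker]; exact he'
    refine ⟨⟨(A.symm (p m), e + e'), (mem_fiberKer _ _ _).2 ?_⟩, ?_⟩
    · rw [map_add, h5, he, add_zero]
    · refine Prod.ext ?_ ?_
      · show A (A.symm (p m)) = p m
        simp
      · show wh ρE Λ' (e + e') = wh ρ Λ m
        rw [map_add, h4]; abel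
  · rintro ⟨⟨x, e⟩, hxe⟩
    have hxe' := (mem_fiberKer _ _ _).1 hxe
    obtain ⟨m, hm⟩ := hp (A x)
    have h3 := hgerm m x e hm.symm hxe'
    rw [← hco] at h3
    obtain ⟨m', hm', h4⟩ := h3
    have h5 : p m' = 0 := by rw [← LinearMap.mem_ker, hpker]; exact hm'
    refine ⟨m - m', Prod.ext ?_ ?_⟩
    · show p (m - m') = A x
      rw [map_sub, h5, hm, sub_zero]
    · show wh ρ Λ (m - m') = wh ρE Λ' e
      rw [map_sub, h4]; abel

end Conv


section Direct

open Filter Topology Aff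

variable {K : Type*} [NontriviallyNormedField K] [IsUltrametricDist K] [ProperSpace K]

lemma Iso_trans {G V W Z : Type*} [Monoid G] [AddCommMonoid V] [Module ℂ V] [AddCommMonoid W]
    [Module ℂ W] [AddCommMonoid Z] [Module ℂ Z] {a : Representation ℂ G V}
    {b : Representation ℂ G W} {c : Representation ℂ G Z} (h : GRep.Iso a b) (h' : GRep.Iso b c) :
    GRep.Iso a c := by
  obtain ⟨e, he⟩ := h
  obtain ⟨e', he'⟩ := h'
  exact ⟨e.trans e', fun g v => by rw [LinearEquiv.trans_apply, he, he']; rfl⟩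

lemma Iso_symm {G V W : Type*} [Monoid G] [AddCommMonoid V] [Module ℂ V] [AddCommMonoid W]
    [Module ℂ W] {a : Representation ℂ G V}
    {b : Representation ℂ G W} (h : GRep.Iso a b) : GRep.Iso b a := by
  obtain ⟨e, he⟩ := h
  refine ⟨e.symm, fun g v => ?_⟩
  apply e.injective
  rw [he, e.apply_symm_apply, e.apply_symm_apply]

lemma comap_inv {G F E : Type*} [Monoid G] [AddCommGroup F] [Module ℂ F] [AddCommGroup E]
    [Module ℂ E] {ρ : Representation ℂ G F} {σ : Representation ℂ G E} {π : F →ₗ[ℂ] E}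
    (hπ : GRep.Equivariant ρ σ π) {A : Submodule ℂ E} (hA : GRep.Invariant σ A) :
    GRep.Invariant ρ (A.comap π) := by
  intro g v hv
  show π (ρ g v) ∈ A
  rw [hπ]; exact hA g _ hv

lemma subquot_comap_iso {G F E : Type*} [Monoid G] [AddCommGroup F] [Module ℂ F] [AddCommGroup E]
    [Module ℂ E] {ρ : Representation ℂ G F} {σ : Representation ℂ G E} {π : F →ₗ[ℂ] E}
    (hπ : GRep.Equivariant ρ σ π) (hs : Function.Surjective π) {A B : Submodule ℂ E}
    (hA : GRep.Invariant σ A) (hB : GRep.Invariant σ B)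
    (hA' : GRep.Invariant ρ (A.comap π)) (hB' : GRep.Invariant ρ (B.comap π)) :
    GRep.Iso (GRep.subquot ρ hA' hB') (GRep.subquot σ hA hB) := by
  let r : ↥(B.comap π) →ₗ[ℂ] ↥B := π.restrict fun x hx => hx
  let φ := Submodule.mapQ ((A.comap π).comap (B.comap π).subtype) (A.comap B.subtype) r
    (fun x hx => hx)
  have hφ : Function.Bijective φ := by
    constructor
    · rw [injective_iff_map_eq_zero]
      intro x hx
      obtain ⟨w, rfl⟩ := Submodule.Quotient.mk_surjective _ x
      have hx' : (Submodule.Quotient.mk (r w) : ↥B ⧸ A.comap B.subtype) = 0 := hx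
      rw [Submodule.Quotient.mk_eq_zero] at hx' ⊢
      exact hx'
    · intro y
      obtain ⟨w, rfl⟩ := Submodule.Quotient.mk_surjective _ y
      obtain ⟨x, hx⟩ := hs w.1
      refine ⟨Submodule.Quotient.mk ⟨x, by show π x ∈ B; rw [hx]; exact w.2⟩, ?_⟩
      show (Submodule.Quotient.mk (r _) : ↥B ⧸ A.comap B.subtype) = _
      congr 1
      exact Subtype.ext hx
  refine ⟨LinearEquiv.ofBijective φ hφ, fun g v => ?_⟩
  obtain ⟨w, rfl⟩ := Submodule.Quotient.mk_surjective _ v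
  show (Submodule.Quotient.mk (r (GRep.sub ρ hB' g w)) : ↥B ⧸ A.comap B.subtype)
    = Submodule.Quotient.mk (GRep.sub σ hB g (r w))
  congr 1
  apply Subtype.ext
  exact hπ g w.1

section chain

variable {F E : Type*} [AddCommGroup F] [Module ℂ F] [AddCommGroup E] [Module ℂ E]
  {ρ : Rep K F} {σ : Rep K E} {π : F →ₗ[ℂ] E}

lemma comap_lt (hs : Function.Surjective π) {A B : Submodule ℂ E} (h : A < B) :
    A.comap π < B.comap π :=
  lt_of_le_of_ne (Submodule.comap_mono h.le)
    fun he => h.ne (Submodule.comap_injective_of_surjective hs he)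

lemma comap_maximal (hπ : GRep.Equivariant ρ σ π) (hs : Function.Surjective π)
    (c : CompSeries σ) (i : ℕ) (hi : i < c.n) (C : Submodule ℂ F) (hC : GRep.Invariant ρ C)
    (h1 : (c.W i).comap π ≤ C) (h2 : C ≤ (c.W (i + 1)).comap π) :
    C = (c.W i).comap π ∨ C = (c.W (i + 1)).comap π := by
  have hk : LinearMap.ker π ≤ C := by
    refine le_trans ?_ h1
    intro x hx
    show π x ∈ c.W i
    rw [LinearMap.mem_ker.1 hx]; exact Submodule.zero_mem _
  have hCe : (C.map π).comap π = C := by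
    rw [Submodule.comap_map_eq, sup_eq_left.2 hk]
  have h3 : c.W i ≤ C.map π := by
    rw [← Submodule.map_comap_eq_of_surjective hs (c.W i)]
    exact Submodule.map_mono h1
  have h4 : C.map π ≤ c.W (i + 1) := Submodule.map_le_iff_le_comap.2 h2
  rcases c.maximal i hi (C.map π) (GRep.map_invariant ρ σ π hπ C hC) h3 h4 with h | h
  · left; rw [← h, hCe]
  · right; rw [← h, hCe]

lemma chain_base (ψ : AddChar K ℂ) (hψlc : IsLocallyConstant (⇑ψ))
    (hπ : GRep.Equivariant ρ σ π) (hs : Function.Surjective π) (hk : LinearMap.ker π = ⊥)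
    (c : CompSeries σ) :
    ∃ cF : CompSeries ρ, cF.deg (SRep ψ hψlc) = c.deg (SRep ψ hψlc) := by
  let cF : CompSeries ρ :=
    { n := c.n
      W := fun i => (c.W i).comap π
      bot := by rw [c.bot]; exact hk
      top := by rw [c.top, Submodule.comap_top]
      inv := fun i => comap_inv hπ (c.inv i)
      lt := fun i hi => comap_lt hs (c.lt i hi)
      maximal := fun i hi C hC => comap_maximal hπ hs c i hi C hC }
  refine ⟨cF, ?_⟩
  unfold CompSeries.deg
  congr 1
  ext i
  simp only [Finset.mem_filter, Finset.mem_univ, true_and]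
  have hiso := subquot_comap_iso hπ hs (c.inv i.1) (c.inv (i.1 + 1)) (cF.inv i.1) (cF.inv (i.1 + 1))
  exact ⟨fun h => Iso_trans (Iso_symm hiso) h, fun h => Iso_trans hiso h⟩

lemma chain_step (ψ : AddChar K ℂ) (hψlc : IsLocallyConstant (⇑ψ)) (hψne : ψ ≠ 1)
    (hπ : GRep.Equivariant ρ σ π) (hs : Function.Surjective π) (hk : LinearMap.ker π ≠ ⊥)
    (hmin : ∀ C : Submodule ℂ F, GRep.Invariant ρ C → C ≤ LinearMap.ker π →
      C = ⊥ ∨ C = LinearMap.ker π)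
    (hS : ∀ x ∈ LinearMap.ker π, ∀ b, ρ (sS b) x = x)
    (c : CompSeries σ) :
    ∃ cF : CompSeries ρ, cF.deg (SRep ψ hψlc) = c.deg (SRep ψ hψlc) := by
  have hk0 : (c.W 0).comap π = LinearMap.ker π := by rw [c.bot]; rfl
  let W : ℕ → Submodule ℂ F := fun i => Nat.casesOn i ⊥ fun j => (c.W j).comap π
  let cF : CompSeries ρ :=
    { n := c.n + 1
      W := W
      bot := rfl
      top := by show (c.W c.n).comap π = ⊤; rw [c.top, Submodule.comap_top]
      inv := by
        rintro (_ | i)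
        · intro g v hv
          have hv0 : v = 0 := hv
          rw [hv0, map_zero]; exact Submodule.zero_mem _
        · exact comap_inv hπ (c.inv i)
      lt := by
        rintro (_ | i) hi
        · show ⊥ < (c.W 0).comap π
          rw [hk0]; exact bot_lt_iff_ne_bot.2 hk
        · exact comap_lt hs (c.lt i (by omega))
      maximal := by
        rintro (_ | i) hi C hC h1 h2
        · have h2' : C ≤ (c.W 0).comap π := h2
          rw [hk0] at h2'
          show C = ⊥ ∨ C = (c.W 0).comap π
          rw [hk0]
          exact hmin C hC h2'
        · exact comap_maximal hπ hs c i (by omega) C hC h1 h2 }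
  refine ⟨cF, ?_⟩
  have h0 : STriv cF 0 := by
    intro w hw b
    have hw' : w ∈ (c.W 0).comap π := hw
    rw [hk0] at hw'
    rw [hS w hw' b, sub_self]
    exact Submodule.zero_mem _
  have h1 := not_iso_of_triv ψ hψlc hψne cF 0 (Nat.succ_pos _) h0
  unfold CompSeries.deg
  have h2 := Fin.card_filter_univ_succ (n := c.n) (fun i : Fin (c.n + 1) =>
    GRep.Iso (GRep.subquot ρ (cF.inv i.1) (cF.inv (i.1 + 1))) (SRep ψ hψlc))
  rw [if_neg (by exact h1)] at h2
  refine h2.trans ?_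
  congr 1
  ext i
  simp only [Finset.mem_filter, Finset.mem_univ, true_and, Function.comp_apply]
  have hiso := subquot_comap_iso hπ hs (c.inv i.1) (c.inv (i.1 + 1)) (cF.inv (i.1 + 1)) (cF.inv (i.1 + 1 + 1))
  exact ⟨fun h => Iso_trans (Iso_symm hiso) h, fun h => Iso_trans hiso h⟩

lemma chain_quot (ψ : AddChar K ℂ) (hψlc : IsLocallyConstant (⇑ψ)) (hψne : ψ ≠ 1) (ρ : Rep K F)
    (d : ℕ) : ∀ (n : ℕ) (N : Submodule ℂ F) (hN : GRep.Invariant ρ N), FiniteDimensional ℂ ↥N →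
      Module.finrank ℂ ↥N = n → (∀ x ∈ N, ∀ b, ρ (sS b) x = x) →
      (∃ c : CompSeries (GRep.quot ρ N hN), c.deg (SRep ψ hψlc) = d) →
      ∃ cF : CompSeries ρ, cF.deg (SRep ψ hψlc) = d := by
  intro n
  induction n using Nat.strong_induction_on with
  | _ n ih =>
  intro N hN hfd hn hS hc
  obtain ⟨c, hc⟩ := hc
  by_cases hN0 : N = ⊥
  · obtain ⟨cF, hcF⟩ := chain_base ψ hψlc (GRep.mkQ_equivariant ρ N hN) (Submodule.mkQ_surjective N)
      (by rw [Submodule.ker_mkQ, hN0]) c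
    exact ⟨cF, hcF.trans hc⟩
  · obtain ⟨N₁, ⟨hN₁lt, hN₁⟩, hmax⟩ := WellFounded.has_min
      (measure fun N₁ : Submodule ℂ F => Module.finrank ℂ ↥N - Module.finrank ℂ ↥N₁).wf
      {N₁ | N₁ < N ∧ GRep.Invariant ρ N₁}
      ⟨⊥, bot_lt_iff_ne_bot.2 hN0, fun g v hv => by
        have hv0 : v = 0 := hv
        rw [hv0, map_zero]; exact Submodule.zero_mem _⟩
    have hmax' : ∀ C : Submodule ℂ F, GRep.Invariant ρ C → N₁ ≤ C → C ≤ N → C = N₁ ∨ C = N := by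
      intro C hC h1 h2
      by_contra! hne
      have hCN : C < N := lt_of_le_of_ne h2 hne.2
      have hNC : N₁ < C := lt_of_le_of_ne h1 hne.1.symm
      apply hmax C ⟨hCN, hC⟩
      haveI : FiniteDimensional ℂ ↥C := Submodule.finiteDimensional_of_le h2
      have e1 := Submodule.finrank_lt_finrank_of_lt hNC
      have e2 := Submodule.finrank_lt_finrank_of_lt hCN
      show Module.finrank ℂ ↥N - Module.finrank ℂ ↥C < Module.finrank ℂ ↥N - Module.finrank ℂ ↥N₁
      omega
    haveI : FiniteDimensional ℂ ↥N₁ := Submodule.finiteDimensional_of_le hN₁lt.le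
    refine ih (Module.finrank ℂ ↥N₁) (by rw [← hn]; exact Submodule.finrank_lt_finrank_of_lt hN₁lt)
      N₁ hN₁ inferInstance rfl (fun x hx => hS x (hN₁lt.le hx)) ?_
    let π : (F ⧸ N₁) →ₗ[ℂ] (F ⧸ N) := Submodule.factor hN₁lt.le
    have hπmk : ∀ x, π (Submodule.Quotient.mk x) = Submodule.Quotient.mk x := fun x => rfl
    have hkm : ∀ x, (Submodule.Quotient.mk x : F ⧸ N₁) ∈ LinearMap.ker π ↔ x ∈ N := by
      intro x
      rw [LinearMap.mem_ker, hπmk, Submodule.Quotient.mk_eq_zero]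
    rw [← hc]
    refine chain_step ψ hψlc hψne (π := π) ?_ ?_ ?_ ?_ ?_ c
    · intro g x
      obtain ⟨w, rfl⟩ := Submodule.Quotient.mk_surjective _ x
      rfl
    · intro x
      obtain ⟨w, rfl⟩ := Submodule.Quotient.mk_surjective _ x
      exact ⟨Submodule.Quotient.mk w, rfl⟩
    · intro h
      refine absurd hN₁lt (not_lt_of_ge fun x hx => ?_)
      have := (hkm x).2 hx
      rw [h, Submodule.mem_bot, Submodule.Quotient.mk_eq_zero] at this
      exact this
    · intro C hC hle
      have h1 : N₁ ≤ C.comap N₁.mkQ := by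
        intro x hx
        have : N₁.mkQ x = 0 := by simpa using hx
        show N₁.mkQ x ∈ C
        rw [this]; exact Submodule.zero_mem _
      have h2 : C.comap N₁.mkQ ≤ N := fun x hx => (hkm x).1 (hle hx)
      rcases hmax' _ (comap_inv (GRep.mkQ_equivariant ρ N₁ hN₁) hC) h1 h2 with h | h
      · left
        rw [eq_bot_iff]
        intro x hx
        obtain ⟨w, rfl⟩ := Submodule.Quotient.mk_surjective _ x
        have : w ∈ C.comap N₁.mkQ := hx
        rw [h] at this
        exact (Submodule.Quotient.mk_eq_zero _).2 this
      · right
        refine le_antisymm hle ?_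
        intro x hx
        obtain ⟨w, rfl⟩ := Submodule.Quotient.mk_surjective _ x
        have : w ∈ C.comap N₁.mkQ := by rw [h]; exact (hkm w).1 hx
        exact this
    · intro x hx b
      obtain ⟨w, rfl⟩ := Submodule.Quotient.mk_surjective _ x
      rw [GRep.quot_apply, hS w ((hkm w).1 hx) b]

lemma chain_main (ψ : AddChar K ℂ) (hψlc : IsLocallyConstant (⇑ψ)) (hψne : ψ ≠ 1)
    (hπ : GRep.Equivariant ρ σ π) (hs : Function.Surjective π)
    [FiniteDimensional ℂ ↥(LinearMap.ker π)]
    (hS : ∀ x ∈ LinearMap.ker π, ∀ b, ρ (sS b) x = x)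
    (c : CompSeries σ) :
    ∃ cF : CompSeries ρ, cF.deg (SRep ψ hψlc) = c.deg (SRep ψ hψlc) := by
  have hN := GRep.ker_invariant ρ σ π hπ
  refine chain_quot ψ hψlc hψne ρ _ _ (LinearMap.ker π) hN inferInstance rfl hS ?_
  let φ : (F ⧸ LinearMap.ker π) →ₗ[ℂ] E := (LinearMap.ker π).liftQ π le_rfl
  refine chain_base ψ hψlc (π := φ) ?_ ?_ ?_ c
  · intro g x
    obtain ⟨w, rfl⟩ := Submodule.Quotient.mk_surjective _ x
    exact hπ g w
  · intro x
    obtain ⟨w, rfl⟩ := hs x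
    exact ⟨Submodule.Quotient.mk w, rfl⟩
  · exact Submodule.ker_liftQ_eq_bot _ _ _ le_rfl

end chain

section parts

variable {X Y E : Type*} [AddCommGroup X] [Module ℂ X] [AddCommGroup Y] [Module ℂ Y]
  [AddCommGroup E] [Module ℂ E]

lemma part1 (ψ : AddChar K ℂ) (hψlc : IsLocallyConstant (⇑ψ)) (hψne : ψ ≠ 1) [FiniteDimensional ℂ X]
    (τX : Representation ℂ Kˣ X) (ρE : Rep K E) (f : X →ₗ[ℂ] Y) (q : E →ₗ[ℂ] Y)
    (hfsurj : Function.Surjective f) (hinv : GRep.Invariant (prodRepTE τX ρE) (fiberKer f q))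
    (cE : CompSeries ρE) :
    ∃ cF : CompSeries (GRep.sub (prodRepTE τX ρE) hinv),
      cF.deg (SRep ψ hψlc) = cE.deg (SRep ψ hψlc) := by
  let π : ↥(fiberKer f q) →ₗ[ℂ] E := (LinearMap.snd ℂ X E) ∘ₗ (fiberKer f q).subtype
  have hinj : Function.Injective ((LinearMap.fst ℂ X E) ∘ₗ (fiberKer f q).subtype ∘ₗ
      (LinearMap.ker π).subtype) := by
    rw [injective_iff_map_eq_zero]
    intro x hx
    apply Subtype.ext
    apply Subtype.ext
    exact Prod.ext hx x.2
  haveI : FiniteDimensional ℂ ↥(LinearMap.ker π) := Module.Finite.of_injective _ hinj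
  refine chain_main ψ hψlc hψne (π := π) ?_ ?_ ?_ cE
  · intro g v; rfl
  · intro e
    obtain ⟨x, hx⟩ := hfsurj (q e)
    exact ⟨⟨(x, e), (mem_fiberKer _ _ _).2 hx⟩, rfl⟩
  · intro v hv b
    apply Subtype.ext
    have h0 : v.1.2 = 0 := hv
    refine Prod.ext ?_ ?_
    · show τX 1 v.1.1 = v.1.1
      rw [map_one]; rfl
    · show ρE (sS b) v.1.2 = v.1.2
      rw [h0, map_zero]

lemma part2 (τX : Representation ℂ Kˣ X) (ρE : Rep K E) (f : X →ₗ[ℂ] Y) (q : E →ₗ[ℂ] Y)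
    (hinv : GRep.Invariant (prodRepTE τX ρE) (fiberKer f q))
    (hker : GRep.Invariant τX (LinearMap.ker f)) (hE : sInv ρE = ⊥) :
    GRep.Iso (sInvT (GRep.sub (prodRepTE τX ρE) hinv)) (GRep.sub τX hker) := by
  have hz : ∀ v : ↥(sInv (GRep.sub (prodRepTE τX ρE) hinv)), v.1.1.2 = 0 := by
    intro v
    have : v.1.1.2 ∈ sInv ρE := by
      intro b
      exact congrArg (fun w => w.1.2) (v.2 b)
    rw [hE] at this
    exact this
  let a : ↥(sInv (GRep.sub (prodRepTE τX ρE) hinv)) →ₗ[ℂ] X :=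
    { toFun := fun v => v.1.1.1, map_add' := fun _ _ => rfl, map_smul' := fun _ _ => rfl }
  refine iso_of_range (V₁ := ↥(sInv (GRep.sub (prodRepTE τX ρE) hinv)))
    (V₂ := ↥(LinearMap.ker f)) (sInvT (GRep.sub (prodRepTE τX ρE) hinv)) (GRep.sub τX hker) τX a
    (LinearMap.ker f).subtype ?_ ?_ ?_ ?_ ?_ ?_
  · intro g v; rfl
  · intro g v; rfl
  · rw [injective_iff_map_eq_zero]
    intro v hv
    apply Subtype.ext
    apply Subtype.ext
    exact Prod.ext hv (hz v)
  · exact Subtype.val_injective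
  · intro v
    refine ⟨⟨v.1.1.1, ?_⟩, rfl⟩
    have := (mem_fiberKer f q _).1 v.1.2
    rw [hz v, map_zero] at this
    exact this
  · intro x
    refine ⟨⟨⟨(x.1, 0), ?_⟩, ?_⟩, rfl⟩
    · rw [mem_fiberKer]
      show f x.1 = q 0
      rw [map_zero]; exact x.2
    · intro b
      apply Subtype.ext
      refine Prod.ext ?_ ?_
      · show τX 1 x.1 = x.1
        rw [map_one]; rfl
      · show ρE (sS b) 0 = 0
        rw [map_zero]

lemma part3 (τX : Representation ℂ Kˣ X) (ρE : Rep K E) (f : X →ₗ[ℂ] Y) (q : E →ₗ[ℂ] Y)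
    (hfsurj : Function.Surjective f) (hqsurj : Function.Surjective q)
    (hqker : LinearMap.ker q = sCoinvKer ρE)
    (hinv : GRep.Invariant (prodRepTE τX ρE) (fiberKer f q)) :
    GRep.Iso (piZeroT (GRep.sub (prodRepTE τX ρE) hinv)) τX := by
  set ρF := GRep.sub (prodRepTE τX ρE) hinv with hρF
  let a : ↥(fiberKer f q) →ₗ[ℂ] X := (LinearMap.fst ℂ X E) ∘ₗ (fiberKer f q).subtype
  have ha : sCoinvKer ρF ≤ LinearMap.ker a := by
    refine Submodule.span_le.2 ?_
    rintro _ ⟨b, v, rfl⟩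
    show τX 1 v.1.1 - v.1.1 = 0
    rw [map_one]; exact sub_self _
  have hE : sCoinvKer ρE ≤ (sCoinvKer ρF).map ((LinearMap.snd ℂ X E) ∘ₗ (fiberKer f q).subtype) := by
    refine Submodule.span_le.2 ?_
    rintro _ ⟨b, e, rfl⟩
    obtain ⟨x, hx⟩ := hfsurj (q e)
    exact ⟨ρF (sS b) ⟨(x, e), (mem_fiberKer _ _ _).2 hx⟩ - ⟨(x, e), (mem_fiberKer _ _ _).2 hx⟩,
      Submodule.subset_span ⟨b, _, rfl⟩, rfl⟩
  let φ := (sCoinvKer ρF).liftQ a ha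
  have hφ : Function.Bijective φ := by
    constructor
    · rw [injective_iff_map_eq_zero]
      intro x hx
      obtain ⟨v, rfl⟩ := Submodule.Quotient.mk_surjective _ x
      have h1 : v.1.1 = 0 := hx
      have h2 := (mem_fiberKer f q _).1 v.2
      rw [h1, map_zero] at h2
      have h3 : v.1.2 ∈ sCoinvKer ρE := by rw [← hqker]; exact h2.symm
      obtain ⟨w, hw, he⟩ := hE h3
      have : v = w := by
        apply Subtype.ext
        refine Prod.ext ?_ he.symm
        rw [h1]; exact (ha hw).symm
      rw [Submodule.Quotient.mk_eq_zero, this]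
      exact hw
    · intro x
      obtain ⟨e, he⟩ := hqsurj (f x)
      exact ⟨Submodule.Quotient.mk ⟨(x, e), (mem_fiberKer _ _ _).2 he.symm⟩, rfl⟩
  refine ⟨LinearEquiv.ofBijective φ hφ, fun g v => ?_⟩
  obtain ⟨w, rfl⟩ := Submodule.Quotient.mk_surjective _ v
  rfl

end parts

end Direct

section Statements

open Aff

variable {K : Type*} [NontriviallyNormedField K] [IsUltrametricDist K] [ProperSpace K]

theorem statement12
    (hchar : (2 : K) ≠ 0)
    (ψ : AddChar K ℂ) (hψlc : IsLocallyConstant (⇑ψ)) (hψne : ψ ≠ 1)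
    {X Y E : Type*} [AddCommGroup X] [Module ℂ X] [Module.Finite ℂ X]
    [AddCommGroup Y] [Module ℂ Y] [Module.Finite ℂ Y]
    [AddCommGroup E] [Module ℂ E]
    (τX : Representation ℂ Kˣ X) (hτX : TIsSmooth τX)
    (τY : Representation ℂ Kˣ Y) (hτY : TIsSmooth τY) (hYcyc : TCyclic τY)
    (f : X →ₗ[ℂ] Y) (hf : ∀ (u : Kˣ) (x : X), f (τX u x) = τY u (f x))
    (hfsurj : Function.Surjective f)
    (ρE : Rep K E) (hρE : IsSmoothRep ρE) (cE : CompSeries ρE)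
    (hEdeg : cE.deg (SRep ψ hψlc) = 1) (hEperf : Perfect ρE)
    (q : E →ₗ[ℂ] Y) (hqsurj : Function.Surjective q)
    (hqker : LinearMap.ker q = sCoinvKer ρE)
    (hqT : ∀ (u : Kˣ) (v : E), q (ρE (xT u) v) = τY u (q v)) :
    (∃ cF : CompSeries (GRep.sub (prodRepTE τX ρE)
        (fiber_invariant τX ρE τY f q hf hqker.ge hqT)),
      cF.deg (SRep ψ hψlc) = 1) ∧
    GRep.Iso
      (sInvT (GRep.sub (prodRepTE τX ρE) (fiber_invariant τX ρE τY f q hf hqker.ge hqT)))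
      (GRep.sub τX (GRep.ker_invariant τX τY f hf)) ∧
    GRep.Iso
      (piZeroT (GRep.sub (prodRepTE τX ρE) (fiber_invariant τX ρE τY f q hf hqker.ge hqT)))
      τX ∧
    (∀ (V : Type) [AddCommGroup V] [Module ℂ V] (ρM : Rep K V), IsSmoothRep ρM →
      ∀ cM : CompSeries ρM, cM.deg (SRep ψ hψlc) = 1 →
      TCyclic (GRep.quot (piZeroT ρM) ((sInv ρM).map (sCoinvKer ρM).mkQ)
        (kappaImg_invariant ρM)) ∧
      ∀ (E' : Type) [AddCommGroup E'] [Module ℂ E'] (ρE' : Rep K E'), IsSmoothRep ρE' →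
        ∀ cE' : CompSeries ρE', cE'.deg (SRep ψ hψlc) = 1 → Perfect ρE' →
        ∀ q' : E' →ₗ[ℂ] ((V ⧸ sCoinvKer ρM) ⧸ (sInv ρM).map (sCoinvKer ρM).mkQ),
          Function.Surjective q' →
          ∀ hq'ker : LinearMap.ker q' = sCoinvKer ρE',
          ∀ hq'T : (∀ (u : Kˣ) (v : E'), q' (ρE' (xT u) v)
              = GRep.quot (piZeroT ρM) ((sInv ρM).map (sCoinvKer ρM).mkQ)
                  (kappaImg_invariant ρM) u (q' v)),
          GRep.Iso ρM (GRep.sub (prodRepTE (piZeroT ρM) ρE')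
            (fiber_invariant (piZeroT ρM) ρE'
              (GRep.quot (piZeroT ρM) ((sInv ρM).map (sCoinvKer ρM).mkQ)
                (kappaImg_invariant ρM))
              ((sInv ρM).map (sCoinvKer ρM).mkQ).mkQ q'
              (GRep.mkQ_equivariant (piZeroT ρM) _ (kappaImg_invariant ρM))
              hq'ker.ge hq'T))) := by
  have hE1 := SSm_of_smooth _ hρE
  have hE2 := TSm_of_smooth _ hρE
  refine ⟨?_, part2 _ _ _ _ _ _ (perfect_sInv ψ hψlc hψne hE1 hE2 cE hEperf),
    part3 _ _ _ _ hfsurj hqsurj hqker _, ?_⟩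
  · obtain ⟨cF, h⟩ := part1 ψ hψlc hψne τX ρE f q hfsurj
      (fiber_invariant τX ρE τY f q hf hqker.ge hqT) cE
    exact ⟨cF, h.trans hEdeg⟩
  · intro V _ _ ρM hM cM hMdeg
    have h1 := SSm_of_smooth _ hM
    have h2 := TSm_of_smooth _ hM
    haveI := coinv_fd ψ hψlc hψne h1 h2 cM
    refine ⟨cyclic_of_degone ψ hψlc hψne h1 h2 cM hMdeg, ?_⟩
    intro E' _ _ ρE' hE' cE' hE'deg hE'perf q' hq'surj hq'ker hq'T
    exact converse_iso ψ hψlc hψne h1 h2 cM hMdeg (piZeroT ρM) (sCoinvKer ρM).mkQ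
      (Submodule.mkQ_surjective _) (Submodule.ker_mkQ _) (fun u v => rfl)
      ρE' (SSm_of_smooth _ hE') (TSm_of_smooth _ hE') cE' hE'deg hE'perf
      _ _ (GRep.mkQ_equivariant (piZeroT ρM) _ (kappaImg_invariant ρM))
      (Submodule.ker_mkQ _) q' hq'surj hq'ker hq'T

end Statements

end PSW
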